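/- Let w = x^{a_1}y^{b_1}···x^{a_r}y^{b_r} be a reduced word of complexity r, with r a prime number, and let p be a prime. If the family of word maps P_{w,q}: SL(2,q) × SL(2,q) → SL(2,q), q = p^n, is not p-equidistributed, then r ≠ p and at least one of A, B is nonzero. -/

import Mathlib

open Matrix Polynomial

abbrev SL2 (K : Type) [CommRing K] : Type := Matrix.SpecialLinearGroup (Fin 2) K

abbrev PSL2 (K : Type) [CommRing K] : Type := SL2 K ⧸ Subgroup.center (SL2 K)

/-- Evaluation of a word `w ∈ F₂` at a pair of group elements. -/
def wordEval {G : Type*} [Group G] (w : FreeGroup (Fin 2)) (g₁ g₂ : G) : G :=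
  (FreeGroup.lift ![g₁, g₂]) w

/-- The word map `P_{w,G} : G × G → G` for `G = SL(2,K)`. -/
def wordMap (w : FreeGroup (Fin 2)) (K : Type) [CommRing K] :
    SL2 K × SL2 K → SL2 K := fun g => wordEval w g.1 g.2

/-- The point `(tr x, tr xy, tr y)`. -/
def trPoint {K : Type} [CommRing K] (x y : SL2 K) : Fin 3 → K :=
  ![Matrix.trace (x : Matrix (Fin 2) (Fin 2) K),
    Matrix.trace ((x * y : SL2 K) : Matrix (Fin 2) (Fin 2) K),
    Matrix.trace (y : Matrix (Fin 2) (Fin 2) K)]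

/-- `f ∈ ℤ[s,u,t]` is the trace polynomial of the word `w`. -/
def IsTracePolynomial (w : FreeGroup (Fin 2)) (f : MvPolynomial (Fin 3) ℤ) : Prop :=
  ∀ (K : Type) [CommRing K], ∀ x y : SL2 K,
    Matrix.trace ((wordEval w x y : SL2 K) : Matrix (Fin 2) (Fin 2) K) =
      MvPolynomial.eval (trPoint x y) (MvPolynomial.map (Int.castRingHom K) f)

/-- `f : X → Y` is `ε`-equidistributed. -/
def IsEquidistributed {X Y : Type*} (f : X → Y) (ε : ℝ) : Prop :=
  ∃ Y' : Set Y,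
    (1 - ε) * (Nat.card Y) < (Nat.card Y' : ℝ) ∧
    ∀ y ∈ Y',
      |(Nat.card {x : X // f x = y} : ℝ) - (Nat.card X : ℝ) / (Nat.card Y)| <
        ε * (Nat.card X) / (Nat.card Y)

/-- The family of word maps on `SL(2,p^n)` is `p`-equidistributed. -/
def IsPEquidistributed (w : FreeGroup (Fin 2)) (p : ℕ) (hp : p.Prime) : Prop :=
  letI : Fact p.Prime := ⟨hp⟩
  ∃ ε : ℕ → ℝ,
    Filter.Tendsto (fun n : ℕ => ε (p ^ n)) Filter.atTop (nhds 0) ∧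
    ∀ᶠ n : ℕ in Filter.atTop,
      IsEquidistributed (wordMap w (GaloisField p n)) (ε (p ^ n))

/-- The family of word maps on `SL(2,q)`, `q` ranging over all prime powers,
is equidistributed. -/
def IsEquidistributedFamily (w : FreeGroup (Fin 2)) : Prop :=
  ∃ ε : ℕ → ℝ,
    Filter.Tendsto ε Filter.atTop (nhds 0) ∧
    ∀ (p : ℕ) (hp : p.Prime),
      letI : Fact p.Prime := ⟨hp⟩
      ∀ᶠ n : ℕ in Filter.atTop,
        IsEquidistributed (wordMap w (GaloisField p n)) (ε (p ^ n))

/-- Reduction of an integral polynomial mod `p`. -/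
noncomputable def reduceMod (p : ℕ) (P : MvPolynomial (Fin 3) ℤ) : MvPolynomial (Fin 3) (ZMod p) :=
  MvPolynomial.map (Int.castRingHom (ZMod p)) P

/-- `P = h ∘ Q` with `deg Q ≥ 1`, `deg h ≥ 2`. -/
def IsCompositePoly (F : Type) [CommRing F] (P : MvPolynomial (Fin 3) F) : Prop :=
  ∃ (Q : MvPolynomial (Fin 3) F) (h : Polynomial F),
    1 ≤ Q.totalDegree ∧ 2 ≤ h.natDegree ∧ P = Polynomial.aeval Q h

def IsPComposite (p : ℕ) (P : MvPolynomial (Fin 3) ℤ) : Prop :=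
  IsCompositePoly (ZMod p) (reduceMod p P)

/-- `h` is a permutation polynomial of every finite extension of `F_p`. -/
def IsPermAllExt (p : ℕ) (h : Polynomial (ZMod p)) : Prop :=
  ∀ (K : Type) [Field K] [Algebra (ZMod p) K] [Finite K],
    Function.Bijective fun z : K => Polynomial.aeval z h

def IsPSpecial (p : ℕ) (P : MvPolynomial (Fin 3) ℤ) : Prop :=
  IsPComposite p P ∧
    ∃ (Q : MvPolynomial (Fin 3) (ZMod p)) (h : Polynomial (ZMod p)),
      1 ≤ Q.totalDegree ∧ 2 ≤ h.natDegree ∧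
      reduceMod p P = Polynomial.aeval Q h ∧ IsPermAllExt p h

def AlmostNoncomposite (P : MvPolynomial (Fin 3) ℤ) : Prop :=
  ∀ p : ℕ, p.Prime → ¬ IsPComposite p P ∨ IsPSpecial p P

/-- The reduced word `x^{a₁}y^{b₁} ⋯ x^{a_r}y^{b_r}`. -/
def wordOf {r : ℕ} (a b : Fin r → ℤ) : FreeGroup (Fin 2) :=
  (List.ofFn fun i : Fin r =>
    FreeGroup.of (0 : Fin 2) ^ a i * FreeGroup.of (1 : Fin 2) ^ b i).prod


section P1
variable {k : Type} [Field k]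

/-- weight -/
def Wt (e n : ℕ) (B : k[X][X]) : Prop := ∀ i j, (B.coeff j).coeff i ≠ 0 → i + e * j ≤ n

lemma Wt.mono {e n m : ℕ} {B : k[X][X]} (h : Wt e n B) (hnm : n ≤ m) : Wt e m B :=
  fun i j hij => (h i j hij).trans hnm

lemma Wt.zero {e n : ℕ} : Wt e n (0 : k[X][X]) := by
  intro i j h; simp at h

lemma Wt.add {e n : ℕ} {A B : k[X][X]} (hA : Wt e n A) (hB : Wt e n B) : Wt e n (A + B) := by
  intro i j h
  by_contra hc
  apply h
  have h1 : (A.coeff j).coeff i = 0 := by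
    by_contra h1; exact hc (hA i j h1)
  have h2 : (B.coeff j).coeff i = 0 := by
    by_contra h1; exact hc (hB i j h1)
  simp [h1, h2]

lemma Wt.neg {e n : ℕ} {A : k[X][X]} (hA : Wt e n A) : Wt e n (-A) := by
  intro i j h
  exact hA i j (by simpa using h)

lemma Wt.sub {e n : ℕ} {A B : k[X][X]} (hA : Wt e n A) (hB : Wt e n B) : Wt e n (A - B) := by
  rw [sub_eq_add_neg]; exact hA.add hB.neg

lemma Wt.sum {ι : Type*} {e n : ℕ} (s : Finset ι) {A : ι → k[X][X]} (hA : ∀ i ∈ s, Wt e n (A i)) :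
    Wt e n (∑ i ∈ s, A i) := by
  classical
  induction s using Finset.induction_on with
  | empty => simpa using Wt.zero
  | insert a s ha ih =>
    rw [Finset.sum_insert ha]
    exact (hA a (by simp)).add (ih fun i hi => hA i (by simp [hi]))

lemma Wt.mul {e n m : ℕ} {A B : k[X][X]} (hA : Wt e n A) (hB : Wt e m B) :
    Wt e (n + m) (A * B) := by
  intro i j h
  rw [coeff_mul, finsetSum_coeff] at h
  obtain ⟨⟨j1, j2⟩, hj, h⟩ := Finset.exists_ne_zero_of_sum_ne_zero h
  rw [coeff_mul] at h
  obtain ⟨⟨i1, i2⟩, hi, h⟩ := Finset.exists_ne_zero_of_sum_ne_zero h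
  rw [Finset.HasAntidiagonal.mem_antidiagonal] at hi hj
  dsimp only at hi hj h
  have h1 := hA i1 j1 (left_ne_zero_of_mul h)
  have h2 := hB i2 j2 (right_ne_zero_of_mul h)
  subst hi hj
  nlinarith

lemma Wt.one {e n : ℕ} : Wt e n (1 : k[X][X]) := by
  intro i j h
  rw [coeff_one] at h
  split_ifs at h with h0
  · rw [coeff_one] at h
    split_ifs at h with h1
    · subst h0 h1; simp
    · simp at h
  · simp at h

lemma Wt.pow {e n : ℕ} {A : k[X][X]} (hA : Wt e n A) (m : ℕ) : Wt e (m * n) (A ^ m) := by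
  induction m with
  | zero => simpa using Wt.one
  | succ m ih =>
    rw [pow_succ]
    exact (ih.mul hA).mono (by ring_nf; rfl)

lemma Wt.mono' {e n i j : ℕ} (a : k) (h : i + e * j ≤ n) :
    Wt e n (C (C a) * (C X) ^ i * X ^ j : k[X][X]) := by
  intro i' j' h'
  rw [← C_pow, ← C_mul, coeff_C_mul, coeff_X_pow] at h'
  split_ifs at h' with h0
  · subst h0
    rw [mul_one, coeff_C_mul, coeff_X_pow] at h'
    split_ifs at h' with h1
    · subst h1; exact h
    · simp at h'
  · simp at h'

lemma exists_wt (e : ℕ) (B : k[X][X]) : ∃ n, Wt e n B := by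
  refine ⟨B.support.sup (fun j => (B.coeff j).natDegree + e * j), ?_⟩
  intro i j h
  have hj : j ∈ B.support := by
    rw [mem_support_iff]; rintro h0; simp [h0] at h
  refine le_trans ?_ (Finset.le_sup (f := fun j => (B.coeff j).natDegree + e * j) hj)
  have := le_natDegree_of_ne_zero h
  show _ ≤ (B.coeff j).natDegree + e * j
  omega

lemma Wt.modByMonic {e r : ℕ} {g : k[X][X]} (hg : g.Monic) (hr : g.natDegree = r)
    (hgw : Wt e (e * r) g) {n : ℕ} {B : k[X][X]} (hB : Wt e n B) : Wt e n (B %ₘ g) := by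
  induction hd : B.natDegree using Nat.strong_induction_on generalizing B with
  | _ d ih =>
  by_cases hlt : B.degree < g.degree
  · rwa [(modByMonic_eq_self_iff hg).2 hlt]
  · have hB0 : B ≠ 0 := by
      rintro rfl
      rw [degree_zero, not_lt, le_bot_iff, degree_eq_bot] at hlt
      exact hg.ne_zero hlt
    have hle : g.degree ≤ B.degree := not_lt.1 hlt
    have hle' : r ≤ d := by
      rw [← hr, ← hd]; exact natDegree_le_natDegree hle
    have hdeg := div_wf_lemma ⟨hle, hB0⟩ hg
    set q := C B.leadingCoeff * X ^ (B.natDegree - g.natDegree) with hq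
    have e1 : B %ₘ g = (B - g * q) %ₘ g := by
      rw [sub_modByMonic, (modByMonic_eq_zero_iff_dvd hg).2 (dvd_mul_right g q), sub_zero]
    have hlc : ∃ i, B.leadingCoeff.coeff i ≠ 0 := by
      by_contra hc
      push Not at hc
      exact hB0 (leadingCoeff_eq_zero.1 (by ext i; simp [hc i]))
    have hn : e * d ≤ n := by
      obtain ⟨i, hi⟩ := hlc
      have := hB i d (by rw [← hd]; exact hi)
      omega
    have hqw : Wt e (n - e * r) q := by
      intro i j h
      rw [hq, coeff_C_mul, coeff_X_pow] at h
      split_ifs at h with h0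
      · rw [mul_one] at h
        have := hB i d (by rw [← hd]; exact h)
        have h3 : j = d - r := by rw [h0, hd, hr]
        subst h3
        rw [Nat.mul_sub]
        have : e * r ≤ e * d := Nat.mul_le_mul_left _ hle'
        omega
      · simp at h
    have hw : Wt e n (B - g * q) := by
      apply hB.sub
      refine (hgw.mul hqw).mono ?_
      have : e * r ≤ e * d := Nat.mul_le_mul_left _ hle'
      omega
    rw [e1]
    by_cases h0 : B - g * q = 0
    · rw [h0, zero_modByMonic]; exact Wt.zero
    · exact ih _ (by rw [← hd]; exact natDegree_lt_natDegree h0 hdeg) hw rfl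

/-- index set -/
def Ix (e r n : ℕ) : Finset (ℕ × ℕ) :=
  (Finset.range (n + 1) ×ˢ Finset.range r).filter fun x => x.1 + e * x.2 ≤ n

lemma mem_Ix {e r n : ℕ} {x : ℕ × ℕ} : x ∈ Ix e r n ↔ x.2 < r ∧ x.1 + e * x.2 ≤ n := by
  simp only [Ix, Finset.mem_filter, Finset.mem_product, Finset.mem_range]
  constructor
  · tauto
  · rintro ⟨h1, h2⟩; exact ⟨⟨by omega, h1⟩, h2⟩

lemma card_Ix_le (e r n : ℕ) : (Ix e r n).card ≤ r * (n + 1) := by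
  refine (Finset.card_filter_le _ _).trans ?_
  rw [Finset.card_product, Finset.card_range, Finset.card_range, mul_comm]

lemma card_Ix_add (e r n h : ℕ) : (Ix e r (n + h)).card ≤ (Ix e r n).card + r * h := by
  have : Ix e r (n + h) ⊆ Ix e r n ∪ (Finset.range h ×ˢ Finset.range r).image
      (fun x : ℕ × ℕ => (n + 1 + x.1 - e * x.2, x.2)) := by
    intro x hx
    rw [mem_Ix] at hx
    rw [Finset.mem_union, mem_Ix, Finset.mem_image]
    by_cases h1 : x.1 + e * x.2 ≤ n
    · exact Or.inl ⟨hx.1, h1⟩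
    · refine Or.inr ⟨(x.1 + e * x.2 - (n + 1), x.2), ?_, ?_⟩
      · simp only [Finset.mem_product, Finset.mem_range]
        exact ⟨by omega, hx.1⟩
      · ext <;> simp only
        omega
  refine (Finset.card_le_card this).trans ((Finset.card_union_le _ _).trans ?_)
  gcongr
  refine Finset.card_image_le.trans ?_
  rw [Finset.card_product, Finset.card_range, Finset.card_range, mul_comm]

/-- coordinates -/
noncomputable def coordL (s : Finset (ℕ × ℕ)) : k[X][X] →ₗ[k] (s → k) where
  toFun B x := (B.coeff x.1.2).coeff x.1.1
  map_add' A B := by ext; simp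
  map_smul' a B := by ext; simp

lemma smul_bi (a : k) (D : k[X][X]) : a • D = C (C a) * D := by
  ext; simp

/-- polynomial with coordinates -/
noncomputable def toPL (s : Finset (ℕ × ℕ)) : (s → k) →ₗ[k] k[X][X] where
  toFun c := ∑ x, C (C (c x)) * (C X) ^ x.1.1 * X ^ x.1.2
  map_add' A B := by
    rw [← Finset.sum_add_distrib]
    refine Finset.sum_congr rfl fun x _ => ?_
    rw [Pi.add_apply, C_add, C_add, add_mul, add_mul]
  map_smul' a B := by
    rw [RingHom.id_apply, Finset.smul_sum]
    refine Finset.sum_congr rfl fun x _ => ?_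
    rw [smul_bi, Pi.smul_apply, smul_eq_mul, C_mul, C_mul]
    ring

lemma toPL_apply (s : Finset (ℕ × ℕ)) (c : s → k) :
    toPL s c = ∑ x, C (C (c x)) * (C X) ^ x.1.1 * X ^ x.1.2 := rfl

lemma toPL_coeff (s : Finset (ℕ × ℕ)) (c : s → k) (i j : ℕ) :
    ((toPL s c).coeff j).coeff i = if h : (i, j) ∈ s then c ⟨(i, j), h⟩ else 0 := by
  rw [toPL_apply, finsetSum_coeff, finsetSum_coeff]
  have key : ∀ x : s, ((C (C (c x)) * (C X) ^ x.1.1 * X ^ x.1.2 : k[X][X]).coeff j).coeff i =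
      if x.1 = (i, j) then c x else 0 := by
    rintro ⟨⟨a, b⟩, hx⟩
    rw [← C_pow, ← C_mul, coeff_C_mul, coeff_X_pow]
    by_cases hb : j = b
    · subst hb
      simp [coeff_X_pow, eq_comm]
    · simp [hb, Ne.symm hb]
  simp_rw [key]
  split_ifs with h
  · rw [Finset.sum_eq_single ⟨(i, j), h⟩] <;> simp
    intro a b hab h1 h2 h3; exact absurd h3 (h1 h2)
  · apply Finset.sum_eq_zero
    rintro ⟨x, hx⟩ _
    rw [if_neg]
    rintro rfl; exact h hx

lemma toPL_inj (s : Finset (ℕ × ℕ)) {c : s → k} (h : toPL s c = 0) : c = 0 := by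
  ext ⟨⟨i, j⟩, hx⟩
  have := toPL_coeff s c i j
  rw [h, dif_pos hx] at this
  simpa using this.symm

lemma toPL_wt {e r n : ℕ} (c : Ix e r n → k) : Wt e n (toPL (Ix e r n) c) := by
  intro i j h
  rw [toPL_coeff] at h
  split_ifs at h with h1
  · exact (mem_Ix.1 h1).2
  · simp at h

lemma toPL_deg {e r n : ℕ} (c : Ix e r n → k) : (toPL (Ix e r n) c).degree < r := by
  rw [degree_lt_iff_coeff_zero]
  intro j hj
  ext i
  rw [toPL_coeff, dif_neg]
  · simp
  · intro h; have := (mem_Ix.1 h).1; simp only at this; omega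

lemma toPL_coordL {e r n : ℕ} {B : k[X][X]} (hB : Wt e n B) (hd : B.degree < r) :
    toPL (Ix e r n) (coordL (Ix e r n) B) = B := by
  ext j i
  rw [toPL_coeff]
  split_ifs with h
  · rfl
  · by_contra hc
    apply h
    rw [mem_Ix]
    refine ⟨?_, hB i j (Ne.symm hc)⟩
    by_contra hj
    rw [degree_lt_iff_coeff_zero] at hd
    rw [hd j (by simpa using hj)] at hc
    simp at hc

lemma coordL_inj {e r n : ℕ} {B : k[X][X]} (hB : Wt e n B) (hd : B.degree < r)
    (h : coordL (Ix e r n) B = 0) : B = 0 := by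
  rw [← toPL_coordL hB hd, h, map_zero]

lemma toPL_surj_wt {e r n : ℕ} {B : k[X][X]} (hB : Wt e n B) (hd : B.degree < r) :
    ∃ c, toPL (Ix e r n) c = B := ⟨_, toPL_coordL hB hd⟩

/-- reduction as k-linear map -/
noncomputable def redL (g : k[X][X]) : k[X][X] →ₗ[k] k[X][X] where
  toFun B := B %ₘ g
  map_add' A B := add_modByMonic _ _
  map_smul' a B := by
    have h : ∀ D : k[X][X], a • D = (C a : k[X]) • D := fun D => by
      ext; simp
    simp only [RingHom.id_apply]
    rw [h, h, smul_modByMonic]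

lemma wt_mod_deg {r : ℕ} {g : k[X][X]} (hg : g.Monic) (hr : g.natDegree = r) (B : k[X][X]) :
    (B %ₘ g).degree < r := by
  have := degree_modByMonic_lt B hg
  rwa [degree_eq_natDegree hg.ne_zero, hr] at this

lemma not_dvd_of_deg {r : ℕ} {g : k[X][X]} (hg : g.Monic) (hr : g.natDegree = r)
    {B : k[X][X]} (hd : B.degree < r) (h : g ∣ B) : B = 0 := by
  by_contra h0
  have := hg.not_dvd_of_degree_lt h0 (by rwa [degree_eq_natDegree hg.ne_zero, hr])
  exact this h

/-- Lemma A: a nonzero polynomial in `T` in the ideal `(G, g)`. -/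
lemma exists_elim {e r : ℕ} (hr0 : 1 ≤ r) {g : k[X][X]} (hg : g.Monic) (hr : g.natDegree = r)
    (hgw : Wt e (e * r) g) (hirr : Irreducible g) {w : ℕ} {G : k[X][X]} (hG0 : G ≠ 0)
    (hGd : G.degree < r) (hGw : Wt e w G) :
    ∃ N : k[X], N ≠ 0 ∧ N.natDegree ≤ (r + 1) * w ∧ ∃ B, g ∣ G * B - C N := by
  classical
  set x := r * w
  let Φ : ((Ix e r x → k) × degreeLT k (x + w + 1)) →ₗ[k] (Ix e r (x + w) → k) :=
    (coordL _) ∘ₗ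
      (((redL g) ∘ₗ ((LinearMap.mulLeft k G) ∘ₗ (toPL (Ix e r x)))).coprod
        (-(((CAlgHom : k[X] →ₐ[k[X]] k[X][X]).restrictScalars k).toLinearMap ∘ₗ
          (degreeLT k (x + w + 1)).subtype)))
  have hfin : FiniteDimensional k (degreeLT k (x + w + 1)) :=
    Module.Finite.equiv (degreeLTEquiv k (x + w + 1)).symm
  have hker : LinearMap.ker Φ ≠ ⊥ := by
    apply LinearMap.ker_ne_bot_of_finrank_lt
    rw [Module.finrank_prod, Module.finrank_fintype_fun_eq_card, Module.finrank_fintype_fun_eq_card,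
      (degreeLTEquiv k (x + w + 1)).finrank_eq, Module.finrank_fintype_fun_eq_card,
      Fintype.card_coe, Fintype.card_coe, Fintype.card_fin]
    have := card_Ix_add e r x w
    omega
  obtain ⟨⟨c, N⟩, hcN, hne⟩ := (Submodule.ne_bot_iff _).1 hker
  have hN : (N : k[X]).natDegree ≤ x + w := by
    have h1 := mem_degreeLT.1 N.2
    exact Nat.lt_succ_iff.1 (by
      by_cases h0 : (N : k[X]) = 0
      · simp [h0]
      · exact (natDegree_lt_iff_degree_lt h0).2 h1)
  have hz : (G * toPL _ c) %ₘ g - C (N : k[X]) = 0 := by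
    refine coordL_inj (e := e) (r := r) (n := x + w) ?_ ?_ ?_
    · refine Wt.sub (Wt.modByMonic hg hr hgw ?_) ?_
      · rw [add_comm x w]; exact hGw.mul (toPL_wt c)
      · intro i j h
        rw [coeff_C] at h
        split_ifs at h with h0
        · subst h0
          have := le_natDegree_of_ne_zero h
          simp; omega
        · simp at h
    · refine lt_of_le_of_lt (degree_sub_le _ _) (max_lt (wt_mod_deg hg hr _) ?_)
      exact lt_of_le_of_lt degree_C_le (by exact_mod_cast hr0)
    · have := LinearMap.mem_ker.1 hcN
      rw [sub_eq_add_neg]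
      exact this
  have hdvd : g ∣ G * toPL _ c - C (N : k[X]) := by
    rw [sub_eq_zero] at hz
    rw [← hz]
    have := modByMonic_add_div (G * toPL _ c) g
    exact ⟨(G * toPL _ c) /ₘ g, by linear_combination -this⟩
  refine ⟨N, ?_, by rw [add_mul, one_mul]; exact hN, _, hdvd⟩
  intro hN0
  rw [hN0, C_0, sub_zero] at hdvd
  have hp : Prime g := UniqueFactorizationMonoid.irreducible_iff_prime.1 hirr
  rcases hp.dvd_or_dvd hdvd with h | h
  · exact hG0 (not_dvd_of_deg hg hr hGd h)
  · have := toPL_inj _ (not_dvd_of_deg hg hr (toPL_deg c) h)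
    apply hne
    ext1
    · exact this
    · exact Subtype.ext hN0

end P1

section P1b
variable {k : Type} [Field k]

/-- Newton approximation. -/
lemma newton_approx (F : k[X][X]) (v0 : k) (h0 : (F.map (evalRingHom 0)).eval v0 = 0)
    (h1 : (derivative (F.map (evalRingHom 0))).eval v0 ≠ 0) (M : ℕ) :
    ∃ v : k[X], v.coeff 0 = v0 ∧ X ^ M ∣ F.eval v := by
  have hev : ∀ (H : k[X][X]) (v : k[X]), (H.eval v).coeff 0 = (H.map (evalRingHom 0)).eval (v.coeff 0) := by
    intro H v
    rw [coeff_zero_eq_eval_zero, coeff_zero_eq_eval_zero, ← coe_evalRingHom, ← eval₂_hom,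
      eval_map]
  suffices h : ∀ M, ∃ v : k[X], v.coeff 0 = v0 ∧ X ^ (M + 1) ∣ F.eval v by
    obtain ⟨v, hv, hd⟩ := h M
    exact ⟨v, hv, (pow_dvd_pow _ (Nat.le_succ M)).trans hd⟩
  intro M
  induction M with
  | zero =>
    refine ⟨C v0, by simp, ?_⟩
    rw [zero_add, pow_one, X_dvd_iff, hev]
    simpa using h0
  | succ M ih =>
    obtain ⟨v, hv, β, hβ⟩ := ih
    set D := (derivative (F.map (evalRingHom 0))).eval v0 with hD
    set α : k := - β.coeff 0 / D
    refine ⟨v + C α * X ^ (M + 1), by simp [hv], ?_⟩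
    obtain ⟨κ, hκ⟩ := binomExpansion F v (C α * X ^ (M + 1))
    rw [hκ, hβ]
    have e1 : X ^ (M + 1) * β + eval v (derivative F) * (C α * X ^ (M + 1)) +
        κ * (C α * X ^ (M + 1)) ^ 2 = X ^ (M + 1) * (β + eval v (derivative F) * C α) +
        X ^ (M + 1 + 1) * (κ * C α ^ 2 * X ^ M) := by ring
    rw [e1]
    refine dvd_add ?_ (dvd_mul_right _ _)
    rw [pow_succ]
    refine mul_dvd_mul_left _ ?_
    rw [X_dvd_iff, coeff_add, mul_coeff_zero, hev, hv, ← derivative_map, ← hD, coeff_C_zero]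
    simp only [α]
    field_simp
    ring

/-- Lemma B. -/
lemma exists_branch [IsAlgClosed k] {e r : ℕ} (hr0 : 1 ≤ r) {g : k[X][X]} (hg : g.Monic)
    (hr : g.natDegree = r) (hgw : Wt e (e * r) g) (hirr : Irreducible g)
    (hder : derivative g ≠ 0) (M : ℕ) :
    ∃ (t0 : k) (φ : k[X][X] →+* k[X]), (∀ a, φ (C (C a)) = C a) ∧ φ (C X) = X + C t0 ∧
      X ^ M ∣ φ g := by
  obtain ⟨w, hw⟩ := exists_wt e (derivative g)
  obtain ⟨N, hN0, -, B, hB⟩ := exists_elim hr0 hg hr hgw hirr hder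
    (lt_of_lt_of_le (degree_derivative_lt hg.ne_zero)
      (by rw [degree_eq_natDegree hg.ne_zero, hr])) hw
  obtain ⟨t0, ht0⟩ : ∃ t0, N.eval t0 ≠ 0 := by
    by_contra hc
    push Not at hc
    exact hN0 (Polynomial.funext (by simpa using hc))
  have hdeg : (g.map (evalRingHom t0)).degree ≠ 0 := by
    rw [hg.degree_map, degree_eq_natDegree hg.ne_zero, hr]
    exact_mod_cast (by omega : r ≠ 0)
  obtain ⟨v0, hv0⟩ := IsAlgClosed.exists_root _ hdeg
  let θ : k[X] →+* k[X] := (compRingHom (X + C t0))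
  have hθ0 : (evalRingHom 0).comp θ = evalRingHom t0 := by
    ext <;> simp [θ]
  have hder0 : (derivative (g.map (evalRingHom t0))).eval v0 ≠ 0 := by
    intro h
    obtain ⟨A, hA⟩ := hB
    have h2 := congrArg (fun Y => (Y.map (evalRingHom t0)).eval v0) hA
    simp only [Polynomial.map_sub, Polynomial.map_mul, eval_sub, eval_mul, map_C, eval_C,
      coe_evalRingHom, IsRoot.def.1 hv0, zero_mul, ← derivative_map, h] at h2
    apply ht0; simpa using h2
  obtain ⟨v, hv, hd⟩ := newton_approx (g.map θ) v0
    (by rw [Polynomial.map_map, hθ0]; exact hv0)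
    (by rw [Polynomial.map_map, hθ0]; exact hder0) M
  refine ⟨t0, eval₂RingHom θ v, ?_, ?_, ?_⟩
  · intro a; simp [θ]
  · simp [θ]
  · rw [coe_eval₂RingHom, ← eval_map]; exact hd

/-- Lemma C -/
lemma branch_order {e r : ℕ} (hr0 : 1 ≤ r) {g : k[X][X]} (hg : g.Monic)
    (hr : g.natDegree = r) (hgw : Wt e (e * r) g) (hirr : Irreducible g) {M : ℕ}
    {t0 : k} {φ : k[X][X] →+* k[X]} (h1 : ∀ a, φ (C (C a)) = C a) (h2 : φ (C X) = X + C t0)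
    (h3 : X ^ M ∣ φ g) {w : ℕ} {G : k[X][X]} (hG0 : G ≠ 0) (hGd : G.degree < r) (hGw : Wt e w G)
    {Q : ℕ} (hQ : (r + 1) * w < Q) (hQM : Q ≤ M) : ¬ X ^ Q ∣ φ G := by
  intro hd
  obtain ⟨N, hN0, hNd, B, A, hA⟩ := exists_elim hr0 hg hr hgw hirr hG0 hGd hGw
  have h4 : (φ.comp C) = (compRingHom (X + C t0)) := by
    ext
    · simp [h1]
    · simp [h2]
  have h5 : φ (C N) = N.comp (X + C t0) := by
    have := RingHom.congr_fun h4 N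
    simpa using this
  have h6 : X ^ Q ∣ N.comp (X + C t0) := by
    rw [← h5]
    have : φ (C N) = φ G * φ B - φ g * φ A := by
      rw [← map_mul, ← map_mul, ← hA, ← map_sub]
      congr 1; ring
    rw [this]
    exact dvd_sub (hd.mul_right _) (((pow_dvd_pow _ hQM).trans h3).mul_right _)
  have h7 : N.comp (X + C t0) ≠ 0 := by
    rw [← taylor_apply]
    intro h
    exact hN0 ((taylor_injective t0) (by simpa using h))
  have h8 := natDegree_le_of_dvd h6 h7
  rw [natDegree_comp, natDegree_X_pow, natDegree_X_add_C, mul_one] at h8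
  omega

/-- Lemma D: nonvanishing -/
lemma not_dvd_frob {p : ℕ} [hp : Fact p.Prime] [CharP k p] [IsAlgClosed k] {e r : ℕ} (hr0 : 1 ≤ r)
    {g : k[X][X]} (hg : g.Monic)
    (hr : g.natDegree = r) (hgw : Wt e (e * r) g) (hirr : Irreducible g)
    (hder : derivative g ≠ 0) {w : ℕ} (b : ℕ) (hQ : (r + 1) * w < p ^ b)
    (n : Ix e r w → k[X][X]) {w1 : ℕ} (hnw : ∀ x, Wt e w1 (n x)) (hnd : ∀ x, (n x).degree < r)
    (hn0 : ∃ x, n x ≠ 0) :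
    ¬ g ∣ ∑ x, n x ^ (p ^ b) * (C X) ^ x.1.1 * X ^ x.1.2 := by
  classical
  intro hdvd
  set Q := p ^ b with hQdef
  set M1 := (r + 1) * w1 + 1
  obtain ⟨t0, φ, h1, h2, h3⟩ := exists_branch hr0 hg hr hgw hirr hder ((M1 + 1) * Q)
  have hQpos : 0 < Q := pow_pos hp.out.pos _
  have hex : ∃ d, ¬ ∀ x, X ^ d ∣ φ (n x) := by
    obtain ⟨x, hx⟩ := hn0
    refine ⟨M1, fun h => ?_⟩
    refine branch_order hr0 hg hr hgw hirr h1 h2 h3 hx (hnd x) (hnw x) (Q := M1) (by omega) ?_ (h x)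
    nlinarith
  have hfind := Nat.find_spec hex
  set d1 := Nat.find hex with hd1
  have hd1le : d1 ≤ M1 := by
    apply Nat.find_min'
    obtain ⟨x, hx⟩ := hn0
    intro h
    refine branch_order hr0 hg hr hgw hirr h1 h2 h3 hx (hnd x) (hnw x) (Q := M1) (by omega) ?_ (h x)
    nlinarith
  have hd1pos : d1 ≠ 0 := by
    intro h
    rw [h] at hfind
    exact hfind (by simp)
  obtain ⟨d, hd⟩ := Nat.exists_eq_succ_of_ne_zero hd1pos
  have hall : ∀ x, X ^ d ∣ φ (n x) := by
    have := Nat.find_min hex (m := d) (by omega)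
    simpa using this
  choose a ha using hall
  obtain ⟨x0, hx0⟩ : ∃ x, (a x).coeff 0 ≠ 0 := by
    by_contra hc
    push Not at hc
    apply hfind
    intro x
    rw [hd, Nat.succ_eq_add_one, pow_succ, ha x]
    exact mul_dvd_mul_left _ (X_dvd_iff.2 (hc x))
  set c : Ix e r w → k := fun x => (a x).coeff 0 ^ Q with hc
  have hG0 : toPL _ c ≠ 0 := by
    intro h
    have := congrFun (toPL_inj _ h) x0
    simp only [hc, Pi.zero_apply] at this
    exact hx0 (pow_eq_zero_iff (by omega) |>.1 this)
  refine branch_order hr0 hg hr hgw hirr h1 h2 h3 hG0 (toPL_deg c) (toPL_wt c) (Q := Q) hQ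
    (by nlinarith) ?_
  have hs : X ^ (d * Q + Q) ∣ X ^ (d * Q) * ∑ x : Ix e r w, (a x) ^ Q * φ (C X) ^ x.1.1 * φ X ^ x.1.2 := by
    have e1 : φ (∑ x, n x ^ (p ^ b) * (C X) ^ x.1.1 * X ^ x.1.2) =
        X ^ (d * Q) * ∑ x : Ix e r w, (a x) ^ Q * φ (C X) ^ x.1.1 * φ X ^ x.1.2 := by
      rw [map_sum, Finset.mul_sum]
      refine Finset.sum_congr rfl fun x _ => ?_
      rw [map_mul, map_mul, map_pow, map_pow, map_pow, ha x, mul_pow, ← pow_mul]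
      ring
    rw [← e1]
    refine dvd_trans ?_ (map_dvd φ hdvd)
    refine dvd_trans (pow_dvd_pow _ ?_) h3
    have : d + 1 ≤ M1 := by omega
    nlinarith
  rw [pow_add] at hs
  have hs2 := (mul_dvd_mul_iff_left (pow_ne_zero _ X_ne_zero)).1 hs
  have hs3 : φ (toPL _ c) = (∑ x : Ix e r w, (a x) ^ Q * φ (C X) ^ x.1.1 * φ X ^ x.1.2) -
      ∑ x : Ix e r w, (a x - C ((a x).coeff 0)) ^ Q * φ (C X) ^ x.1.1 * φ X ^ x.1.2 := by
    rw [toPL_apply, map_sum, ← Finset.sum_sub_distrib]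
    refine Finset.sum_congr rfl fun x _ => ?_
    rw [hQdef, sub_pow_char_pow, ← hQdef]
    simp only [hc, C_pow, map_mul, map_pow, h1]
    ring
  rw [hs3]
  refine dvd_sub hs2 (Finset.dvd_sum fun x _ => ?_)
  refine Dvd.dvd.mul_right (Dvd.dvd.mul_right ?_ _) _
  exact pow_dvd_pow_of_dvd (X_dvd_iff.2 (by simp)) _

lemma exists_lagrange (S : Finset (k × k)) (a : k × k) :
    ∃ B : k[X][X], evalEval a.1 a.2 B = 1 ∧ ∀ b ∈ S, b ≠ a → evalEval b.1 b.2 B = 0 := by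
  classical
  have h1 : ∀ b : k × k, ∃ B : k[X][X], evalEval a.1 a.2 B = 1 ∧ (b ≠ a → evalEval b.1 b.2 B = 0) := by
    intro b
    by_cases h : b = a
    · exact ⟨1, by simp, by simp [h]⟩
    · by_cases h1 : b.1 = a.1
      · have h2 : b.2 ≠ a.2 := fun h2 => h (Prod.ext h1 h2)
        refine ⟨C (C (a.2 - b.2)⁻¹) * (X - C (C b.2)), ?_, ?_⟩
        · have := sub_ne_zero.2 h2.symm
          simp [evalEval, this]
        · simp [evalEval]
      · refine ⟨C (C (a.1 - b.1)⁻¹) * (C X - C (C b.1)), ?_, ?_⟩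
        · have := sub_ne_zero.2 (Ne.symm h1)
          simp [evalEval, this]
        · simp [evalEval]
  choose B hB using h1
  refine ⟨∏ b ∈ S, B b, ?_, ?_⟩
  · rw [← coe_evalEvalRingHom, map_prod]
    exact Finset.prod_eq_one fun b _ => (hB b).1
  · intro b hb hba
    rw [← coe_evalEvalRingHom, map_prod]
    exact Finset.prod_eq_zero hb ((hB b).2 hba)

/-- Lemma E -/
lemma card_zeros_le {e r : ℕ} {g : k[X][X]} (hg : g.Monic) (hr : g.natDegree = r)
    (hgw : Wt e (e * r) g) (hirr : Irreducible g) {h : ℕ} {H : k[X][X]} (hHw : Wt e h H)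
    (hH : ¬ g ∣ H) (S : Finset (k × k)) (hgS : ∀ a ∈ S, evalEval a.1 a.2 g = 0)
    (hHS : ∀ a ∈ S, evalEval a.1 a.2 H = 0) : S.card ≤ r * h := by
  classical
  choose L hL using fun a => exists_lagrange S a
  choose n hn using fun a => exists_wt e (L a)
  set x := S.sup n
  have hmod : ∀ (B : k[X][X]) (a) (_ : a ∈ S), evalEval a.1 a.2 (B %ₘ g) = evalEval a.1 a.2 B := by
    intro B a ha
    conv_rhs => rw [← modByMonic_add_div B g]
    rw [evalEval_add, evalEval_mul, hgS a ha]; ring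
  let Ψ1 : (Ix e r x → k) →ₗ[k] (Ix e r (x + h) → k) :=
    (coordL _) ∘ₗ ((redL g) ∘ₗ ((LinearMap.mulRight k H) ∘ₗ (toPL (Ix e r x))))
  have hw1 : ∀ c, Wt e (x + h) ((toPL (Ix e r x) c * H) %ₘ g) := fun c =>
    Wt.modByMonic hg hr hgw ((toPL_wt c).mul hHw)
  let ev : k[X][X] →ₗ[k] (S → k) := 
    { toFun := fun B a => evalEval a.1.1 a.1.2 B
      map_add' := fun A B => by ext; simp
      map_smul' := fun c B => by ext; simp [smul_bi] }
  let Ψ2 : (Ix e r (x + h) → k) →ₗ[k] (S → k) := ev ∘ₗ toPL _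
  have hinj : LinearMap.ker Ψ1 = ⊥ := by
    rw [LinearMap.ker_eq_bot']
    intro c hc
    have h0 : (toPL (Ix e r x) c * H) %ₘ g = 0 :=
      coordL_inj (hw1 c) (wt_mod_deg hg hr _) hc
    rw [modByMonic_eq_zero_iff_dvd hg] at h0
    have hp : Prime g := UniqueFactorizationMonoid.irreducible_iff_prime.1 hirr
    rcases hp.dvd_or_dvd h0 with h | h
    · exact toPL_inj _ (not_dvd_of_deg hg hr (toPL_deg c) h)
    · exact absurd h hH
  have hsub : LinearMap.range Ψ1 ≤ LinearMap.ker Ψ2 := by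
    rintro _ ⟨c, rfl⟩
    rw [LinearMap.mem_ker]
    show ev (toPL _ (coordL _ ((toPL (Ix e r x) c * H) %ₘ g))) = 0
    rw [toPL_coordL (hw1 c) (wt_mod_deg hg hr _)]
    ext a
    show evalEval a.1.1 a.1.2 _ = 0
    rw [hmod _ _ a.2, evalEval_mul, hHS a.1 a.2, mul_zero]
  have hsurj : LinearMap.range Ψ2 = ⊤ := by
    rw [eq_top_iff]
    intro y _
    have hB : Wt e (x + h) (∑ a : S, C (C (y a)) * L a) := by
      apply Wt.sum
      intro a _
      have : Wt e 0 (C (C (y a)) : k[X][X]) := by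
        simpa using Wt.mono' (e := e) (n := 0) (i := 0) (j := 0) (y a) (by simp)
      refine (this.mul (hn a)).mono ?_
      have : n a ≤ x := Finset.le_sup a.2
      omega
    refine ⟨coordL _ ((∑ a : S, C (C (y a)) * L a) %ₘ g), ?_⟩
    show ev (toPL _ _) = y
    rw [toPL_coordL (Wt.modByMonic hg hr hgw hB) (wt_mod_deg hg hr _)]
    ext a
    show evalEval a.1.1 a.1.2 _ = _
    rw [hmod _ _ a.2, ← coe_evalEvalRingHom, map_sum, Finset.sum_eq_single a]
    · rw [map_mul, coe_evalEvalRingHom, (hL a).1]; simp [evalEval]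
    · intro b _ hba
      rw [map_mul, coe_evalEvalRingHom, (hL b).2 a a.2 (fun h => hba (Subtype.ext h.symm)), mul_zero]
    · simp
  have d1 := LinearMap.finrank_range_add_finrank_ker Ψ1
  have d2 := LinearMap.finrank_range_add_finrank_ker Ψ2
  have d3 := Submodule.finrank_mono hsub
  rw [hinj, finrank_bot, Module.finrank_fintype_fun_eq_card, Fintype.card_coe] at d1
  rw [hsurj, finrank_top, Module.finrank_fintype_fun_eq_card, Module.finrank_fintype_fun_eq_card,
    Fintype.card_coe, Fintype.card_coe] at d2
  have := card_Ix_add e r x h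
  omega

end P1b

section P1c
variable {k : Type} [Field k]

lemma card_Ix_ge (e r l : ℕ) : r * l ≤ (Ix e r (l + e * r)).card := by
  have : Finset.range l ×ˢ Finset.range r ⊆ Ix e r (l + e * r) := by
    rintro ⟨i, j⟩ h
    simp only [Finset.mem_product, Finset.mem_range] at h
    rw [mem_Ix]
    refine ⟨h.2, ?_⟩
    have : e * j ≤ e * r := Nat.mul_le_mul_left _ h.2.le
    simp only; omega
  have h := Finset.card_le_card this
  rw [Finset.card_product, Finset.card_range, Finset.card_range] at h
  linarith

/-- Lemma F: existence of the auxiliary coefficients -/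
lemma exists_aux {e r : ℕ} {g : k[X][X]} (hg : g.Monic) (hr : g.natDegree = r)
    (hgw : Wt e (e * r) g) (P w w2 : ℕ)
    (hcard : r * (P * w + w2 + 1) < (Ix e r w).card * (Ix e r w2).card) :
    ∃ b : Ix e r w × Ix e r w2 → k, b ≠ 0 ∧
      g ∣ ∑ x, (∑ y, C (C (b (x, y))) * (C X) ^ y.1.1 * X ^ y.1.2) *
        (C X) ^ (P * x.1.1) * X ^ (P * x.1.2) := by
  classical
  let Θ : (Ix e r w × Ix e r w2 → k) →ₗ[k] k[X][X] :=
    { toFun := fun b => ∑ x : Ix e r w, (toPL (Ix e r w2) (fun y => b (x, y))) *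
        (C X) ^ (P * x.1.1) * X ^ (P * x.1.2)
      map_add' := fun b c => by
        rw [← Finset.sum_add_distrib]
        refine Finset.sum_congr rfl fun x _ => ?_
        rw [← add_mul, ← add_mul, ← map_add]; rfl
      map_smul' := fun a c => by
        rw [Finset.smul_sum]
        refine Finset.sum_congr rfl fun x _ => ?_
        rw [RingHom.id_apply, ← smul_mul_assoc, ← smul_mul_assoc, ← map_smul]; rfl }
  let Φ : (Ix e r w × Ix e r w2 → k) →ₗ[k] (Ix e r (P * w + w2) → k) :=
    coordL _ ∘ₗ redL g ∘ₗ Θ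
  have hker : LinearMap.ker Φ ≠ ⊥ := by
    apply LinearMap.ker_ne_bot_of_finrank_lt
    rw [Module.finrank_fintype_fun_eq_card, Module.finrank_fintype_fun_eq_card, Fintype.card_prod,
      Fintype.card_coe, Fintype.card_coe, Fintype.card_coe]
    exact (card_Ix_le _ _ _).trans_lt hcard
  obtain ⟨b, hb, hne⟩ := (Submodule.ne_bot_iff _).1 hker
  refine ⟨b, hne, ?_⟩
  show g ∣ Θ b
  rw [← modByMonic_eq_zero_iff_dvd hg]
  refine coordL_inj (e := e) (r := r) (n := P * w + w2) ?_ (wt_mod_deg hg hr _) hb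
  refine Wt.modByMonic hg hr hgw (Wt.sum _ fun x _ => ?_)
  have h1 := toPL_wt (fun y => b (x, y))
  have hx := (mem_Ix.1 x.2).2
  have h2 : Wt e (P * w) ((C X) ^ (P * x.1.1) * X ^ (P * x.1.2) : k[X][X]) := by
    have := Wt.mono' (k := k) (e := e) (n := P * w) (i := P * x.1.1) (j := P * x.1.2) 1 (by nlinarith)
    simpa using this
  rw [mul_assoc]
  exact (h1.mul h2).mono (by omega)

/-- Stepanov–Bombieri bound. -/
theorem stepanov {p : ℕ} [hp : Fact p.Prime] [CharP k p] [IsAlgClosed k] {e r : ℕ} (hr0 : 1 ≤ r)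
    {g : k[X][X]} (hg : g.Monic)
    (hr : g.natDegree = r) (hgw : Wt e (e * r) g) (hirr : Irreducible g)
    (hder : derivative g ≠ 0) (a b : ℕ) (hP : e * r + e + 4 ≤ p ^ a)
    (hQ : (r + 1) * (p ^ a + e * r) < p ^ b) (S : Finset (k × k))
    (hS : ∀ x ∈ S, evalEval x.1 x.2 g = 0 ∧ x.1 ^ (p ^ (a + b)) = x.1 ∧ x.2 ^ (p ^ (a + b)) = x.2) :
    S.card ≤ p ^ (a + b) + (r + r * (e + 3 + e * r)) * p ^ b := by
  classical
  set P := p ^ a with hPd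
  set Q := p ^ b with hQd
  have hPQ : p ^ (a + b) = P * Q := pow_add _ _ _
  rw [hPQ] at hS ⊢
  set m := P / r + (e + 3)
  have hm1 : P + r * (e + 3) < r * m + r := by
    have := Nat.div_add_mod P r
    have h2 := Nat.mod_lt P (show 0 < r by omega)
    simp only [m]; nlinarith
  have hm2 : r * m ≤ P + r * (e + 3) := by
    have := Nat.mul_div_le P r
    simp only [m]
    rw [Nat.mul_add]
    exact Nat.add_le_add_right this _
  have hm3 : m ≤ P + (e + 3) := by
    have := Nat.div_le_self P r
    simp only [m]; omega
  have h6 : P + e * r ≤ Q :=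
    (Nat.le_mul_of_pos_left (P + e * r) (Nat.succ_pos r)).trans hQ.le
  have hQP : P ≤ Q := (Nat.le_add_right _ _).trans h6
  obtain ⟨β, hβ0, hβ⟩ := exists_aux hg hr hgw P (P + e * r) (m + e * r) (by
    have h1 := card_Ix_ge e r P
    have h2 := card_Ix_ge e r m
    refine lt_of_lt_of_le ?_ (Nat.mul_le_mul h1 h2)
    have h3 : P * (P + e * r) + (m + e * r) + 1 < P * (r * m) := by
      have : P * (P + r * (e + 3) + 1) ≤ P * (r * m + r) := Nat.mul_le_mul_left _ hm1
      nlinarith [Nat.mul_le_mul_left P hr0]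
    calc r * (P * (P + e * r) + (m + e * r) + 1) < r * (P * (r * m)) :=
          Nat.mul_lt_mul_of_pos_left h3 (by omega)
      _ = r * P * (r * m) := by ring)
  have hPQ0 : 0 < P * Q := by
    have : 0 < P := by omega
    have : 0 < Q := by omega
    positivity
  choose γ hγ using fun z => IsAlgClosed.exists_pow_nat_eq (β z) hPQ0
  set n : Ix e r (P + e * r) → k[X][X] := fun x => toPL (Ix e r (m + e * r)) (fun y => γ (x, y))
  have hnz : ∃ x, n x ≠ 0 := by
    by_contra hc
    push Not at hc
    apply hβ0
    ext ⟨x, y⟩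
    have := congrFun (toPL_inj _ (hc x)) y
    simp only [Pi.zero_apply] at this
    rw [← hγ, this, Pi.zero_apply, zero_pow hPQ0.ne']
  have hnd := not_dvd_frob hr0 hg hr hgw hirr hder b hQ n (fun x => toPL_wt _) (fun x => toPL_deg _) hnz
  have hHw : Wt e (P + e * r + Q * (m + e * r)) (∑ x, n x ^ Q * (C X) ^ x.1.1 * X ^ x.1.2) := by
    refine Wt.sum _ fun x _ => ?_
    have h1 : Wt e (Q * (m + e * r)) (n x ^ Q) := (toPL_wt _).pow Q
    have h2 : Wt e (P + e * r) ((C X) ^ x.1.1 * X ^ x.1.2 : k[X][X]) := by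
      have := Wt.mono' (k := k) (e := e) (n := P + e * r) (i := x.1.1) (j := x.1.2) 1 (mem_Ix.1 x.2).2
      simpa using this
    rw [mul_assoc]
    exact (h1.mul h2).mono (by omega)
  have hcard := card_zeros_le hg hr hgw hirr hHw hnd S (fun x hx => (hS x hx).1) (by
    rintro ⟨t, v⟩ hx
    obtain ⟨h1, h2, h3⟩ := hS _ hx
    simp only at h1 h2 h3 ⊢
    have hsP : ∀ (ι : Type) (s : Finset ι) (F : ι → k), (∑ i ∈ s, F i) ^ P = ∑ i ∈ s, F i ^ P :=
      fun ι s F => sum_pow_char_pow p a s F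
    have hsPQ : ∀ (ι : Type) (s : Finset ι) (F : ι → k),
        (∑ i ∈ s, F i) ^ (P * Q) = ∑ i ∈ s, F i ^ (P * Q) := by
      rw [← hPQ]
      exact fun ι s F => sum_pow_char_pow p (a + b) s F
    have h4 : evalEval t v (∑ x, n x ^ Q * (C X) ^ x.1.1 * X ^ x.1.2) ^ P = 0 := by
      obtain ⟨A, hA⟩ := hβ
      have h5 := congrArg (evalEvalRingHom t v) hA
      rw [map_mul, show evalEvalRingHom t v g = 0 from h1, zero_mul, map_sum] at h5
      rw [← h5, ← coe_evalEvalRingHom, map_sum, hsP]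
      refine Finset.sum_congr rfl fun x _ => ?_
      rw [map_mul, map_mul, map_pow, map_mul, map_mul, mul_pow, mul_pow, ← pow_mul, mul_comm Q P, ← map_pow,
        ← map_pow _ _ P, ← pow_mul, ← map_pow _ _ P, ← pow_mul, mul_comm x.1.1, mul_comm x.1.2]
      congr 2
      simp only [n]
      rw [toPL_apply, map_pow, map_sum, map_sum, hsPQ]
      refine Finset.sum_congr rfl fun y _ => ?_
      have e1 : ∀ (c : k) (i j : ℕ), evalEvalRingHom t v (C (C c) * C X ^ i * X ^ j) = c * t ^ i * v ^ j := by
        intro c i j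
        simp [evalEval]
      rw [e1, e1, mul_pow, mul_pow, hγ, ← pow_mul, mul_comm y.1.1, pow_mul, h2, ← pow_mul,
        mul_comm y.1.2, pow_mul, h3]
    exact (pow_eq_zero_iff (by omega)).1 h4)
  refine hcard.trans ?_
  have : r * (Q * m) ≤ Q * (P + r * (e + 3)) := by nlinarith
  nlinarith

end P1c

section P4
set_option maxSynthPendingDepth 8
set_option linter.unusedSimpArgs false

/-- evaluation of nested polynomials -/
noncomputable def ev3 {p : ℕ} {S : Type} [CommRing S] [Algebra (ZMod p) S] (s t u : S) :
    (ZMod p)[X][X][X] →+* S :=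
  eval₂RingHom (eval₂RingHom (eval₂RingHom (algebraMap (ZMod p) S) s) t) u

lemma ev3_X {p : ℕ} {S : Type} [CommRing S] [Algebra (ZMod p) S] (s t u : S) :
    ev3 (p := p) s t u X = u := by simp [ev3]
lemma ev3_CX {p : ℕ} {S : Type} [CommRing S] [Algebra (ZMod p) S] (s t u : S) :
    ev3 (p := p) s t u (C X) = t := by simp [ev3]
lemma ev3_CCX {p : ℕ} {S : Type} [CommRing S] [Algebra (ZMod p) S] (s t u : S) :
    ev3 (p := p) s t u (C (C X)) = s := by simp [ev3]

lemma sl2_eq {S : Type} [CommRing S] (x : SL2 S) : ∃ a b c d : S, a * d - b * c = 1 ∧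
    x.1 = !![a, b; c, d] := by
  refine ⟨x.1 0 0, x.1 0 1, x.1 1 0, x.1 1 1, ?_, Matrix.eta_fin_two _⟩
  rw [← Matrix.det_fin_two]; exact x.2

lemma sl2_rules {S : Type} [CommRing S] (x y : SL2 S) (s t u : S)
    (hs : s = Matrix.trace x.1)
    (ht : t = Matrix.trace y.1)
    (hu : u = Matrix.trace (x.1 * y.1)) (a0 a1 a2 a3 : S) :
    (a0 • 1 + a1 • x.1 + a2 • y.1 +
      a3 • (x.1 * y.1)) * x.1 =
    (-a1 + a2 * (u - s * t) - a3 * t) • 1 + (a0 + a1 * s + a2 * t + a3 * u) • x.1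
      + (a2 * s + a3) • y.1 +
      (-a2) • (x.1 * y.1) ∧
    (a0 • 1 + a1 • x.1 + a2 • y.1 +
      a3 • (x.1 * y.1)) * y.1 =
    (-a2) • 1 + (-a3) • x.1
      + (a0 + a2 * t) • y.1 +
      (a1 + a3 * t) • (x.1 * y.1) ∧
    ((x⁻¹ : SL2 S) : Matrix (Fin 2) (Fin 2) S) = s • 1 - x.1 ∧
    ((y⁻¹ : SL2 S) : Matrix (Fin 2) (Fin 2) S) = t • 1 - y.1 := by
  obtain ⟨a, b, c, d, h1, hx⟩ := sl2_eq x
  obtain ⟨a', b', c', d', h2, hy⟩ := sl2_eq y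
  rw [Matrix.SpecialLinearGroup.coe_inv, Matrix.SpecialLinearGroup.coe_inv]
  rw [hx] at hs
  rw [hy] at ht
  rw [hx, hy] at hu
  rw [hx, hy]
  simp only [Matrix.mul_fin_two, Matrix.trace_fin_two_of] at hs ht hu
  subst hs ht hu
  refine ⟨?_, ?_, ?_, ?_⟩
  · ext i j
    fin_cases i <;> fin_cases j <;>
      simp [Matrix.mul_apply, Fin.sum_univ_two, Matrix.add_apply, Matrix.smul_apply]
    · linear_combination (-a1-a3*(a'+d')+a3*a') * h1
    · linear_combination (a3*b') * h1
    · linear_combination (a3*c') * h1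
    · linear_combination (-a1-a3*(a'+d')+a3*d') * h1
  · ext i j
    fin_cases i <;> fin_cases j <;>
      simp [Matrix.mul_apply, Fin.sum_univ_two, Matrix.add_apply, Matrix.smul_apply]
    · linear_combination (-a2-a3*a) * h2
    · linear_combination (-a3*b) * h2
    · linear_combination (-a3*c) * h2
    · linear_combination (-a2-a3*d) * h2
  · ext i j
    fin_cases i <;> fin_cases j <;> simp [Matrix.adjugate_fin_two]
  · ext i j
    fin_cases i <;> fin_cases j <;> simp [Matrix.adjugate_fin_two]

/-- representation of words -/
def WRep (p : ℕ) (w : FreeGroup (Fin 2)) : Prop :=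
  ∃ p0 p1 p2 p3 : (ZMod p)[X][X][X], ∀ (S : Type) [CommRing S] [Algebra (ZMod p) S] (x y : SL2 S)
    (s t u : S) (_ : s = Matrix.trace x.1)
    (_ : t = Matrix.trace y.1)
    (_ : u = Matrix.trace (x.1 * y.1)),
    (wordEval w x y : SL2 S).1 =
      ev3 s t u p0 • 1 + ev3 s t u p1 • x.1 +
        ev3 s t u p2 • y.1 +
      ev3 s t u p3 • (x.1 * y.1)

lemma wordEval_mul {G : Type*} [Group G] (v w : FreeGroup (Fin 2)) (x y : G) :
    wordEval (v * w) x y = wordEval v x y * wordEval w x y := by simp [wordEval]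
lemma wordEval_inv {G : Type*} [Group G] (v : FreeGroup (Fin 2)) (x y : G) :
    wordEval v⁻¹ x y = (wordEval v x y)⁻¹ := by simp [wordEval]
lemma wordEval_of0 {G : Type*} [Group G] (x y : G) :
    wordEval (FreeGroup.of 0) x y = x := by simp [wordEval]
lemma wordEval_of1 {G : Type*} [Group G] (x y : G) :
    wordEval (FreeGroup.of 1) x y = y := by simp [wordEval]

lemma WRep.one (p : ℕ) : WRep p 1 := by
  refine ⟨1, 0, 0, 0, ?_⟩
  intro S _ _ x y s t u _ _ _
  simp [wordEval]

lemma WRep.mul_gen {p : ℕ} {w : FreeGroup (Fin 2)} (h : WRep p w) (i : Fin 2) :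
    WRep p (w * FreeGroup.of i) ∧ WRep p (w * (FreeGroup.of i)⁻¹) := by
  obtain ⟨p0, p1, p2, p3, h⟩ := h
  fin_cases i
  · constructor
    · refine ⟨-p1 + p2 * (X - C (C X) * C X) - p3 * C X, p0 + p1 * C (C X) + p2 * C X + p3 * X,
        p2 * C (C X) + p3, -p2, ?_⟩
      intro S _ _ x y s t u hs ht hu
      have h1 := (sl2_rules x y s t u hs ht hu (ev3 s t u p0) (ev3 s t u p1) (ev3 s t u p2) (ev3 s t u p3)).1
      simp only [wordEval_mul, Fin.zero_eta, wordEval_of0, Matrix.SpecialLinearGroup.coe_mul,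
        h S x y s t u hs ht hu, h1, _root_.map_add, _root_.map_sub, _root_.map_mul, _root_.map_neg, ev3_X, ev3_CX, ev3_CCX]
    · refine ⟨p0 * C (C X) - (-p1 + p2 * (X - C (C X) * C X) - p3 * C X),
        p1 * C (C X) - (p0 + p1 * C (C X) + p2 * C X + p3 * X),
        p2 * C (C X) - (p2 * C (C X) + p3), p3 * C (C X) + p2, ?_⟩
      intro S _ _ x y s t u hs ht hu
      obtain ⟨h1, -, h2, -⟩ := (sl2_rules x y s t u hs ht hu (ev3 s t u p0) (ev3 s t u p1) (ev3 s t u p2) (ev3 s t u p3))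
      simp only [wordEval_mul, Fin.zero_eta, wordEval_of0, wordEval_inv, Matrix.SpecialLinearGroup.coe_mul,
        h S x y s t u hs ht hu, h2, mul_sub, h1, _root_.map_add, _root_.map_sub, _root_.map_mul, _root_.map_neg, ev3_X, ev3_CX, ev3_CCX,
        mul_smul_comm, mul_one]
      module
  · constructor
    · refine ⟨-p2, -p3, p0 + p2 * C X, p1 + p3 * C X, ?_⟩
      intro S _ _ x y s t u hs ht hu
      have h1 := (sl2_rules x y s t u hs ht hu (ev3 s t u p0) (ev3 s t u p1) (ev3 s t u p2) (ev3 s t u p3)).2.1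
      simp only [wordEval_mul, Fin.mk_one, wordEval_of1, Matrix.SpecialLinearGroup.coe_mul,
        h S x y s t u hs ht hu, h1, _root_.map_add, _root_.map_sub, _root_.map_mul, _root_.map_neg, ev3_X, ev3_CX, ev3_CCX]
    · refine ⟨p0 * C X + p2, p1 * C X + p3, p2 * C X - (p0 + p2 * C X),
        p3 * C X - (p1 + p3 * C X), ?_⟩
      intro S _ _ x y s t u hs ht hu
      obtain ⟨-, h1, -, h2⟩ := (sl2_rules x y s t u hs ht hu (ev3 s t u p0) (ev3 s t u p1) (ev3 s t u p2) (ev3 s t u p3))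
      simp only [wordEval_mul, Fin.mk_one, wordEval_of1, wordEval_inv, Matrix.SpecialLinearGroup.coe_mul,
        h S x y s t u hs ht hu, h2, mul_sub, h1, _root_.map_add, _root_.map_sub, _root_.map_mul, _root_.map_neg, ev3_X, ev3_CX, ev3_CCX,
        mul_smul_comm, mul_one]
      module

lemma WRep.mul_zpow {p : ℕ} {w : FreeGroup (Fin 2)} (h : WRep p w) (i : Fin 2) (n : ℤ) :
    WRep p (w * FreeGroup.of i ^ n) := by
  induction n using Int.induction_on with
  | zero => simpa using h
  | succ n ih => rw [_root_.zpow_add_one, ← mul_assoc]; exact (ih.mul_gen i).1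
  | pred n ih => rw [_root_.zpow_sub_one, ← mul_assoc]; exact (ih.mul_gen i).2

/-- word from a list of exponents -/
def lword (l : List (ℤ × ℤ)) : FreeGroup (Fin 2) :=
  (l.map fun c => FreeGroup.of 0 ^ c.1 * FreeGroup.of 1 ^ c.2).prod

lemma wordOf_eq {r : ℕ} (a b : Fin r → ℤ) :
    wordOf a b = lword (List.ofFn fun i => (a i, b i)) := by
  simp [wordOf, lword, List.map_ofFn, Function.comp_def]

lemma WRep.lword (p : ℕ) (l : List (ℤ × ℤ)) : WRep p (lword l) := by
  suffices h : ∀ w, WRep p w → WRep p (w * _root_.lword l) by simpa using h 1 (WRep.one p)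
  induction l with
  | nil => intro w hw; simpa [_root_.lword] using hw
  | cons c l ih =>
    intro w hw
    have : w * _root_.lword (c :: l) = (w * FreeGroup.of 0 ^ c.1 * FreeGroup.of 1 ^ c.2) * _root_.lword l := by
      simp [_root_.lword, mul_assoc]
    rw [this]
    exact ih _ ((hw.mul_zpow 0 c.1).mul_zpow 1 c.2)

lemma exists_tracePoly (p : ℕ) (l : List (ℤ × ℤ)) : ∃ f : (ZMod p)[X][X][X],
    ∀ (S : Type) [CommRing S] [Algebra (ZMod p) S] (x y : SL2 S),
      Matrix.trace (wordEval (lword l) x y : SL2 S).1 =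
      ev3 (Matrix.trace x.1) (Matrix.trace y.1)
        (Matrix.trace (x.1 * y.1)) f := by
  obtain ⟨p0, p1, p2, p3, h⟩ := WRep.lword p l
  refine ⟨p0 + p0 + p1 * C (C X) + p2 * C X + p3 * X, ?_⟩
  intro S _ _ x y
  rw [h S x y _ _ _ rfl rfl rfl]
  simp [Matrix.trace_add, Matrix.trace_smul, ev3_X, ev3_CX, ev3_CCX, mul_two]

/-- diagonal embedding -/
def diagHom (F : Type) [Field F] : Fˣ →* SL2 F where
  toFun l := ⟨!![(l : F), 0; 0, ((l⁻¹ : Fˣ) : F)], by simp⟩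
  map_one' := by ext i j; fin_cases i <;> fin_cases j <;> simp
  map_mul' a b := by
    apply Subtype.ext
    change _ = !![(a : F), 0; 0, ((a⁻¹ : Fˣ) : F)] * !![(b : F), 0; 0, ((b⁻¹ : Fˣ) : F)]
    simp [mul_comm]

lemma wordEval_lword_comm {G : Type*} [CommGroup G] (l : List (ℤ × ℤ)) (x y : G) :
    wordEval (lword l) x y = x ^ (l.map Prod.fst).sum * y ^ (l.map Prod.snd).sum := by
  induction l with
  | nil => simp [wordEval, lword]
  | cons c l ih =>
    have : lword (c :: l) = FreeGroup.of 0 ^ c.1 * FreeGroup.of 1 ^ c.2 * lword l := by simp [lword]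
    rw [this, wordEval_mul, ih]
    simp only [wordEval, map_mul, map_zpow, FreeGroup.lift_apply_of, List.map_cons, List.sum_cons, _root_.zpow_add]
    simp only [Matrix.cons_val_zero, Matrix.cons_val_one]
    exact mul_mul_mul_comm _ _ _ _

lemma wordEval_hom {G H : Type*} [Group G] [Group H] (φ : G →* H) (w : FreeGroup (Fin 2)) (x y : G) :
    wordEval w (φ x) (φ y) = φ (wordEval w x y) := by
  unfold wordEval
  have : FreeGroup.lift ![φ x, φ y] = φ.comp (FreeGroup.lift ![x, y]) := by
    ext i; fin_cases i <;> simp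
  rw [this]; rfl

lemma tracePoly_diag {p : ℕ} {l : List (ℤ × ℤ)} {f : (ZMod p)[X][X][X]}
    (hf : ∀ (S : Type) [CommRing S] [Algebra (ZMod p) S] (x y : SL2 S),
      Matrix.trace (wordEval (lword l) x y : SL2 S).1 =
      ev3 (Matrix.trace x.1) (Matrix.trace y.1)
        (Matrix.trace (x.1 * y.1)) f)
    (F : Type) [Field F] [Algebra (ZMod p) F] (α μ : F) (hα : α ≠ 0) (hμ : μ ≠ 0) :
    ev3 (α + α⁻¹) (μ + μ⁻¹) (α * μ + (α * μ)⁻¹) f =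
      α ^ (l.map Prod.fst).sum * μ ^ (l.map Prod.snd).sum +
      (α ^ (l.map Prod.fst).sum * μ ^ (l.map Prod.snd).sum)⁻¹ := by
  have h := hf F (diagHom F (Units.mk0 α hα)) (diagHom F (Units.mk0 μ hμ))
  rw [wordEval_hom, wordEval_lword_comm, ← Matrix.SpecialLinearGroup.coe_mul, ← map_mul] at h
  have ht : ∀ c : Fˣ, Matrix.trace ((diagHom F c : SL2 F) : Matrix (Fin 2) (Fin 2) F) = c + (c : F)⁻¹ := by
    intro c
    change Matrix.trace !![(c : F), 0; 0, ((c⁻¹ : Fˣ) : F)] = _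
    simp [Matrix.trace_fin_two]
  rw [ht, ht, ht, ht] at h
  simpa using h.symm

end P4

section P4b
set_option maxSynthPendingDepth 8
set_option linter.unusedSimpArgs false

variable {k : Type} [Field k]

/-- chebyshev-like -/
noncomputable def Uc (α : k) (a : ℤ) : k := (α ^ a - α ^ (-a)) / (α - α⁻¹)

lemma zpow_ne_neg {α : k} (h0 : α ≠ 0) (h : ∀ n : ℕ, 0 < n → α ^ n ≠ 1) {a : ℤ} (ha : a ≠ 0) :
    α ^ a ≠ α ^ (-a) := by
  have key : ∀ n : ℕ, n ≠ 0 → α ^ (n : ℤ) ≠ α ^ (-(n : ℤ)) := by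
    intro n hn e
    apply h (n + n) (by omega)
    rw [_root_.zpow_neg, zpow_natCast] at e
    rw [pow_add]; nth_rw 1 [e]
    exact inv_mul_cancel₀ (pow_ne_zero _ h0)
  obtain ⟨n, rfl | rfl⟩ := a.eq_nat_or_neg
  · exact key n (by simpa using ha)
  · rw [neg_neg]; exact (key n (by simpa using ha)).symm

lemma Uc_ne {α : k} (h0 : α ≠ 0) (h : ∀ n : ℕ, 0 < n → α ^ n ≠ 1) {a : ℤ} (ha : a ≠ 0) : Uc α a ≠ 0 := by
  refine div_ne_zero (sub_ne_zero.2 (zpow_ne_neg h0 h ha)) (sub_ne_zero.2 ?_)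
  simpa using zpow_ne_neg h0 h (a := 1) one_ne_zero

lemma Uc_add {α : k} (h0 : α ≠ 0) (a b : ℤ) :
    Uc α (a + b) = α ^ a * Uc α b + Uc α a * α ^ (-b) := by
  unfold Uc
  rw [neg_add, zpow_add₀ h0, zpow_add₀ h0]
  ring

lemma Uc_add' {α : k} (h0 : α ≠ 0) (a b : ℤ) :
    Uc α (a + b) = Uc α a * α ^ b + α ^ (-a) * Uc α b := by
  rw [add_comm, Uc_add h0]; ring

lemma zpow_of_add {G : Type*} [Group G] (Y : ℤ → G) (h : ∀ a b, Y (a + b) = Y a * Y b) (a : ℤ) :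
    Y 1 ^ a = Y a := by
  let φ : Multiplicative ℤ →* G := MonoidHom.mk' (fun n => Y n.toAdd) (fun a b => h _ _)
  exact (MonoidHom.apply_mint _ φ (Multiplicative.ofAdd a)).symm

noncomputable def upX (α : k) (h0 : α ≠ 0) (a : ℤ) : SL2 k[X] :=
  ⟨!![C (α ^ a), C (Uc α a); 0, C (α ^ (-a))], by
    rw [Matrix.det_fin_two_of, ← C_mul, ← zpow_add₀ h0]; simp⟩

noncomputable def loY (α : k) (h0 : α ≠ 0) (a : ℤ) : SL2 k[X] :=
  ⟨!![C (α ^ a), 0; C (Uc α a) * X, C (α ^ (-a))], by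
    rw [Matrix.det_fin_two_of, ← C_mul, ← zpow_add₀ h0]; simp⟩

lemma upX_zpow (α : k) (h0 : α ≠ 0) (a : ℤ) : upX α h0 1 ^ a = upX α h0 a := by
  refine zpow_of_add _ (fun a b => ?_) a
  apply Subtype.ext
  change !![_, _; _, _] = !![_, _; _, _] * !![_, _; _, _]
  rw [Matrix.mul_fin_two, Uc_add h0, neg_add, zpow_add₀ h0, zpow_add₀ h0]
  simp

lemma loY_zpow (α : k) (h0 : α ≠ 0) (a : ℤ) : loY α h0 1 ^ a = loY α h0 a := by
  refine zpow_of_add _ (fun a b => ?_) a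
  apply Subtype.ext
  change !![_, _; _, _] = !![_, _; _, _] * !![_, _; _, _]
  rw [Matrix.mul_fin_two, Uc_add' h0, neg_add, zpow_add₀ h0, zpow_add₀ h0]
  simp
  ring

lemma upX_mul_loY (α μ : k) (h0 : α ≠ 0) (h1 : μ ≠ 0) (a b : ℤ) :
    (upX α h0 a * loY μ h1 b).1 = !![C (α ^ a * μ ^ b) + C (Uc α a * Uc μ b) * X, C (Uc α a * μ ^ (-b));
      C (α ^ (-a) * Uc μ b) * X, C (α ^ (-a) * μ ^ (-b))] := by
  change !![_, _; _, _] * !![_, _; _, _] = _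
  rw [Matrix.mul_fin_two]
  simp [mul_assoc]

lemma coeff_inv {α μ : k} (h0 : α ≠ 0) (h1 : μ ≠ 0) (hα : ∀ n : ℕ, 0 < n → α ^ n ≠ 1)
    (hμ : ∀ n : ℕ, 0 < n → μ ^ n ≠ 1) (l : List (ℤ × ℤ)) (hl : ∀ c ∈ l, c.1 ≠ 0 ∧ c.2 ≠ 0) :
    ∃ m0 m1 m2 m3 : k[X], (wordEval (lword l) (upX α h0 1) (loY μ h1 1)).1 = !![m0, m1; m2, m3] ∧
      (∀ n, l.length < n → m0.coeff n = 0) ∧ m0.coeff l.length ≠ 0 ∧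
      (∀ n, l.length ≤ n → m1.coeff n = 0) ∧ (∀ n, l.length < n → m2.coeff n = 0) ∧
      (∀ n, l.length < n → m3.coeff n = 0) ∧ (1 ≤ l.length → m3.coeff l.length = 0) := by
  induction l using List.reverseRecOn with
  | nil =>
    refine ⟨1, 0, 0, 1, ?_, ?_, ?_, ?_, ?_, ?_, ?_⟩
    · simp [wordEval, lword, Matrix.one_fin_two]
    · intro n hn; simp at hn; simp [coeff_one]; omega
    · simp
    · simp
    · simp
    · intro n hn; simp at hn; simp [coeff_one]; omega
    · simp
  | append_singleton l c ih =>
    obtain ⟨m0, m1, m2, m3, hM, h00, h0', h01, h10, h11, -⟩ := ih (fun c hc => hl c (by simp [hc]))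
    have hc := hl c (by simp)
    have e : lword (l ++ [c]) = lword l * (FreeGroup.of 0 ^ c.1 * FreeGroup.of 1 ^ c.2) := by
      simp [lword]
    have e2 : wordEval (FreeGroup.of 0 ^ c.1 * FreeGroup.of 1 ^ c.2) (upX α h0 1) (loY μ h1 1) =
        upX α h0 c.1 * loY μ h1 c.2 := by
      rw [← upX_zpow _ _ c.1, ← loY_zpow _ _ c.2]; simp [wordEval]
    have hu := Uc_ne h0 hα hc.1
    have hv := Uc_ne h1 hμ hc.2
    rw [e, wordEval_mul, e2, Matrix.SpecialLinearGroup.coe_mul, hM, upX_mul_loY, Matrix.mul_fin_two]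
    refine ⟨_, _, _, _, rfl, ?_, ?_, ?_, ?_, ?_, ?_⟩
    · intro n hn
      simp only [List.length_append, List.length_cons, List.length_nil] at hn
      obtain ⟨n, rfl⟩ : ∃ n', n = n' + 1 := ⟨n - 1, by omega⟩
      simp only [mul_add, coeff_add, ← mul_assoc, coeff_mul_X, coeff_mul_C]
      rw [h00 (n+1) (by omega), h00 n (by omega), h01 n (by omega)]; simp
    · simp only [List.length_append, List.length_cons, List.length_nil, zero_add]
      simp only [mul_add, coeff_add, ← mul_assoc, coeff_mul_X, coeff_mul_C]
      rw [h00 _ (Nat.lt_succ_self _), h01 _ le_rfl]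
      simp [h0', hu, hv]
    · intro n hn
      simp only [List.length_append, List.length_cons, List.length_nil] at hn
      simp only [mul_add, coeff_add, ← mul_assoc, coeff_mul_X, coeff_mul_C]
      rw [h00 n (by omega), h01 n (by omega)]; simp
    · intro n hn
      simp only [List.length_append, List.length_cons, List.length_nil] at hn
      obtain ⟨n, rfl⟩ : ∃ n', n = n' + 1 := ⟨n - 1, by omega⟩
      simp only [mul_add, coeff_add, ← mul_assoc, coeff_mul_X, coeff_mul_C]
      rw [h10 (n+1) (by omega), h10 n (by omega), h11 n (by omega)]; simp
    · intro n hn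
      simp only [List.length_append, List.length_cons, List.length_nil] at hn
      simp only [mul_add, coeff_add, ← mul_assoc, coeff_mul_X, coeff_mul_C]
      rw [h10 n (by omega), h11 n (by omega)]; simp
    · intro _
      simp only [List.length_append, List.length_cons, List.length_nil, zero_add]
      simp only [mul_add, coeff_add, ← mul_assoc, coeff_mul_X, coeff_mul_C]
      rw [h10 _ (Nat.lt_succ_self _), h11 _ (Nat.lt_succ_self _)]; simp

lemma not_root_of_unity {p : ℕ} [Fact p.Prime] [Algebra (ZMod p) k] {α s : k} (hs : s = α + α⁻¹)
    (htr : Transcendental (ZMod p) s) : ∀ n : ℕ, 0 < n → α ^ n ≠ 1 := by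
  intro n hn h
  apply htr
  have hi : IsAlgebraic (ZMod p) α := by
    refine ⟨X ^ n - 1, ?_, by simp [h]⟩
    exact (monic_X_pow_sub_C (1 : ZMod p) hn.ne').ne_zero
  rw [hs]
  exact hi.add hi.inv

lemma exists_add_inv [IsAlgClosed k] (s : k) : ∃ α : k, α ≠ 0 ∧ s = α + α⁻¹ := by
  obtain ⟨α, h⟩ := IsAlgClosed.exists_root (X ^ 2 - C s * X + 1 : k[X]) (by
    have : (X ^ 2 - C s * X + 1 : k[X]).degree = 2 := by compute_degree!
    rw [this]; norm_num)
  have h : α ^ 2 - s * α + 1 = 0 := by simpa using h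
  have h0 : α ≠ 0 := by rintro rfl; simp at h
  refine ⟨α, h0, ?_⟩
  field_simp
  linear_combination -h

lemma tracePoly_natDegree_aux {p : ℕ} [Fact p.Prime] {l : List (ℤ × ℤ)} {f : (ZMod p)[X][X][X]}
    (hf : ∀ (S : Type) [CommRing S] [Algebra (ZMod p) S] (x y : SL2 S),
      Matrix.trace (wordEval (lword l) x y : SL2 S).1 =
      ev3 (Matrix.trace x.1) (Matrix.trace y.1)
        (Matrix.trace (x.1 * y.1)) f) (hl : ∀ c ∈ l, c.1 ≠ 0 ∧ c.2 ≠ 0) (hl0 : 1 ≤ l.length)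
    [Algebra (ZMod p) k] [IsAlgClosed k] (s t : k) (hs : Transcendental (ZMod p) s)
    (ht : Transcendental (ZMod p) t)
    (hinj : Function.Injective (eval₂RingHom (eval₂RingHom (algebraMap (ZMod p) k) s) t)) :
    f.natDegree = l.length := by
  obtain ⟨α, h0, hα⟩ := exists_add_inv s
  obtain ⟨μ, h1, hμ⟩ := exists_add_inv t
  obtain ⟨m0, m1, m2, m3, hM, h00, h0', h01, h10, h11, h11'⟩ := coeff_inv h0 h1
    (not_root_of_unity hα hs) (not_root_of_unity hμ ht) l hl
  have h := hf k[X] (upX α h0 1) (loY μ h1 1)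
  rw [hM, ← Matrix.SpecialLinearGroup.coe_mul, upX_mul_loY] at h
  have e1 : (upX α h0 1).1.trace = C s := by
    change Matrix.trace !![_, _; _, _] = _
    rw [Matrix.trace_fin_two_of, ← C_add, hα]; simp
  have e2 : (loY μ h1 1).1.trace = C t := by
    change Matrix.trace !![_, _; _, _] = _
    rw [Matrix.trace_fin_two_of, ← C_add, hμ]; simp
  have hu1 : Uc α 1 * Uc μ 1 ≠ 0 := mul_ne_zero (Uc_ne h0 (not_root_of_unity hα hs) one_ne_zero)
    (Uc_ne h1 (not_root_of_unity hμ ht) one_ne_zero)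
  rw [e1, e2, Matrix.trace_fin_two_of, Matrix.trace_fin_two_of] at h
  set ι := eval₂RingHom (eval₂RingHom (algebraMap (ZMod p) k) s) t with hι
  obtain ⟨c1, c2, hc1, hc⟩ : ∃ c1 c2 : k, c1 ≠ 0 ∧ C (α ^ (1:ℤ) * μ ^ (1:ℤ)) + C (Uc α 1 * Uc μ 1) * X + C (α ^ (-1:ℤ) * μ ^ (-1:ℤ))
      = C c1 * X + C c2 := ⟨Uc α 1 * Uc μ 1, α ^ (1:ℤ) * μ ^ (1:ℤ) + α ^ (-1:ℤ) * μ ^ (-1:ℤ), hu1, by rw [C_add]; ring⟩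
  rw [hc] at h
  have e3 : ev3 (C s) (C t) (C c1 * X + C c2) f = (f.map ι).comp (C c1 * X + C c2) := by
    rw [Polynomial.comp, eval₂_map]
    change eval₂ _ _ _ = _
    congr 1
    ext <;> simp [hι]
  rw [e3] at h
  have hd : ((f.map ι).comp (C c1 * X + C c2)).natDegree = f.natDegree := by
    rw [natDegree_comp, natDegree_linear hc1, natDegree_map_eq_of_injective hinj, mul_one]
  rw [← hd, ← h]
  apply natDegree_eq_of_le_of_coeff_ne_zero
  · rw [natDegree_le_iff_coeff_eq_zero]
    intro n hn
    rw [coeff_add, h00 n hn, h11 n hn, add_zero]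
  · rw [coeff_add, h11' hl0, add_zero]; exact h0'

lemma tracePoly_natDegree {p : ℕ} [Fact p.Prime] {l : List (ℤ × ℤ)} {f : (ZMod p)[X][X][X]}
    (hf : ∀ (S : Type) [CommRing S] [Algebra (ZMod p) S] (x y : SL2 S),
      Matrix.trace (wordEval (lword l) x y : SL2 S).1 =
      ev3 (Matrix.trace x.1) (Matrix.trace y.1)
        (Matrix.trace (x.1 * y.1)) f) (hl : ∀ c ∈ l, c.1 ≠ 0 ∧ c.2 ≠ 0) (hl0 : 1 ≤ l.length) :
    f.natDegree = l.length := by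
  let F0 := FractionRing (ZMod p)[X][X]
  let k1 := AlgebraicClosure F0
  let φ : (ZMod p)[X][X] →+* k1 := (algebraMap F0 k1).comp (algebraMap _ F0)
  have hφ : Function.Injective φ := (algebraMap F0 k1).injective.comp (IsFractionRing.injective _ _)
  let _ : Algebra (ZMod p) k1 := (φ.comp (C.comp C)).toAlgebra
  have e : eval₂RingHom (eval₂RingHom (algebraMap (ZMod p) k1) (φ (C X))) (φ X) = φ := by
    ext <;> simp
    rfl
  have tr : ∀ z : k1, Function.Injective (aeval (R := ZMod p) z) → Transcendental (ZMod p) z := by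
    intro z hz
    rwa [transcendental_iff_injective]
  refine tracePoly_natDegree_aux hf hl hl0 (k := k1) (φ (C X)) (φ X) (tr _ ?_) (tr _ ?_) (by rw [e]; exact hφ)
  · have : (aeval (R := ZMod p) (φ (C X))).toRingHom = φ.comp C := by ext <;> simp; rfl
    change Function.Injective (aeval (R := ZMod p) (φ (C X))).toRingHom
    rw [this]; exact hφ.comp C_injective
  · have : (aeval (R := ZMod p) (φ X)).toRingHom = φ.comp (mapRingHom C) := by ext <;> simp; rfl
    change Function.Injective (aeval (R := ZMod p) (φ X)).toRingHom
    rw [this]; exact hφ.comp (map_injective _ C_injective)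

end P4b

section P2
set_option maxSynthPendingDepth 8
set_option linter.unusedSimpArgs false

section
variable {W : Type} [Field W]

lemma factor_lc_unit {R : Type} [CommRing R] [IsDomain R] {G P : R[X]} (hG : G.Monic) (h : P ∣ G) :
    IsUnit P.leadingCoeff := by
  obtain ⟨Q, rfl⟩ := h
  rw [Monic, leadingCoeff_mul] at hG
  exact IsUnit.of_mul_eq_one _ hG

lemma factor_deg_pos {R : Type} [CommRing R] [IsDomain R] {G P : R[X]} (hG : G.Monic) (h : P ∣ G)
    (hP : ¬ IsUnit P) : 0 < P.natDegree := by
  by_contra h0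
  have h0 : P.natDegree = 0 := by omega
  have := factor_lc_unit hG h
  rw [eq_C_of_natDegree_eq_zero h0] at hP
  apply hP
  rw [leadingCoeff, h0] at this
  exact isUnit_C.2 this

lemma factor_root [IsAlgClosed W] {G P : W[X][X]} (hG : G.Monic) (h : P ∣ G)
    (hP : ¬ IsUnit P) (t : W) : ∃ z, (P.map (evalRingHom t)).eval z = 0 := by
  have h1 := factor_deg_pos hG h hP
  have h2 := factor_lc_unit hG h
  have h3 : (P.map (evalRingHom t)).natDegree = P.natDegree := by
    apply natDegree_map_of_leadingCoeff_ne_zero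
    exact (h2.map (evalRingHom t)).ne_zero
  refine IsAlgClosed.exists_root _ ?_
  intro h4
  have := natDegree_eq_zero_iff_degree_le_zero.2 h4.le
  omega
end

lemma irr_deg_eq {k0 W : Type} [Field k0] [Field W] [Algebra k0 W] [IsAlgClosed W] [Algebra.IsAlgebraic k0 W]
    (G : k0[X][X]) (hG : G.Monic) (τ : k0) (hirr : Irreducible (G.map (evalRingHom τ)))
    (hder : derivative (G.map (evalRingHom τ)) ≠ 0) (P Q : W[X][X]) (hP : Irreducible P) (hQ : Irreducible Q)
    (hPG : P ∣ G.map (mapRingHom (algebraMap k0 W))) (hQG : Q ∣ G.map (mapRingHom (algebraMap k0 W))) :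
    P.natDegree = Q.natDegree := by
  set GW := G.map (mapRingHom (algebraMap k0 W)) with hGW
  have hGm : GW.Monic := hG.map _
  set t := algebraMap k0 W τ
  have e1 : GW.map (evalRingHom t) = (G.map (evalRingHom τ)).map (algebraMap k0 W) := by
    rw [hGW, Polynomial.map_map, Polynomial.map_map]
    congr 1
    ext <;> simp [t]
  obtain ⟨z, hz⟩ := factor_root hGm hPG hP.not_isUnit t
  obtain ⟨z', hz'⟩ := factor_root hGm hQG hQ.not_isUnit t
  have hsep : (GW.map (evalRingHom t)).Separable := by
    rw [e1]; exact ((separable_iff_derivative_ne_zero hirr).2 hder).map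
  have hm1 : (G.map (evalRingHom τ)).Monic := hG.map _
  have root : ∀ P : W[X][X], P ∣ GW → ∀ z, (P.map (evalRingHom t)).eval z = 0 →
      minpoly k0 z = G.map (evalRingHom τ) := by
    intro P hP z hz
    refine (minpoly.eq_of_irreducible_of_monic hirr ?_ hm1).symm
    rw [← eval_map_algebraMap, ← e1]
    obtain ⟨Q, hQ⟩ := hP
    rw [hQ, Polynomial.map_mul, eval_mul, hz, zero_mul]
  have : IsAlgClosure k0 W := ⟨inferInstance, inferInstance⟩
  have : Normal k0 W := IsAlgClosure.normal k0 W
  obtain ⟨σ, hσ⟩ : ∃ σ : W ≃ₐ[k0] W, σ z = z' := by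
    have : IsConjRoot k0 z' z := by
      rw [isConjRoot_def, root P hPG z hz, root Q hQG z' hz']
    obtain ⟨σ, h⟩ := isConjRoot_iff_exists_algEquiv.1 this
    exact ⟨σ, h⟩
  let Φ : W[X][X] ≃+* W[X][X] := Polynomial.mapEquiv (Polynomial.mapEquiv σ.toRingEquiv)
  have hΦ : ∀ F, Φ F = F.map (mapRingHom (σ : W →+* W)) := fun F => rfl
  have hΦG : Φ GW = GW := by
    rw [hΦ, hGW, Polynomial.map_map, mapRingHom_comp]
    congr 2
    ext x; simp
  have hΦP : Irreducible (Φ P) := (MulEquiv.irreducible_iff Φ).2 hP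
  have hdeg : (Φ P).natDegree = P.natDegree := by
    rw [hΦ]; exact natDegree_map_eq_of_injective (map_injective _ σ.injective) _
  have hΦd : Φ P ∣ GW := by
    obtain ⟨H, hH⟩ := hPG
    refine ⟨H.map (mapRingHom (σ : W →+* W)), ?_⟩
    rw [← hΦG, hH, hΦ, hΦ, Polynomial.map_mul]
  have hΦz : ((Φ P).map (evalRingHom t)).eval z' = 0 := by
    have : (Φ P).map (evalRingHom t) = (P.map (evalRingHom t)).map (σ : W →+* W) := by
      rw [hΦ, Polynomial.map_map, Polynomial.map_map]
      congr 1
      ext <;> simp [t]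
    rw [this, ← hσ]
    have := hom_eval₂ (P.map (evalRingHom t)) (RingHom.id W) (σ : W →+* W) z
    rw [eval_map]
    simp only [RingHom.comp_id] at this
    erw [← this]
    change σ (eval z _) = 0
    rw [hz, map_zero]
  rw [← hdeg]
  by_contra hne
  have hcop : ¬ Associated (Φ P) Q := fun h => hne (natDegree_eq_of_degree_eq (degree_eq_degree_of_associated h))
  have hprod : Φ P * Q ∣ GW := by
    obtain ⟨H, hH⟩ := hΦd
    rw [hH] at hQG ⊢
    rcases hQ.prime.dvd_or_dvd hQG with h | h
    · exact absurd ((hQ.associated_of_dvd hΦP h).symm) hcop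
    · exact mul_dvd_mul_left _ h
  obtain ⟨H, hH⟩ := hprod
  rw [hH, Polynomial.map_mul, Polynomial.map_mul] at hsep
  have := hsep.of_mul_left.isCoprime
  obtain ⟨a, b, hab⟩ := this
  have := congrArg (eval z') hab
  simp [hΦz, hz'] at this

lemma irr_or_root {k0 W : Type} [Field k0] [Field W] [Algebra k0 W] [IsAlgClosed W] [Algebra.IsAlgebraic k0 W]
    (G : k0[X][X]) (hG : G.Monic) (τ : k0) (hirr : Irreducible (G.map (evalRingHom τ)))
    (hder : derivative (G.map (evalRingHom τ)) ≠ 0) (hr : G.natDegree.Prime) :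
    Irreducible (G.map (mapRingHom (algebraMap k0 W))) ∨
      ∃ ρ : W[X], (G.map (mapRingHom (algebraMap k0 W))).eval ρ = 0 := by
  have key := irr_deg_eq (W := W) G hG τ hirr hder
  set GW := G.map (mapRingHom (algebraMap k0 W)) with hGW
  have hGm : GW.Monic := hG.map _
  have hd : GW.natDegree = G.natDegree := hG.natDegree_map _
  obtain ⟨s, hs, hsG⟩ := WfDvdMonoid.exists_factors GW hGm.ne_zero
  have hdvd : ∀ P ∈ s, P ∣ GW := fun P hP => (Multiset.dvd_prod hP).trans hsG.dvd
  have hsd : s.prod.natDegree = G.natDegree := by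
    rw [← hd]; exact natDegree_eq_of_degree_eq (degree_eq_degree_of_associated hsG)
  have h0 : (0 : W[X][X]) ∉ s := fun h => (hs 0 h).ne_zero rfl
  rw [natDegree_multiset_prod _ h0] at hsd
  have hne : s ≠ 0 := by
    rintro rfl
    simp at hsd
    exact hr.ne_zero hsd.symm
  obtain ⟨P, hP⟩ := Multiset.exists_mem_of_ne_zero hne
  have : (s.map natDegree) = Multiset.replicate (Multiset.card s) P.natDegree := by
    rw [Multiset.eq_replicate]
    refine ⟨by simp, ?_⟩
    intro n hn
    obtain ⟨Q, hQ, rfl⟩ := Multiset.mem_map.1 hn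
    exact key Q P (hs Q hQ) (hs P hP) (hdvd Q hQ) (hdvd P hP)
  rw [this, Multiset.sum_replicate, smul_eq_mul] at hsd
  have hdv : P.natDegree ∣ G.natDegree := ⟨_, by rw [← hsd, mul_comm]⟩
  rcases (Nat.dvd_prime hr).1 hdv with h | h
  · right
    have hu := factor_lc_unit hGm (hdvd P hP)
    obtain ⟨u, hu⟩ := hu
    have hPe : P = C (u : W[X]) * X + C (P.coeff 0) := by
      conv_lhs => rw [eq_X_add_C_of_natDegree_le_one h.le]
      rw [hu, leadingCoeff, h]
    refine ⟨-((u⁻¹ : (W[X])ˣ) : W[X]) * P.coeff 0, ?_⟩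
    obtain ⟨H, hH⟩ := hdvd P hP
    rw [hH, eval_mul]
    have : eval (-((u⁻¹ : (W[X])ˣ) : W[X]) * P.coeff 0) P = 0 := by
      rw [hPe]; simp
    rw [this, zero_mul]
  · left
    rw [h] at hsd
    have hc : Multiset.card s = 1 := by
      have := hr.pos
      nlinarith
    obtain ⟨a, rfl⟩ := Multiset.card_eq_one.1 hc
    rw [Multiset.prod_singleton] at hsG
    exact hsG.irreducible (hs a (by simp))

end P2

section P2b
set_option maxSynthPendingDepth 8
set_option linter.unusedSimpArgs false

variable {L : Type} [Field L]

lemma irr_linear (G : L[X]) (hG : G.Monic) (hd : 0 < G.natDegree) (m0 : L) (hm : m0 ≠ 0) :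
    Irreducible ((G.map C - C (C m0 * X) : L[X][X]).map (algebraMap L[X] (FractionRing L[X]))) := by
  have hmon : (G.map C - C (C m0 * X) : L[X][X]).Monic := by
    apply Monic.sub_of_left (hG.map _)
    rw [hG.degree_map, degree_eq_natDegree hG.ne_zero]
    refine lt_of_le_of_lt degree_C_le ?_
    exact_mod_cast hd
  rw [← hmon.irreducible_iff_irreducible_map_fraction_map]
  rw [← MulEquiv.irreducible_iff (Bivariate.swap (R := L))]
  have : Bivariate.swap (G.map C - C (C m0 * X) : L[X][X]) = C (C (-m0)) * (X - C (C m0⁻¹ * G)) := by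
    rw [_root_.map_sub, Bivariate.swap_map_C, C_mul, _root_.map_mul, Bivariate.swap_C_C, Bivariate.swap_X, mul_sub,
      ← C_mul, ← mul_assoc, ← C_mul, neg_mul, mul_inv_cancel₀ hm]
    simp
    ring
  rw [this]
  have hu : IsUnit (C (C (-m0)) : L[X][X]) := isUnit_C.2 (isUnit_C.2 (by simpa using hm))
  rw [irreducible_isUnit_mul hu]
  exact irreducible_X_sub_C _

lemma exists_tau [Infinite L] (gt : L[X][X]) (hder : derivative gt ≠ 0) (m : L[X]) (hm : m ≠ 0) :
    ∃ τ : L, m.eval τ ≠ 0 ∧ derivative (gt.map (evalRingHom τ)) ≠ 0 := by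
  obtain ⟨i, hi⟩ : ∃ i, (derivative gt).coeff i ≠ 0 := by
    by_contra h; push Not at h; exact hder (Polynomial.ext (by simpa using h))
  have h1 : m * (derivative gt).coeff i ≠ 0 := mul_ne_zero hm hi
  obtain ⟨τ, hτ⟩ : ∃ τ, (m * (derivative gt).coeff i).eval τ ≠ 0 := by
    by_contra h; push Not at h
    exact h1 (Polynomial.funext (by simpa using h))
  rw [eval_mul] at hτ
  refine ⟨τ, left_ne_zero_of_mul hτ, ?_⟩
  intro h
  apply right_ne_zero_of_mul hτ
  rw [derivative_map] at h
  have := congrArg (fun P => P.coeff i) h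
  simpa using this

variable (L) in
abbrev K0 := FractionRing L[X]
variable (L) in
abbrev WW := AlgebraicClosure (FractionRing L[X])

variable (L) in
noncomputable def jX : L[X] →+* WW L := (algebraMap (K0 L) (WW L)).comp (algebraMap L[X] (K0 L))

lemma jX_inj : Function.Injective (jX L) :=
  (algebraMap (K0 L) (WW L)).injective.comp (IsFractionRing.injective _ _)

lemma irr_or_root' [Infinite L] (gt : L[X][X]) (hg : gt.Monic) (hr : gt.natDegree.Prime)
    (hder : derivative gt ≠ 0) (m : L[X]) (hm : m ≠ 0) :
    Irreducible (gt.map (mapRingHom ((jX L).comp C)) - C (C (jX L X) * m.map ((jX L).comp C))) ∨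
    ∃ ρ, (gt.map (mapRingHom ((jX L).comp C))).eval ρ = (C (jX L X) * m.map ((jX L).comp C)) := by
  obtain ⟨τ, h1, h2⟩ := exists_tau gt hder m hm
  let i0 : L[X] →+* K0 L := algebraMap L[X] (K0 L)
  let G : (K0 L)[X][X] := gt.map (mapRingHom (i0.comp C)) - C (C (i0 X) * m.map (i0.comp C))
  have hdm : (gt.map (mapRingHom (i0.comp C))).degree = gt.natDegree := by
    rw [hg.degree_map, degree_eq_natDegree hg.ne_zero]
  have hlt : (C (C (i0 X) * m.map (i0.comp C))).degree < (gt.map (mapRingHom (i0.comp C))).degree := by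
    rw [hdm]
    refine lt_of_le_of_lt degree_C_le ?_
    exact_mod_cast hr.pos
  have hG : G.Monic := Monic.sub_of_left (hg.map _) hlt
  have hGd : G.natDegree = gt.natDegree := by
    rw [natDegree_eq_of_degree_eq (degree_sub_eq_left_of_degree_lt hlt), hg.natDegree_map]
  have e1 : G.map (evalRingHom (i0 (C τ))) =
      ((gt.map (evalRingHom τ)).map C - C (C (m.eval τ) * X) : L[X][X]).map i0 := by
    simp only [G, Polynomial.map_sub, map_C, Polynomial.map_map]
    congr 1
    · congr 1
      ext <;> simp
    · congr 1
      simp only [coe_evalRingHom, eval_mul, eval_C, _root_.map_mul]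
      rw [mul_comm]
      congr 1
      have : i0 (C τ) = (i0.comp C) τ := rfl
      rw [this, eval_map_apply]; rfl
  have e2 : derivative (G.map (evalRingHom (i0 (C τ)))) = ((derivative (gt.map (evalRingHom τ))).map C).map i0 := by
    rw [e1, derivative_map, derivative_sub, derivative_C, sub_zero, derivative_map]
  have key := irr_or_root (W := WW L) G hG (i0 (C τ)) (by
    rw [e1]; exact irr_linear _ (hg.map _) (by rw [hg.natDegree_map]; exact hr.pos) _ h1) (by
    rw [e2, Ne, Polynomial.map_eq_zero_iff (IsFractionRing.injective _ _), Polynomial.map_eq_zero_iff C_injective]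
    exact h2) (by rw [hGd]; exact hr)
  have e3 : G.map (mapRingHom (algebraMap (K0 L) (WW L))) =
      gt.map (mapRingHom ((jX L).comp C)) - C (C (jX L X) * m.map ((jX L).comp C)) := by
    simp only [G, Polynomial.map_sub, map_C, Polynomial.map_map, mapRingHom_comp]
    simp only [coe_mapRingHom, Polynomial.map_mul, map_C, Polynomial.map_map]
    rfl
  rw [e3] at key
  refine key.imp id ?_
  rintro ⟨ρ, h⟩
  refine ⟨ρ, ?_⟩
  rw [eval_sub, eval_C, sub_eq_zero] at h
  exact h

lemma exists_shift (κ : L) : ∃ σ : WW L ≃+* WW L, ∀ P : L[X], σ (jX L P) = jX L (P.comp (X + C κ)) := by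
  let e1 : K0 L ≃+* K0 L := IsFractionRing.ringEquivOfRingEquiv (algEquivAevalXAddC κ).toRingEquiv
  refine ⟨IsAlgClosure.equivOfEquiv (WW L) (WW L) e1, fun P => ?_⟩
  simp only [jX, RingHom.comp_apply]
  rw [IsAlgClosure.equivOfEquiv_algebraMap]
  congr 1
  simp only [e1]
  rw [IsFractionRing.ringEquivOfRingEquiv_algebraMap]
  congr 1

end P2b

section P2c
set_option maxSynthPendingDepth 8
set_option linter.unusedSimpArgs false

lemma coeff_in_span {W : Type} [Field W] (m : W[X]) (H : W[X][X]) (S : Set W) (hS : S.Infinite)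
    (h : ∀ ω ∈ S, ∃ b, H.eval (C ω) = C b * m) (j : ℕ) : ∃ a, H.coeff j = C a * m := by
  by_contra hc
  have hns : H.coeff j ∉ Submodule.span W {m} := by
    intro hm
    obtain ⟨a, ha⟩ := Submodule.mem_span_singleton.1 hm
    exact hc ⟨a, by rw [← ha, smul_eq_C_mul]⟩
  obtain ⟨φ, h1, h2⟩ := Submodule.exists_le_ker_of_notMem hns
  have hm : φ m = 0 := h2 (Submodule.mem_span_singleton_self m)
  let Φ : W[X] := ∑ i ∈ Finset.range (H.natDegree + 1), C (φ (H.coeff i)) * X ^ i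
  have hΦ : Φ = 0 := by
    refine eq_zero_of_infinite_isRoot Φ (hS.mono ?_)
    intro ω hω
    obtain ⟨b, hb⟩ := h ω hω
    have : φ (H.eval (C ω)) = 0 := by rw [hb, ← smul_eq_C_mul, map_smul, hm, smul_zero]
    rw [eval_eq_sum_range, map_sum] at this
    change Φ.eval ω = 0
    rw [← this]
    simp only [Φ, eval_finsetSum]
    refine Finset.sum_congr rfl fun i _ => ?_
    rw [← C_pow, mul_comm (H.coeff i), ← smul_eq_C_mul (ω ^ i), map_smul, eval_mul, eval_C, eval_pow, eval_X, smul_eq_mul, mul_comm]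
  have hj : Φ.coeff j = φ (H.coeff j) := by
    simp only [Φ, finsetSum_coeff, coeff_C_mul_X_pow]
    rw [Finset.sum_ite_eq]
    split_ifs with hj
    · rfl
    · rw [coeff_eq_zero_of_natDegree_lt (by simpa using hj), map_zero]
  rw [hΦ, coeff_zero] at hj
  exact h1 hj.symm

variable {L : Type} [Field L]

lemma comp_of_root [Infinite L] (gt : L[X][X]) (m : L[X]) (hm : m ≠ 0) (ρ0 : (WW L)[X])
    (hρ : (gt.map (mapRingHom ((jX L).comp C))).eval ρ0 = (C (jX L X) * m.map ((jX L).comp C))) :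
    ∃ (η : (WW L)[X]) (h : (WW L)[X]), η ≠ 0 ∧
      (gt.map (mapRingHom ((jX L).comp C))).comp (C ρ0 + C η * X) = C (m.map ((jX L).comp C)) * h.map C := by
  set ι := (jX L).comp C with hι
  have hιinj : Function.Injective ι := ι.injective
  set gW := gt.map (mapRingHom ι) with hgW
  set mW := m.map ι with hmW
  have hm0 : mW ≠ 0 := by rwa [hmW, Ne, Polynomial.map_eq_zero]
  have hex : ∀ κ : L, ∃ ρ : (WW L)[X], gW.eval ρ = C (jX L X + ι κ) * mW := by
    intro κ
    obtain ⟨σ, hσ⟩ := exists_shift κ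
    have hσι : (σ : WW L →+* WW L).comp ι = ι := by
      ext x; simp [hι, hσ]
    refine ⟨ρ0.map (σ : WW L →+* WW L), ?_⟩
    have h1 : (gW.eval ρ0).map (σ : WW L →+* WW L) = gW.eval (ρ0.map (σ : WW L →+* WW L)) := by
      have := eval₂_at_apply (p := gW) (mapRingHom (σ : WW L →+* WW L)) ρ0
      rw [← eval_map, hgW, Polynomial.map_map, mapRingHom_comp, hσι] at this
      exact this.symm
    rw [← h1, hρ, Polynomial.map_mul, map_C, hmW, Polynomial.map_map, hσι]
    congr 2
    simp [hσ, hι]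
  choose ρ hρκ using hex
  have hdvd : ∀ κ : {κ : L // κ ≠ 0}, ρ κ - ρ0 ∣ mW := by
    intro κ
    have h1 := sub_dvd_eval_sub (ρ κ) ρ0 gW
    rw [hρκ, hρ, C_add, add_mul, add_sub_cancel_left] at h1
    have hu : IsUnit (C (ι κ) : (WW L)[X]) := isUnit_C.2 (by
      rw [isUnit_iff_ne_zero, Ne, map_eq_zero]; exact κ.2)
    exact (hu.dvd_mul_left).1 h1
  have : Fintype {x : Associates (WW L)[X] // x ∣ Associates.mk mW} :=
    UniqueFactorizationMonoid.fintypeSubtypeDvd _ (by simpa using hm0)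
  let F : {κ : L // κ ≠ 0} → {x : Associates (WW L)[X] // x ∣ Associates.mk mW} :=
    fun κ => ⟨Associates.mk (ρ κ - ρ0), Associates.mk_le_mk_of_dvd (hdvd κ)⟩
  have : Infinite {κ : L // κ ≠ 0} := (Set.finite_singleton (0 : L)).infinite_compl.to_subtype
  obtain ⟨y, hy⟩ := Finite.exists_infinite_fiber F
  obtain ⟨κ1, hκ1⟩ := hy.nonempty
  have hη0 : ρ κ1 - ρ0 ≠ 0 := by
    intro h0; have := hdvd κ1; rw [h0, zero_dvd_iff] at this; exact hm0 this
  have hω : ∀ κ : F ⁻¹' {y}, ∃ ω : WW L, ρ κ = ρ0 + (ρ κ1 - ρ0) * C ω := by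
    intro κ
    have e : F κ = F κ1 := by rw [κ.2, hκ1]
    have e' : Associates.mk (ρ κ - ρ0) = Associates.mk (ρ κ1 - ρ0) := congrArg Subtype.val e
    obtain ⟨u, hu⟩ := (Associates.mk_eq_mk_iff_associated.1 e').symm
    obtain ⟨w, hw, hw'⟩ := Polynomial.isUnit_iff.1 u.isUnit
    refine ⟨w, ?_⟩
    rw [hw', hu]; ring
  choose ω hω using hω
  set H := gW.comp (C ρ0 + C (ρ κ1 - ρ0) * X) with hH
  have hHe : ∀ κ : F ⁻¹' {y}, H.eval (C (ω κ)) = C (jX L X + ι κ) * mW := by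
    intro κ
    rw [← hρκ, hH, eval_comp]
    congr 1
    rw [hω]; simp
  have hinj : Function.Injective ω := by
    intro κ κ' h
    have := (hHe κ).symm.trans ((congrArg (fun z => H.eval (C z)) h).trans (hHe κ'))
    have := C_injective (mul_right_cancel₀ hm0 this)
    exact Subtype.ext (Subtype.ext (hιinj (add_left_cancel this)))
  have hS : (Set.range ω).Infinite := Set.infinite_range_of_injective hinj
  have hco := coeff_in_span mW H (Set.range ω) hS (by rintro _ ⟨κ, rfl⟩; exact ⟨_, hHe κ⟩)
  choose a ha using hco
  refine ⟨ρ κ1 - ρ0, ∑ i ∈ Finset.range (H.natDegree + 1), C (a i) * X ^ i, hη0, ?_⟩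
  change H = _
  ext1 j
  rw [coeff_C_mul, coeff_map, finsetSum_coeff]
  simp only [coeff_C_mul_X_pow]
  rw [Finset.sum_ite_eq]
  split_ifs with hj
  · rw [ha, mul_comm]
  · rw [coeff_eq_zero_of_natDegree_lt (by simpa using hj)]; simp

end P2c

section P2d
set_option maxSynthPendingDepth 8
set_option linter.unusedSimpArgs false

lemma const_of_root {W M : Type} [Field W] [IsAlgClosed W] [Field M] [Algebra W M] (P : W[X]) (hP : P ≠ 0) (x : M)
    (hx : aeval x P = 0) : ∃ w : W, x = algebraMap W M w := by
  obtain ⟨w, hw⟩ := (IsAlgClosed.splits P).mem_range_of_isRoot hP (i := algebraMap W M) (x := x)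
    (by rwa [IsRoot, eval_map_algebraMap])
  exact ⟨w, hw.symm⟩

lemma coprime_homog {W : Type} [Field W] (h n d : W[X]) (p : ℕ) (hh : h.coeff p ≠ 0) (hc : IsCoprime n d) :
    IsCoprime d (∑ i ∈ Finset.range (p + 1), C (h.coeff i) * n ^ i * d ^ (p - i)) := by
  rw [Finset.sum_range_succ]
  have h1 : d ∣ ∑ i ∈ Finset.range p, C (h.coeff i) * n ^ i * d ^ (p - i) := by
    refine Finset.dvd_sum fun i hi => ?_
    rw [Finset.mem_range] at hi
    exact Dvd.dvd.mul_left (dvd_pow_self d (by omega)) _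
  obtain ⟨e, he⟩ := h1
  rw [he]
  rw [IsCoprime.mul_add_left_right_iff]
  simp only [Nat.sub_self, pow_zero, mul_one]
  rw [isCoprime_mul_unit_left_right (isUnit_C.2 hh.isUnit)]
  exact (hc.pow_left).symm

lemma dvd_B {W : Type} [Field W] (p : ℕ) (hp : p ≠ 0) (h : W[X]) (hd : h.natDegree = p) (G : RatFunc W) (α β : W)
    (hβ : β ≠ 0) (B : ℕ) (hB : 0 < B)
    (hG : aeval G h = RatFunc.C α * RatFunc.X ^ B + RatFunc.C β * (RatFunc.X ^ B)⁻¹) : p ∣ B := by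
  set n := G.num
  set d := G.denom
  have hd0 : d ≠ 0 := G.denom_ne_zero
  have hc : IsCoprime n d := G.isCoprime_num_denom
  have hh : h.coeff p ≠ 0 := by
    rw [← hd]; intro h0
    rw [coeff_natDegree, leadingCoeff_eq_zero] at h0
    rw [h0, natDegree_zero] at hd; exact hp hd.symm
  have hN := coprime_homog h n d p hh hc
  set N := ∑ i ∈ Finset.range (p + 1), C (h.coeff i) * n ^ i * d ^ (p - i) with hNdef
  have hdM : algebraMap W[X] (RatFunc W) d ≠ 0 := by
    simpa using hd0
  have hX : (RatFunc.X : RatFunc W) ≠ 0 := RatFunc.X_ne_zero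
  have e1 : algebraMap W[X] (RatFunc W) N = aeval G h * algebraMap W[X] (RatFunc W) d ^ p := by
    rw [aeval_eq_sum_range' (n := p + 1) (by omega), hNdef, map_sum, Finset.sum_mul]
    refine Finset.sum_congr rfl fun i hi => ?_
    rw [Finset.mem_range] at hi
    have : G = algebraMap W[X] (RatFunc W) n / algebraMap W[X] (RatFunc W) d := (RatFunc.num_div_denom G).symm
    rw [this, Algebra.smul_def, _root_.map_mul, _root_.map_mul, map_pow, map_pow, RatFunc.algebraMap_C, div_pow]
    have e2 : algebraMap W[X] (RatFunc W) d ^ p = algebraMap W[X] (RatFunc W) d ^ i * algebraMap W[X] (RatFunc W) d ^ (p - i) := by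
      rw [← pow_add]; congr 1; omega
    rw [e2, RatFunc.algebraMap_eq_C]
    field_simp
  have e2 : N * X ^ B = d ^ p * (C α * X ^ (2 * B) + C β) := by
    apply IsFractionRing.injective W[X] (RatFunc W)
    simp only [_root_.map_mul, _root_.map_add, map_pow, RatFunc.algebraMap_C, RatFunc.algebraMap_X]
    rw [e1, hG, two_mul, pow_add]
    field_simp
  have h1 : d ^ p ∣ X ^ B := by
    refine (hN.pow_left (m := p)).dvd_of_dvd_mul_left (z := X ^ B) (y := N) ?_
    rw [e2]; exact dvd_mul_right _ _
  have hcx : IsCoprime (X ^ B) (C α * X ^ (2 * B) + C β : W[X]) := by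
    have : IsCoprime (X : W[X]) (C α * X ^ (2 * B) + C β) := by
      refine ⟨- C (α * β⁻¹) * X ^ (2 * B - 1), C β⁻¹, ?_⟩
      have : (X : W[X]) ^ (2 * B) = X ^ (2 * B - 1) * X := by rw [← pow_succ]; congr 1; omega
      have h2 : (C β⁻¹ * C β : W[X]) = 1 := by rw [← C_mul, inv_mul_cancel₀ hβ, C_1]
      rw [this, mul_add, h2, C_mul]; ring
    exact this.pow_left
  have h2 : X ^ B ∣ d ^ p := by
    refine hcx.dvd_of_dvd_mul_right ?_
    rw [← e2]; exact dvd_mul_left _ _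
  have h3 : d ∣ X ^ B := (dvd_pow_self d hp).trans h1
  obtain ⟨i, -, hi⟩ := (dvd_prime_pow prime_X B).1 h3
  have h4 : Associated (d ^ p) (X ^ (i * p)) := by rw [pow_mul]; exact hi.pow_pow
  have h5 := h2.trans h4.dvd
  have h6 := h4.symm.dvd.trans h1
  rw [pow_dvd_pow_iff X_ne_zero not_isUnit_X] at h5 h6
  exact ⟨i, by rw [mul_comm]; omega⟩

lemma no_comp {W : Type} [Field W] [IsAlgClosed W] (p : ℕ) [Fact p.Prime] [CharP W p] (B : ℕ) : 0 < B → ∀ (h : W[X]) (hd : h.natDegree = p)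
    (hder : derivative h ≠ 0) (G : RatFunc W) (α β : W) (hα : α ≠ 0)
    (hβ : β ≠ 0) (hG : aeval G h = RatFunc.C α * RatFunc.X ^ B + RatFunc.C β * (RatFunc.X ^ B)⁻¹), False := by
  induction B using Nat.strong_induction_on with
  | _ B ih =>
  intro hB h hd hder G α β hα hβ hG
  have hp : p.Prime := Fact.out
  have : CharP (RatFunc W) p := charP_of_injective_algebraMap (algebraMap W (RatFunc W)).injective p
  obtain ⟨j, rfl⟩ := dvd_B p hp.ne_zero h hd G α β hβ B hB hG
  obtain ⟨α1, hα1⟩ := IsAlgClosed.exists_pow_nat_eq α hp.pos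
  obtain ⟨β1, hβ1⟩ := IsAlgClosed.exists_pow_nat_eq β hp.pos
  have hα0 : α1 ≠ 0 := by rintro rfl; rw [zero_pow hp.ne_zero] at hα1; exact hα hα1.symm
  have hβ0 : β1 ≠ 0 := by rintro rfl; rw [zero_pow hp.ne_zero] at hβ1; exact hβ hβ1.symm
  set R : RatFunc W := RatFunc.C α1 * RatFunc.X ^ j + RatFunc.C β1 * (RatFunc.X ^ j)⁻¹ with hR
  have hRp : R ^ p = RatFunc.C α * RatFunc.X ^ (p * j) + RatFunc.C β * (RatFunc.X ^ (p * j))⁻¹ := by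
    rw [hR, add_pow_char, mul_pow, mul_pow, ← map_pow, ← map_pow, hα1, hβ1, inv_pow, ← pow_mul, mul_comm j p]
  rw [← hRp] at hG
  set h1 : W[X] := h.map ((frobeniusEquiv W p).symm : W →+* W) with hh1
  have hfr : h1.map (frobenius W p) = h := by
    rw [hh1, Polynomial.map_map]
    have : (frobenius W p).comp ((frobeniusEquiv W p).symm : W →+* W) = RingHom.id W := by
      ext x; exact frobenius_apply_frobeniusEquiv_symm W p x
    rw [this, Polynomial.map_id]
  have hd1 : h1.natDegree = p := by rw [hh1, natDegree_map, hd]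
  have hder1 : derivative h1 ≠ 0 := by
    intro h0; apply hder
    rw [← hfr, derivative_map, h0, Polynomial.map_zero]
  have hcomm : (frobenius (RatFunc W) p).comp (algebraMap W (RatFunc W)) = (algebraMap W (RatFunc W)).comp (frobenius W p) := by
    ext x; simp [frobenius_def]
  by_cases hG1 : ∃ G1, G1 ^ p = G
  · obtain ⟨G1, rfl⟩ := hG1
    refine ih j (by nlinarith [hp.two_le, Nat.pos_of_mul_pos_left hB]) (Nat.pos_of_mul_pos_left hB) h1 hd1 hder1 G1 α1 β1 hα0 hβ0 ?_
    apply frobenius_inj (RatFunc W) p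
    rw [← hR]
    change _ = R ^ p
    rw [← hG, aeval_def, aeval_def, hom_eval₂, hcomm, ← eval₂_map, hfr]; rfl
  · push Not at hG1
    have hirr : Irreducible (X ^ p - C G : (RatFunc W)[X]) := X_pow_sub_C_irreducible_of_prime hp hG1
    set H : (RatFunc W)[X] := h1.map (algebraMap W (RatFunc W)) - C R with hH
    have hev : H.eval₂ (frobenius (RatFunc W) p) G = 0 := by
      rw [hH, eval₂_sub, eval₂_C, eval₂_map, hcomm, ← eval₂_map, hfr, ← aeval_def, hG]
      simp [frobenius_def]
    have hdvd : X ^ p - C G ∣ H := by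
      rw [hirr.dvd_iff_not_isCoprime]
      rintro ⟨a, b, hab⟩
      have := congrArg (eval₂ (frobenius (RatFunc W) p) G) hab
      rw [eval₂_add, eval₂_mul, eval₂_mul, hev] at this
      simp [frobenius_def] at this
    have hdH : H.natDegree = p := by rw [hH, natDegree_sub_C, natDegree_map, hd1]
    obtain ⟨c, hc⟩ := hdvd
    have hH0 : H ≠ 0 := by rintro h0; rw [h0, natDegree_zero] at hdH; exact hp.ne_zero hdH.symm
    have hc0 : c ≠ 0 := by rintro rfl; rw [mul_zero] at hc; exact hH0 hc
    have hcd : c.natDegree = 0 := by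
      have := congrArg natDegree hc
      rw [natDegree_mul hirr.ne_zero hc0, natDegree_X_pow_sub_C, hdH] at this
      omega
    rw [eq_C_of_natDegree_eq_zero hcd] at hc
    have h2 : derivative H = 0 := by
      rw [hc, derivative_mul, derivative_sub, derivative_X_pow, CharP.cast_eq_zero]; simp
    rw [hH, derivative_sub, derivative_C, sub_zero, derivative_map, Polynomial.map_eq_zero] at h2
    exact hder1 h2

end P2d

section P2e
set_option maxSynthPendingDepth 8
set_option linter.unusedSimpArgs false

lemma tr_inj {W M : Type} [Field W] [IsAlgClosed W] [Field M] [Algebra W M] (x : M) (hx : ∀ w, x ≠ algebraMap W M w) :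
    Function.Injective (aeval x : W[X] →ₐ[W] M) := by
  rw [injective_iff_map_eq_zero]
  intro P hP
  by_contra h0
  obtain ⟨w, hw⟩ := const_of_root P h0 x hP
  exact hx w hw

lemma ratX_inv_ne {W : Type} [Field W] (w : W) : (RatFunc.X : RatFunc W)⁻¹ ≠ algebraMap W (RatFunc W) w := by
  intro h
  have h1 : (RatFunc.X : RatFunc W) * algebraMap W (RatFunc W) w = 1 := by
    rw [← h, mul_inv_cancel₀ RatFunc.X_ne_zero]
  rw [RatFunc.algebraMap_eq_C, ← RatFunc.algebraMap_C, ← RatFunc.algebraMap_X, ← _root_.map_mul, ← map_one (algebraMap W[X] (RatFunc W))] at h1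
  have := IsFractionRing.injective W[X] (RatFunc W) h1
  have := congrArg (fun P => P.coeff 0) this
  simp at this

lemma ratT_ne {W : Type} [Field W] (w : W) : (RatFunc.X + (RatFunc.X)⁻¹ : RatFunc W) ≠ algebraMap W (RatFunc W) w := by
  intro h
  have h1 : (RatFunc.X : RatFunc W) ^ 2 + 1 = algebraMap W (RatFunc W) w * RatFunc.X := by
    rw [← h, add_mul, inv_mul_cancel₀ RatFunc.X_ne_zero]; ring
  rw [RatFunc.algebraMap_eq_C, ← RatFunc.algebraMap_C, ← RatFunc.algebraMap_X, ← _root_.map_mul, ← map_one (algebraMap W[X] (RatFunc W)), ← map_pow, ← map_add] at h1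
  have := IsFractionRing.injective W[X] (RatFunc W) h1
  have := congrArg (fun P => P.coeff 2) this
  simp [coeff_one, coeff_X] at this

lemma exists_sigma (W : Type) [Field W] [IsAlgClosed W] : ∃ σ : RatFunc W →+* RatFunc W, (∀ w, σ (algebraMap W (RatFunc W) w) = algebraMap W (RatFunc W) w) ∧
    σ RatFunc.X = RatFunc.X⁻¹ := by
  have hinj := tr_inj (W := W) (RatFunc.X : RatFunc W)⁻¹ ratX_inv_ne
  refine ⟨RatFunc.liftRingHom (aeval (RatFunc.X : RatFunc W)⁻¹ : W[X] →ₐ[W] RatFunc W).toRingHom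
    (nonZeroDivisors_le_comap_nonZeroDivisors_of_injective _ hinj), fun w => ?_, ?_⟩
  · rw [RatFunc.algebraMap_eq_C, ← RatFunc.algebraMap_C, RatFunc.liftRingHom_algebraMap]
    simp
  · refine Eq.trans (congrArg _ RatFunc.algebraMap_X.symm) ?_
    rw [RatFunc.liftRingHom_algebraMap]
    simp

lemma h_facts {W : Type} [Field W] (gW : W[X][X]) (ρ η mW h : W[X]) (hη : η ≠ 0) (hm : mW ≠ 0) (hder : derivative gW ≠ 0)
    (hc : gW.comp (C ρ + C η * X) = C mW * h.map C) : h.natDegree = gW.natDegree ∧ derivative h ≠ 0 := by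
  have hd1 : (C ρ + C η * X : W[X][X]).natDegree = 1 := by rw [add_comm]; exact natDegree_linear hη
  constructor
  · have := congrArg natDegree hc
    rw [natDegree_comp, hd1, natDegree_C_mul hm, natDegree_map_eq_of_injective C_injective] at this
    omega
  · intro h0
    have := congrArg derivative hc
    rw [derivative_comp, derivative_C_mul, derivative_map, h0, Polynomial.map_zero, mul_zero] at this
    rcases mul_eq_zero.1 this with h1 | h1
    · simp at h1; exact hη h1
    · rw [comp_eq_zero_iff] at h1
      rcases h1 with h1 | ⟨-, h1⟩
      · exact hder h1
      · rw [h1, natDegree_C] at hd1; omega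

lemma contra {p : ℕ} [Fact p.Prime] {l : List (ℤ × ℤ)} {f : (ZMod p)[X][X][X]}
    (hf : ∀ (S : Type) [CommRing S] [Algebra (ZMod p) S] (x y : SL2 S),
      trace (wordEval (lword l) x y).1 = ev3 (trace x.1) (trace y.1) (trace (x.1*y.1)) f)
    (hl : ∀ c ∈ l, c.1 ≠ 0 ∧ c.2 ≠ 0) (hl0 : l.length.Prime)
    (hB : (l.map Prod.snd).sum = 0 ∨ l.length = p)
    {W : Type} [Field W] [IsAlgClosed W] [Algebra (ZMod p) W] (j : (ZMod p)[X] →+* W) (hj : Function.Injective j)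
    (hder : derivative (integralNormalization f) ≠ 0) (ρ η h : W[X]) (hη : η ≠ 0)
    (hc : ((integralNormalization f).map (mapRingHom j)).comp (C ρ + C η * X)
      = C ((f.leadingCoeff ^ (l.length - 1)).map j) * h.map C) : False := by
  have hfd := tracePoly_natDegree hf hl hl0.one_lt.le
  have hf0 : f ≠ 0 := by rintro rfl; rw [natDegree_zero] at hfd; have := hl0.pos; omega
  have hmj : Function.Injective (mapRingHom j) := map_injective j hj
  have hℓ : f.leadingCoeff.map j ≠ 0 := (Polynomial.map_ne_zero_iff hj).2 (leadingCoeff_ne_zero.2 hf0)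
  have hgd : (integralNormalization f).natDegree = l.length := by
    rw [natDegree_integralNormalization, hfd]
  obtain ⟨hd, hder'⟩ := h_facts _ ρ η _ h hη (by rw [Polynomial.map_pow]; exact pow_ne_zero _ hℓ) (by
    rw [derivative_map, Ne, (map_injective _ hmj).eq_iff' (Polynomial.map_zero _)]; exact hder) hc
  rw [natDegree_map_eq_of_injective hmj, hgd] at hd
  obtain ⟨α, hα0, hα⟩ := exists_add_inv (j X)
  have htr : Transcendental (ZMod p) (j X) := by
    rw [transcendental_iff]
    intro P hP
    have e1 : (aeval (R := ZMod p) (j X)).toRingHom = j := by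
      apply Polynomial.ringHom_ext'
      · exact Subsingleton.elim _ _
      · simp
    have hP : (aeval (R := ZMod p) (j X)).toRingHom P = 0 := hP
    rw [e1] at hP
    exact (map_eq_zero_iff j hj).1 hP
  have hα1 := not_root_of_unity hα htr
  let _ : Algebra (ZMod p) (RatFunc W) := ((algebraMap W (RatFunc W)).comp (algebraMap (ZMod p) W)).toAlgebra
  set cc := algebraMap W (RatFunc W) with hcc
  set T : RatFunc W := RatFunc.X + RatFunc.X⁻¹ with hT
  have hTinj := tr_inj (W := W) T ratT_ne
  set evT : W[X] →+* RatFunc W := (aeval T : W[X] →ₐ[W] RatFunc W).toRingHom with hevT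
  have hTinj : Function.Injective evT := hTinj
  have hX0 : (RatFunc.X : RatFunc W) ≠ 0 := RatFunc.X_ne_zero
  have hcα : cc α ≠ 0 := by simpa using hα0
  set U : RatFunc W := cc α * RatFunc.X + (cc α * RatFunc.X)⁻¹ with hU
  set Φ : (ZMod p)[X][X] →+* RatFunc W := evT.comp (mapRingHom j) with hΦ
  have hΦ1 : Φ = eval₂RingHom (eval₂RingHom (algebraMap (ZMod p) (RatFunc W)) (cc α + (cc α)⁻¹)) T := by
    apply Polynomial.ringHom_ext'
    · apply Polynomial.ringHom_ext'
      · exact Subsingleton.elim _ _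
      · simp [hΦ, hevT, hα, hcc]
    · simp [hΦ, hevT]
  have hfU : f.eval₂ Φ U = cc α ^ (l.map Prod.fst).sum * RatFunc.X ^ (l.map Prod.snd).sum
      + (cc α ^ (l.map Prod.fst).sum * RatFunc.X ^ (l.map Prod.snd).sum)⁻¹ := by
    rw [← tracePoly_diag hf (RatFunc W) (cc α) RatFunc.X hcα hX0, hΦ1]
    rfl
  have hηT : evT η ≠ 0 := (map_ne_zero_iff evT hTinj).2 hη
  set ℓ := evT (f.leadingCoeff.map j) with hℓd
  have hℓT : ℓ ≠ 0 := (map_ne_zero_iff evT hTinj).2 hℓ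
  set z : RatFunc W := (ℓ * U - evT ρ) / evT η with hz
  have hz1 : evT ρ + evT η * z = ℓ * U := by rw [hz]; field_simp; ring
  have hzh : aeval z h = f.eval₂ Φ U := by
    have e1 := integralNormalization_eval₂_leadingCoeff_mul (p := f) (by rw [hfd]; exact hl0.one_lt.le) Φ U
    have e2 := congrArg (eval₂ evT z) hc
    rw [eval₂_comp, eval₂_map, eval₂_mul, eval₂_C, eval₂_add, eval₂_mul, eval₂_C, eval₂_C, eval₂_X, hz1, eval₂_map,
      Polynomial.map_pow, map_pow] at e2
    have e3 : evT.comp C = cc := by ext x; simp [hevT, hcc]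
    rw [e3] at e2
    change eval₂ Φ (ℓ * U) _ = ℓ ^ _ * _ at e2
    change eval₂ Φ (ℓ * U) _ = ℓ ^ _ * _ at e1
    rw [e1, hfd] at e2
    exact (mul_left_cancel₀ (pow_ne_zero _ hℓT) e2).symm
  rw [hfU] at hzh
  by_cases hB0 : (l.map Prod.snd).sum = 0
  · rw [hB0, zpow_zero, mul_one, ← map_zpow₀, ← map_inv₀, ← map_add] at hzh
    set c := α ^ (l.map Prod.fst).sum + (α ^ (l.map Prod.fst).sum)⁻¹
    obtain ⟨w, hw⟩ := const_of_root (h - C c) (by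
      intro h0
      have : (h - C c).natDegree = l.length := by rw [natDegree_sub_C, hd]
      rw [h0, natDegree_zero] at this; have := hl0.pos; omega) z (by simp [hzh, hcc])
    obtain ⟨σ, hσ1, hσ2⟩ := exists_sigma W
    have hσ : σ.comp evT = evT := by
      apply Polynomial.ringHom_ext'
      · ext x; simpa [hevT, RatFunc.algebraMap_eq_C] using hσ1 x
      · simp [hevT, hT, hσ2, add_comm]
    have hσ' : ∀ P, σ (evT P) = evT P := fun P => by rw [← RingHom.comp_apply, hσ]
    have e := congrArg σ hz1
    rw [hw, map_add, _root_.map_mul, hσ', hσ', hσ1, ← hw, hz1, _root_.map_mul, hσ'] at e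
    have e := mul_left_cancel₀ hℓT e
    rw [hU, map_add, map_inv₀, _root_.map_mul, hσ1, hσ2] at e
    have e1 : (cc α - (cc α)⁻¹) * (RatFunc.X - RatFunc.X⁻¹) = 0 := by
      have e2 : cc α * RatFunc.X + (cc α * RatFunc.X)⁻¹ - (cc α * RatFunc.X⁻¹ + (cc α * RatFunc.X⁻¹)⁻¹) = 0 := sub_eq_zero.2 e
      rw [mul_inv, mul_inv, inv_inv] at e2
      rw [← e2]; ring
    rcases mul_eq_zero.1 e1 with e1 | e1
    · apply hα1 2 two_pos
      rw [← map_inv₀, sub_eq_zero] at e1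
      have := (algebraMap W (RatFunc W)).injective e1
      rw [pow_two]; nth_rw 2 [this]; exact mul_inv_cancel₀ hα0
    · obtain ⟨w, hw⟩ := const_of_root (W := W) (X ^ 2 - 1 : W[X]) (X_pow_sub_C_ne_zero two_pos 1) (RatFunc.X⁻¹ : RatFunc W) (by
        have : (RatFunc.X : RatFunc W) = RatFunc.X⁻¹ := sub_eq_zero.1 e1
        simp [pow_two]
        nth_rw 2 [← this]
        rw [inv_mul_cancel₀ hX0, sub_self])
      exact ratX_inv_ne w hw
  · have hrp : l.length = p := hB.resolve_left hB0
    have : CharP W p := charP_of_injective_algebraMap (algebraMap (ZMod p) W).injective p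
    rw [← map_zpow₀] at hzh
    set γ := α ^ (l.map Prod.fst).sum with hγ
    have hγ0 : γ ≠ 0 := zpow_ne_zero _ hα0
    obtain ⟨n, hn | hn⟩ := (l.map Prod.snd).sum.eq_nat_or_neg
    · refine no_comp p n (by omega) h (by rw [hd, hrp]) hder' z γ γ⁻¹ hγ0 (inv_ne_zero hγ0) ?_
      rw [hzh, hn, zpow_natCast, mul_inv, hcc, RatFunc.algebraMap_eq_C, map_inv₀]
    · refine no_comp p n (by omega) h (by rw [hd, hrp]) hder' z γ⁻¹ γ (inv_ne_zero hγ0) hγ0 ?_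
      rw [hzh, hn, _root_.zpow_neg, zpow_natCast, mul_inv, hcc, RatFunc.algebraMap_eq_C, map_inv₀, inv_inv, add_comm]

noncomputable abbrev LL (p : ℕ) [Fact p.Prime] := FractionRing (ZMod p)[X]

/-- the embedding of `F_p[s][c]` -/
noncomputable def jj (p : ℕ) [Fact p.Prime] : (ZMod p)[X][X] →+* WW (LL p) :=
  (jX (LL p)).comp (mapRingHom (algebraMap (ZMod p)[X] (LL p)))

lemma jj_inj (p : ℕ) [Fact p.Prime] : Function.Injective (jj p) :=
  jX_inj.comp (map_injective _ (IsFractionRing.injective _ _))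

/-- the generic curve over `F_p[s][c]` -/
noncomputable def gc {p : ℕ} (f : (ZMod p)[X][X][X]) (r : ℕ) : (ZMod p)[X][X][X][X] :=
  (integralNormalization f).map (mapRingHom C) - C (C X * (f.leadingCoeff ^ (r - 1)).map C)

lemma gc_irr {p : ℕ} [Fact p.Prime] {l : List (ℤ × ℤ)} {f : (ZMod p)[X][X][X]}
    (hf : ∀ (S : Type) [CommRing S] [Algebra (ZMod p) S] (x y : SL2 S),
      trace (wordEval (lword l) x y).1 = ev3 (trace x.1) (trace y.1) (trace (x.1*y.1)) f)
    (hl : ∀ c ∈ l, c.1 ≠ 0 ∧ c.2 ≠ 0) (hl0 : l.length.Prime)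
    (hB : (l.map Prod.snd).sum = 0 ∨ l.length = p)
    (hder : derivative (integralNormalization f) ≠ 0) :
    Irreducible ((gc f l.length).map (mapRingHom (jj p))) := by
  have hfd := tracePoly_natDegree hf hl hl0.one_lt.le
  have hf0 : f ≠ 0 := by rintro rfl; rw [natDegree_zero] at hfd; have := hl0.pos; omega
  set i := algebraMap (ZMod p)[X] (LL p) with hi
  have hii : Function.Injective i := IsFractionRing.injective _ _
  have : Infinite (LL p) := Infinite.of_injective i hii
  have hgd : (integralNormalization f).natDegree = l.length := by
    rw [natDegree_integralNormalization, hfd]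
  set gt := (integralNormalization f).map (mapRingHom i) with hgt
  set m := (f.leadingCoeff ^ (l.length - 1)).map i with hm
  have hm0 : m ≠ 0 := (Polynomial.map_ne_zero_iff hii).2 (pow_ne_zero _ (leadingCoeff_ne_zero.2 hf0))
  have hmon : gt.Monic := (monic_integralNormalization hf0).map _
  have hmi : Function.Injective (mapRingHom i) := map_injective _ hii
  have e0 : (jj p).comp C = ((jX (LL p)).comp C).comp i := by
    ext x <;> simp [jj, hi]
  have e1 : gt.map (mapRingHom ((jX (LL p)).comp C)) = (integralNormalization f).map (mapRingHom ((jj p).comp C)) := by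
    rw [hgt, Polynomial.map_map, mapRingHom_comp, e0]
  have e2 : m.map ((jX (LL p)).comp C) = (f.leadingCoeff ^ (l.length - 1)).map ((jj p).comp C) := by
    rw [hm, Polynomial.map_map, e0]
  have e3 : (gc f l.length).map (mapRingHom (jj p)) = gt.map (mapRingHom ((jX (LL p)).comp C)) - C (C (jX (LL p) X) * m.map ((jX (LL p)).comp C)) := by
    rw [e1, e2, gc, Polynomial.map_sub, Polynomial.map_map, mapRingHom_comp, map_C, coe_mapRingHom, Polynomial.map_mul, map_C, Polynomial.map_map]
    simp [jj]
  rw [e3]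
  rcases irr_or_root' gt hmon (by rw [hgt, natDegree_map_eq_of_injective hmi, hgd]; exact hl0) (by
    rw [hgt, derivative_map, Ne, (map_injective _ hmi).eq_iff' (Polynomial.map_zero _)]; exact hder) m hm0 with h | ⟨ρ, hρ⟩
  · exact h
  · exfalso
    obtain ⟨η, h, hη, hc⟩ := comp_of_root gt m hm0 ρ hρ
    rw [e1, e2] at hc
    exact contra hf hl hl0 hB ((jj p).comp C) ((jj_inj p).comp C_injective) hder ρ η h hη hc

end P2e

section P3
set_option maxSynthPendingDepth 8
set_option linter.unusedSimpArgs false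

lemma exists_hom_W {k0 Q W : Type} [Field k0] [Field Q] [Field W] [IsAlgClosed W] [Algebra k0 Q] [Algebra k0 W]
    [Algebra.FiniteType k0 Q] : Nonempty (Q →ₐ[k0] W) := by
  have : Module.Finite k0 Q := finite_of_finite_type_of_isJacobsonRing _ _
  exact ⟨IsAlgClosed.lift⟩

lemma exists_zero {k0 W : Type} [Field k0] [Field W] [IsAlgClosed W] [Algebra k0 W] {ι : Type} [Finite ι]
    (I : Ideal (MvPolynomial ι k0)) (hI : I ≠ ⊤) : ∃ x : ι → W, ∀ e ∈ I, MvPolynomial.aeval x e = 0 := by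
  obtain ⟨P, hP, hIP⟩ := Ideal.exists_le_maximal _ hI
  let _ : Field (MvPolynomial ι k0 ⧸ P) := Ideal.Quotient.field P
  obtain ⟨ψ⟩ := exists_hom_W (k0 := k0) (Q := MvPolynomial ι k0 ⧸ P) (W := W)
  refine ⟨fun i => ψ (Ideal.Quotient.mkₐ k0 P (MvPolynomial.X i)), fun e he => ?_⟩
  have h1 : MvPolynomial.aeval (fun i => ψ (Ideal.Quotient.mkₐ k0 P (MvPolynomial.X i))) = ψ.comp (Ideal.Quotient.mkₐ k0 P) := by
    apply MvPolynomial.algHom_ext; intro i; rw [MvPolynomial.aeval_X]; rfl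
  rw [h1]
  have : Ideal.Quotient.mkₐ k0 P e = 0 := Ideal.Quotient.eq_zero_iff_mem.2 (hIP he)
  rw [AlgHom.comp_apply, this, map_zero]

attribute [local instance] MvPolynomial.algebraMvPolynomial in
lemma spec_lemma {R : Type} [CommRing R] [IsDomain R] {W : Type} [Field W] [IsAlgClosed W] (j : R →+* W)
    (hj : Function.Injective j) {ι : Type} [Finite ι] (E : Set (MvPolynomial ι R))
    (hE : ∀ x : ι → W, ∃ e ∈ E, MvPolynomial.eval₂ j x e ≠ 0) :
    ∃ D : R, D ≠ 0 ∧ ∀ (k : Type) [CommRing k] (φ : R →+* k) (x : ι → k),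
      (∀ e ∈ E, MvPolynomial.eval₂ φ x e = 0) → φ D = 0 := by
  suffices h : ∃ D : R, D ≠ 0 ∧ MvPolynomial.C D ∈ Ideal.span E by
    obtain ⟨D, hD, hDI⟩ := h
    refine ⟨D, hD, fun k _ φ x hx => ?_⟩
    have : Ideal.span E ≤ RingHom.ker (MvPolynomial.eval₂Hom φ x) := by
      rw [Ideal.span_le]; intro e he; exact hx e he
    have := this hDI
    simpa [RingHom.mem_ker] using this
  by_contra hcon
  push Not at hcon
  set k0 := FractionRing R
  have hdis : Disjoint (((nonZeroDivisors R).map (MvPolynomial.C (σ := ι)) : Submonoid _) : Set (MvPolynomial ι R)) (Ideal.span E : Set _) := by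
    rw [Set.disjoint_left]
    rintro _ ⟨D, hD, rfl⟩ h
    exact hcon D (nonZeroDivisors.ne_zero hD) h
  have hne := (IsLocalization.map_algebraMap_ne_top_iff_disjoint ((nonZeroDivisors R).map (MvPolynomial.C (σ := ι))) (MvPolynomial ι k0) _).2 hdis
  let _ : Algebra k0 W := (IsFractionRing.lift (K := k0) hj).toAlgebra
  obtain ⟨x, hx⟩ := exists_zero (W := W) _ hne
  obtain ⟨e, he, hne⟩ := hE x
  apply hne
  have h2 := hx _ (Ideal.mem_map_of_mem _ (Ideal.subset_span he))
  have h3 : (algebraMap k0 W).comp (algebraMap R k0) = j := by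
    ext r; exact IsFractionRing.lift_algebraMap hj r
  rw [MvPolynomial.algebraMap_def, MvPolynomial.aeval_def, MvPolynomial.eval₂_map, h3] at h2
  exact h2

end P3

section P3b
set_option maxSynthPendingDepth 8
set_option linter.unusedSimpArgs false

lemma coeff_swap {k : Type} [CommRing k] (B : k[X][X]) (a i : ℕ) :
    ((Bivariate.swap B).coeff a).coeff i = (B.coeff i).coeff a := by
  induction B using Polynomial.induction_on' with
  | add p q hp hq => simp [hp, hq]
  | monomial n f =>
    induction f using Polynomial.induction_on' with
    | add p q hp hq => simp [hp, hq]
    | monomial m r =>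
      rw [Bivariate.swap_monomial_monomial]
      simp only [coeff_monomial]
      split_ifs <;> simp_all [coeff_monomial]

lemma swap_deg {k : Type} [CommRing k] (B : k[X][X]) (N : ℕ) (h : ∀ i, (B.coeff i).natDegree ≤ N) :
    (Bivariate.swap B).natDegree ≤ N := by
  rw [natDegree_le_iff_coeff_eq_zero]
  intro a ha
  ext i
  rw [coeff_swap, coeff_zero]
  exact coeff_eq_zero_of_natDegree_lt ((h i).trans_lt ha)

lemma deg_swap {k : Type} [CommRing k] (B : k[X][X]) (i : ℕ) : (B.coeff i).natDegree ≤ (Bivariate.swap B).natDegree := by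
  rw [natDegree_le_iff_coeff_eq_zero]
  intro a ha
  rw [← coeff_swap, coeff_eq_zero_of_natDegree_lt ha, coeff_zero]

lemma factor_inner_deg {k : Type} [Field k] (P Q g : k[X][X]) (hg : g ≠ 0) (h : P * Q = g) (N : ℕ)
    (hN : ∀ i, (g.coeff i).natDegree ≤ N) : ∀ i, (P.coeff i).natDegree ≤ N := by
  intro i
  refine (deg_swap P i).trans (le_trans ?_ (swap_deg g N hN))
  have e := congrArg Bivariate.swap h
  rw [_root_.map_mul] at e
  have h0 : Bivariate.swap g ≠ 0 := by simpa using hg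
  rw [← e] at h0 ⊢
  rw [natDegree_mul (left_ne_zero_of_mul h0) (right_ne_zero_of_mul h0)]
  omega

noncomputable def gen {k : Type} [CommRing k] (r N : ℕ) (x : Fin r × Fin (N + 1) → k) : k[X][X] :=
  ∑ i : Fin r, C (∑ a : Fin (N + 1), C (x (i, a)) * X ^ (a : ℕ)) * X ^ (i : ℕ)

lemma gen_map {k k' : Type} [CommRing k] [CommRing k'] (θ : k →+* k') (r N : ℕ) (x : Fin r × Fin (N + 1) → k) :
    (gen r N x).map (mapRingHom θ) = gen r N (fun i => θ (x i)) := by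
  simp [gen, Polynomial.map_sum]

lemma gen_deg {k : Type} [CommRing k] (r N : ℕ) (hr : 0 < r) (x : Fin r × Fin (N + 1) → k) : (gen r N x).natDegree < r := by
  refine Nat.lt_of_le_pred hr ?_
  refine natDegree_sum_le_of_forall_le _ _ fun i _ => ?_
  exact (natDegree_C_mul_X_pow_le _ _).trans (Nat.le_pred_of_lt i.2)

lemma gen_surj {k : Type} [CommRing k] (r N : ℕ) (P : k[X][X]) (hP : P.natDegree < r) (hN : ∀ i, (P.coeff i).natDegree ≤ N) :
    gen r N (fun i => (P.coeff i.1).coeff i.2) = P := by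
  conv_rhs => rw [P.as_sum_range_C_mul_X_pow' hP, Finset.sum_range]
  rw [gen]
  refine Finset.sum_congr rfl fun i _ => ?_
  conv_rhs => rw [(P.coeff i).as_sum_range_C_mul_X_pow' (Nat.lt_succ_of_le (hN i)), Finset.sum_range]

lemma irr_spec {R : Type} [CommRing R] [IsDomain R] {W : Type} [Field W] [IsAlgClosed W] (j : R →+* W)
    (hj : Function.Injective j) (g : R[X][X]) (hg : g.Monic) (hr : 0 < g.natDegree)
    (hirr : Irreducible (g.map (mapRingHom j))) :
    ∃ D : R, D ≠ 0 ∧ ∀ (k : Type) [Field k] (φ : R →+* k), φ D ≠ 0 → Irreducible (g.map (mapRingHom φ)) := by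
  set r := g.natDegree with hrd
  obtain ⟨N, hN⟩ : ∃ N, ∀ i, (g.coeff i).natDegree ≤ N :=
    ⟨(Bivariate.swap g).natDegree, deg_swap g⟩
  let ι := Fin 2 × Fin r × Fin (N + 1)
  let P0 : (MvPolynomial ι R)[X][X] := gen r N (fun i => MvPolynomial.X (0, i))
  let Q0 : (MvPolynomial ι R)[X][X] := gen r N (fun i => MvPolynomial.X (1, i))
  let Δ := P0 * Q0 - g.map (mapRingHom MvPolynomial.C)
  let E : Set (MvPolynomial ι R) := Set.range (fun i : ℕ × ℕ => (Δ.coeff i.1).coeff i.2)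
  have key : ∀ (k : Type) [CommRing k] (φ : R →+* k) (x : ι → k),
      (∀ e ∈ E, MvPolynomial.eval₂ φ x e = 0) ↔ gen r N (fun i => x (0, i)) * gen r N (fun i => x (1, i)) = g.map (mapRingHom φ) := by
    intro k _ φ x
    have h1 : Δ.map (mapRingHom (MvPolynomial.eval₂Hom φ x)) = gen r N (fun i => x (0, i)) * gen r N (fun i => x (1, i)) - g.map (mapRingHom φ) := by
      have : (MvPolynomial.eval₂Hom φ x).comp MvPolynomial.C = φ := by ext; simp
      simp only [Δ, P0, Q0, Polynomial.map_sub, Polynomial.map_mul, gen_map, Polynomial.map_map, mapRingHom_comp, this]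
      simp
    rw [← sub_eq_zero, ← h1]
    constructor
    · intro h
      ext i a
      have := h _ ⟨(i, a), rfl⟩
      simpa using this
    · rintro h _ ⟨⟨i, a⟩, rfl⟩
      have := congrArg (fun B => (B.coeff i).coeff a) h
      simpa using this
  obtain ⟨D, hD, h⟩ := spec_lemma j hj E (by
    intro x
    by_contra hcon
    push Not at hcon
    rw [key] at hcon
    have hgd : (g.map (mapRingHom j)).natDegree = r := hg.natDegree_map _
    rw [← hcon] at hirr hgd
    have h0 := hirr.ne_zero
    have h1 := gen_deg r N hr (fun i => x (0, i))
    have h2 := gen_deg r N hr (fun i => x (1, i))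
    rw [natDegree_mul (left_ne_zero_of_mul h0) (right_ne_zero_of_mul h0)] at hgd
    rcases hirr.isUnit_or_isUnit rfl with hu | hu
    · have := natDegree_eq_zero_of_isUnit hu; omega
    · have := natDegree_eq_zero_of_isUnit hu; omega)
  refine ⟨D, hD, fun k _ φ hφ => ?_⟩
  by_contra hni
  apply hφ
  have hmon : (g.map (mapRingHom φ)).Monic := hg.map _
  have hgd : (g.map (mapRingHom φ)).natDegree = r := hg.natDegree_map _
  rw [hmon.irreducible_iff_natDegree'] at hni
  have h1 : g.map (mapRingHom φ) ≠ 1 := by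
    intro h1; rw [h1, natDegree_one] at hgd; omega
  push Not at hni
  obtain ⟨P, Q, hP, hQ, hPQ, hm⟩ := hni h1
  rw [Finset.mem_Ioc, hgd] at hm
  have hd : P.natDegree + Q.natDegree = r := by rw [← hP.natDegree_mul hQ, hPQ, hgd]
  have hNk : ∀ i, ((g.map (mapRingHom φ)).coeff i).natDegree ≤ N := by
    intro i; rw [coeff_map]; exact (natDegree_map_le).trans (hN i)
  have e1 := gen_surj r N P (by omega) (factor_inner_deg P Q _ hmon.ne_zero hPQ N hNk)
  have e2 := gen_surj r N Q (by omega) (factor_inner_deg Q P _ hmon.ne_zero (by rw [mul_comm]; exact hPQ) N hNk)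
  refine h k φ (fun i => if i.1 = 0 then (P.coeff i.2.1).coeff i.2.2 else (Q.coeff i.2.1).coeff i.2.2) ?_
  rw [key]
  simp only [if_true, one_ne_zero, if_false]
  rw [e1, e2, hPQ]

end P3b

section P6
set_option maxSynthPendingDepth 8
set_option linter.unusedSimpArgs false

lemma wt_monic {k : Type} [Field k] (g : k[X][X]) (hg : g.Monic) (N : ℕ) (hN : ∀ i, (g.coeff i).natDegree ≤ N) :
    Wt N (N * g.natDegree) g := by
  intro i j hij
  have hj : j ≤ g.natDegree := by
    by_contra h
    rw [coeff_eq_zero_of_natDegree_lt (p := g) (by omega), coeff_zero] at hij; exact hij rfl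
  rcases hj.lt_or_eq with hj | rfl
  · have h1 := (le_natDegree_of_ne_zero hij).trans (hN j)
    calc i + N * j ≤ N * 1 + N * j := by omega
      _ = N * (j + 1) := by ring
      _ ≤ _ := Nat.mul_le_mul_left _ hj
  · rw [coeff_natDegree, hg.leadingCoeff, coeff_one] at hij
    have : i = 0 := by by_contra h; simp [h] at hij
    omega

noncomputable def ev2 {p : ℕ} {S : Type} [CommRing S] [Algebra (ZMod p) S] (s t : S) :
    (ZMod p)[X][X] →+* S :=
  eval₂RingHom (eval₂RingHom (algebraMap (ZMod p) S) s) t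

lemma ev3_eq {p : ℕ} {S : Type} [CommRing S] [Algebra (ZMod p) S] (s t u : S) (f : (ZMod p)[X][X][X]) :
    ev3 s t u f = f.eval₂ (ev2 s t) u := rfl

lemma ev2_hom {p : ℕ} {S S' : Type} [CommRing S] [Algebra (ZMod p) S] [CommRing S'] [Algebra (ZMod p) S'] (i : S →+* S')
    (s t : S) (f : (ZMod p)[X][X]) : ev2 (i s) (i t) f = i (ev2 s t f) := by
  have : ev2 (i s) (i t) = i.comp (ev2 (p := p) s t) := by
    apply Polynomial.ringHom_ext'
    · apply Polynomial.ringHom_ext'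
      · exact Subsingleton.elim _ _
      · simp [ev2]
    · simp [ev2]
  rw [this]; rfl

lemma gc_eval {p : ℕ} [Fact p.Prime] (f : (ZMod p)[X][X][X]) (r : ℕ) (hr : f.natDegree = r) (hr1 : 1 ≤ r) {k : Type} [Field k]
    [Algebra (ZMod p) k] (s c t u : k) (h : ev3 s t u f = c) :
    evalEval t (ev2 s t f.leadingCoeff * u) ((gc f r).map (mapRingHom (ev2 s c))) = 0 := by
  have e0 : (ev2 s c).comp C = eval₂RingHom (algebraMap (ZMod p) k) s := by
    ext x <;> simp [ev2]
  have e1 : (evalRingHom t).comp (mapRingHom (eval₂RingHom (algebraMap (ZMod p) k) s)) = ev2 s t := by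
    apply Polynomial.ringHom_ext'
    · apply Polynomial.ringHom_ext'
      · exact Subsingleton.elim _ _
      · simp [ev2]
    · simp [ev2]
  have e2 := integralNormalization_eval₂_leadingCoeff_mul (p := f) (by omega) (ev2 s t) u
  rw [← ev3_eq s t u, h, hr] at e2
  rw [gc, Polynomial.map_sub, Polynomial.map_map, mapRingHom_comp, e0, map_C, coe_mapRingHom, Polynomial.map_mul, map_C,
    Polynomial.map_map, e0]
  have e3 : ∀ B : (ZMod p)[X][X][X], ∀ v : k, evalEval t v (B.map (mapRingHom (eval₂RingHom (algebraMap (ZMod p) k) s))) = B.eval₂ (ev2 s t) v := by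
    intro B v
    rw [evalEval, ← coe_evalRingHom, ← e1, ← eval₂_map]
    exact (eval₂_at_apply (evalRingHom t) (C v) ▸ by simp)
  have e4 : ∀ P : (ZMod p)[X][X], (P.map (eval₂RingHom (algebraMap (ZMod p) k) s)).eval t = ev2 s t P := by
    intro P; rw [← e1]; rfl
  have e5 : ev2 (p := p) s c X = c := by simp [ev2]
  rw [evalEval_sub, e3, e2, evalEval_C, eval_mul, eval_C, e4, e5, map_pow]
  ring

lemma star1 {p : ℕ} [Fact p.Prime] {l : List (ℤ × ℤ)} {f : (ZMod p)[X][X][X]}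
    (hf : ∀ (S : Type) [CommRing S] [Algebra (ZMod p) S] (x y : SL2 S),
      trace (wordEval (lword l) x y).1 = ev3 (trace x.1) (trace y.1) (trace (x.1*y.1)) f)
    (hl : ∀ c ∈ l, c.1 ≠ 0 ∧ c.2 ≠ 0) (hl0 : l.length.Prime)
    (hB : (l.map Prod.snd).sum = 0 ∨ l.length = p)
    (hder : derivative (integralNormalization f) ≠ 0) :
    ∃ D : (ZMod p)[X][X], D ≠ 0 ∧ ∃ M : ℕ, ∀ a b : ℕ, M ≤ p ^ a → M * p ^ a ≤ p ^ b →
      ∀ (K : Type) [Field K] [Fintype K] [Algebra (ZMod p) K], Fintype.card K = p ^ (a + b) → ∀ s c : K, ev2 s c D ≠ 0 →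
      ∀ S : Finset (K × K), (∀ x ∈ S, ev2 s x.1 f.leadingCoeff ≠ 0 ∧ ev3 s x.1 x.2 f = c) →
        S.card ≤ p ^ (a + b) + M * p ^ b := by
  have hp : p.Prime := Fact.out
  have hfd := tracePoly_natDegree hf hl hl0.one_lt.le
  have hf0 : f ≠ 0 := by rintro rfl; rw [natDegree_zero] at hfd; have := hl0.pos; omega
  set r := l.length with hr
  have hmon0 : (integralNormalization f).Monic := monic_integralNormalization hf0
  have hnd0 : (integralNormalization f).natDegree = r := by rw [natDegree_integralNormalization, hfd]
  have hdlt : (C (C X * (f.leadingCoeff ^ (r - 1)).map C) : (ZMod p)[X][X][X][X]).degree < ((integralNormalization f).map (mapRingHom C)).degree := by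
    rw [hmon0.degree_map, degree_eq_natDegree hmon0.ne_zero, hnd0]
    refine lt_of_le_of_lt degree_C_le ?_
    exact_mod_cast hl0.pos
  have hmon : (gc f r).Monic := (hmon0.map _).sub_of_left hdlt
  have hnd : (gc f r).natDegree = r := by
    rw [gc, natDegree_eq_of_degree_eq (degree_sub_eq_left_of_degree_lt hdlt), hmon0.natDegree_map, hnd0]
  obtain ⟨D1, hD1, hirr⟩ := irr_spec (jj p) (jj_inj p) (gc f r) hmon (by rw [hnd]; exact hl0.pos) (gc_irr hf hl hl0 hB hder)
  have hder' : derivative (gc f r) ≠ 0 := by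
    rw [gc, derivative_sub, derivative_C, sub_zero, derivative_map, Ne,
      (map_injective _ (map_injective _ C_injective)).eq_iff' (Polynomial.map_zero _)]
    exact hder
  obtain ⟨i, a', hD2⟩ : ∃ i a', ((derivative (gc f r)).coeff i).coeff a' ≠ 0 := by
    by_contra h; push Not at h; exact hder' (by ext1 i; ext1 a'; rw [h]; simp)
  set N := (Bivariate.swap (gc f r)).natDegree
  refine ⟨D1 * ((derivative (gc f r)).coeff i).coeff a', mul_ne_zero hD1 hD2,
    (N * r + N + 4) + (r + 1) * (1 + N * r) + 1 + (r + r * (N + 3 + N * r)), ?_⟩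
  intro a b hP hQ K _ _ _ hK s c hD S hS
  rw [_root_.map_mul] at hD
  set k := AlgebraicClosure K
  let ι : K →+* k := algebraMap K k
  have hιi : Function.Injective ι := ι.injective
  have : CharP k p := charP_of_injective_algebraMap (algebraMap (ZMod p) k).injective p
  set φ : (ZMod p)[X][X] →+* k := ev2 (ι s) (ι c) with hφ
  set g := (gc f r).map (mapRingHom φ) with hg
  have hφ0 : ∀ P, ev2 s c P ≠ 0 → φ P ≠ 0 := by
    intro P hP; rw [hφ, ev2_hom]; exact (map_ne_zero_iff ι hιi).2 hP
  have hgm : g.Monic := hmon.map _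
  have hgd : g.natDegree = r := by rw [hg, hmon.natDegree_map, hnd]
  have hpa : 1 ≤ p ^ a := Nat.one_le_pow _ _ hp.pos
  classical
  have key := stepanov (p := p) (e := N) (r := r) hl0.one_lt.le hgm hgd (by
      have := wt_monic g hgm N (by
        intro i; rw [hg, coeff_map]; exact natDegree_map_le.trans (deg_swap _ i))
      rwa [hgd] at this) (hirr k φ (hφ0 _ (left_ne_zero_of_mul hD))) (by
      intro h0
      apply hφ0 _ (right_ne_zero_of_mul hD)
      rw [hg, derivative_map] at h0
      have := congrArg (fun B => (B.coeff i).coeff a') h0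
      simpa using this) a b (by omega) (by
        refine lt_of_lt_of_le ?_ hQ
        have : (r + 1) * (p ^ a + N * r) ≤ (r + 1) * (1 + N * r) * p ^ a := by
          rw [mul_assoc]
          refine Nat.mul_le_mul_left _ ?_
          nlinarith [Nat.zero_le (N * r)]
        refine lt_of_le_of_lt this ?_
        exact Nat.mul_lt_mul_of_pos_right (by omega) (by omega))
      (S.image (fun x => (ι x.1, ι (ev2 s x.1 f.leadingCoeff * x.2)))) (by
        intro y hy
        obtain ⟨x, hx, rfl⟩ := Finset.mem_image.1 hy
        have hpow : ∀ z : K, ι z ^ p ^ (a + b) = ι z := by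
          intro z; rw [← map_pow, ← hK, FiniteField.pow_card]
        refine ⟨?_, hpow _, hpow _⟩
        simp only
        rw [_root_.map_mul, ← ev2_hom]
        refine gc_eval f r hfd hl0.one_lt.le (ι s) (ι c) (ι x.1) (ι x.2) ?_
        have h2 := (hS x hx).2
        rw [ev3_eq] at h2 ⊢
        rw [← h2, hom_eval₂]
        congr 1
        exact RingHom.ext fun P => ev2_hom ι s x.1 P)
  rw [Finset.card_image_of_injOn] at key
  · refine key.trans (Nat.add_le_add_left (Nat.mul_le_mul_right _ ?_) _)
    exact Nat.le_add_left _ _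
  · intro x hx y hy hxy
    simp only [Prod.mk.injEq] at hxy
    have h1 := hιi hxy.1
    have h2 := hιi hxy.2
    rw [← h1] at h2
    exact Prod.ext h1 (mul_left_cancel₀ (hS x hx).1 h2)

lemma star2 {p : ℕ} [Fact p.Prime] {f : (ZMod p)[X][X][X]} (hfp : f.natDegree.Prime)
    (hder : derivative (integralNormalization f) = 0)
    (K : Type) [Field K] [Fintype K] [Algebra (ZMod p) K] (s c : K)
    (S : Finset (K × K)) (hS : ∀ x ∈ S, ev2 s x.1 f.leadingCoeff ≠ 0 ∧ ev3 s x.1 x.2 f = c) :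
        S.card ≤ Fintype.card K := by
  have hp : p.Prime := Fact.out
  have hf0 : f ≠ 0 := by rintro rfl; rw [natDegree_zero] at hfp; exact Nat.not_prime_zero hfp
  have hmon0 : (integralNormalization f).Monic := monic_integralNormalization hf0
  have hco : ∀ i, (integralNormalization f).coeff (i + 1) ≠ 0 → p ∣ i + 1 := by
    intro i hi
    have := congrArg (fun B => B.coeff i) hder
    simp only [coeff_derivative, coeff_zero] at this
    have h2 := (mul_eq_zero.1 this).resolve_left hi
    exact (CharP.cast_eq_zero_iff (ZMod p)[X][X] p (i + 1)).1 (by exact_mod_cast h2)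
  have hrp : p = f.natDegree := by
    obtain ⟨i, hi⟩ := Nat.exists_eq_succ_of_ne_zero hfp.ne_zero
    refine (Nat.prime_dvd_prime_iff_eq hp hfp).1 ?_
    rw [hi]
    apply hco
    rw [← Nat.succ_eq_add_one, ← hi, ← natDegree_integralNormalization, coeff_natDegree, hmon0.leadingCoeff]
    exact one_ne_zero
  have hform : integralNormalization f = X ^ p + C ((integralNormalization f).coeff 0) := by
    ext1 i
    rcases Nat.eq_zero_or_pos i with rfl | hi
    · simp [hp.ne_zero.symm, coeff_X_pow]
    · simp only [coeff_add, coeff_X_pow, coeff_C, hi.ne', if_false, add_zero]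
      split_ifs with h
      · have h9 : i = (integralNormalization f).natDegree := by
          rw [natDegree_integralNormalization, ← hrp, h]
        rw [h9, coeff_natDegree, hmon0.leadingCoeff]
      · by_contra h0
        obtain ⟨i, rfl⟩ := Nat.exists_eq_succ_of_ne_zero hi.ne'
        have h1 := hco i h0
        have h2 := le_natDegree_of_ne_zero h0
        rw [natDegree_integralNormalization, ← hrp] at h2
        have := Nat.le_of_dvd (by omega) h1
        omega
  have : CharP K p := charP_of_injective_algebraMap (algebraMap (ZMod p) K).injective p
  rw [← Finset.card_univ]
  refine Finset.card_le_card_of_injOn Prod.fst (fun _ _ => Finset.mem_univ _) ?_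
  intro x hx y hy hxy
  obtain ⟨t, u⟩ := x
  obtain ⟨t', u'⟩ := y
  obtain rfl : t = t' := hxy
  have key : ∀ u, (t, u) ∈ S → (ev2 s t f.leadingCoeff * u) ^ p = ev2 s t f.leadingCoeff ^ (f.natDegree - 1) * c - ev2 s t ((integralNormalization f).coeff 0) := by
    intro u hu
    have e2 := integralNormalization_eval₂_leadingCoeff_mul (p := f) hfp.one_lt.le (ev2 s t) u
    rw [← ev3_eq s t u, (hS _ hu).2, hform] at e2
    rw [← e2]; simp
  have h1 := (key u hx).trans (key u' hy).symm
  have h2 := frobenius_inj K p h1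
  rw [mul_left_cancel₀ (hS _ hx).1 h2]

end P6

section P5a
set_option linter.unusedSimpArgs false

open Classical in
lemma l1_bound {A Y K : Type} [Fintype A] [Fintype Y] [Fintype K] (F : A → Y) (τ : Y → K) (Sc : Finset Y) (g H N : ℕ)
    (hconst : ∀ z z', z ∉ Sc → z' ∉ Sc → τ z = τ z' →
      (Finset.univ.filter fun x => F x = z).card = (Finset.univ.filter fun x => F x = z').card)
    (Bd : Finset A) (hA : Fintype.card A = g * Fintype.card Y)
    (hH : ∀ c, (Finset.univ.filter fun x => x ∉ Bd ∧ τ (F x) = c).card ≤ H)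
    (hN : ∀ c, N ≤ (Finset.univ.filter fun z => z ∉ Sc ∧ τ z = c).card) (Δ : ℝ) (hΔ0 : 0 ≤ Δ)
    (hΔ : (H : ℝ) ≤ N * g + Δ) :
    ∑ y, |((Finset.univ.filter fun x => F x = y).card : ℝ) - g| ≤
      2 * (Sc.card * (H + Bd.card) + Fintype.card K * Δ + Bd.card) := by
  set fib : Y → ℕ := fun y => (Finset.univ.filter fun x => F x = y).card with hfib
  have hsum : ∑ y, (fib y : ℝ) = g * Fintype.card Y := by
    rw [← Nat.cast_sum, ← Finset.card_eq_sum_card_fiberwise (s := Finset.univ) (t := Finset.univ) (f := F) (by simp), Finset.card_univ, hA]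
    push_cast; ring
  set bd : K → ℕ := fun c => (Finset.univ.filter fun x => x ∈ Bd ∧ τ (F x) = c).card with hbd
  have hbsum : ∑ c, (bd c : ℝ) = Bd.card := by
    rw [← Nat.cast_sum, Finset.card_eq_sum_card_fiberwise (s := Bd) (t := Finset.univ) (f := fun x => τ (F x)) (by simp)]
    congr 1
    refine Finset.sum_congr rfl fun c _ => ?_
    simp only [hbd]; refine congrArg Finset.card ?_; ext x; simp
  have hT : ∀ c, (Finset.univ.filter fun x => τ (F x) = c).card ≤ H + bd c := by
    intro c
    refine le_trans ?_ (Nat.add_le_add_right (hH c) _)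
    rw [hbd]
    refine le_trans (Finset.card_le_card ?_) (Finset.card_union_le _ _)
    intro x hx
    simp only [Finset.mem_union, Finset.mem_filter, Finset.mem_univ, true_and] at hx ⊢
    tauto
  have hpos : ∑ y, |(fib y : ℝ) - g| = 2 * ∑ y, max ((fib y : ℝ) - g) 0 := by
    have h1 : ∀ y, |(fib y : ℝ) - g| = 2 * max ((fib y : ℝ) - g) 0 - (fib y - g) := by
      intro y
      rcases le_total 0 ((fib y : ℝ) - g) with h | h
      · rw [abs_of_nonneg h, max_eq_left h]; ring
      · rw [abs_of_nonpos h, max_eq_right h]; ring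
    rw [Finset.sum_congr rfl fun y _ => h1 y, Finset.sum_sub_distrib, ← Finset.mul_sum, Finset.sum_sub_distrib, hsum]
    simp [mul_comm]
  rw [hpos]
  refine mul_le_mul_of_nonneg_left ?_ (by norm_num)
  rw [← Finset.sum_filter_add_sum_filter_not Finset.univ (fun y => y ∈ Sc), add_assoc]
  refine add_le_add ?_ ?_
  · rw [Finset.filter_mem_eq_inter, Finset.univ_inter, ← nsmul_eq_mul]
    refine Finset.sum_le_card_nsmul _ _ _ fun y _ => ?_
    refine max_le ?_ (by positivity)
    have h1 : fib y ≤ H + bd (τ y) := by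
      refine le_trans (Finset.card_le_card ?_) (hT (τ y))
      intro x hx
      simp only [Finset.mem_filter, Finset.mem_univ, true_and] at hx ⊢
      rw [hx]
    have h2 : bd (τ y) ≤ Bd.card := by
      refine Finset.card_le_card fun x hx => ?_
      simp only [Finset.mem_filter, Finset.mem_univ, true_and] at hx
      exact hx.1
    have h3 : (fib y : ℝ) ≤ H + Bd.card := by exact_mod_cast h1.trans (by omega)
    have : (0 : ℝ) ≤ g := Nat.cast_nonneg _
    linarith
  · have key : ∀ c, ∑ y ∈ (Finset.univ.filter fun z => z ∉ Sc ∧ τ z = c), max ((fib y : ℝ) - g) 0 ≤ Δ + bd c := by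
      intro c
      set Z := Finset.univ.filter fun z => z ∉ Sc ∧ τ z = c with hZ
      by_cases hle : ∀ z ∈ Z, fib z ≤ g
      · rw [Finset.sum_eq_zero]
        · positivity
        · intro z hz
          refine max_eq_right ?_
          have : (fib z : ℝ) ≤ g := by exact_mod_cast hle z hz
          linarith
      · push Not at hle
        obtain ⟨z0, hz0, hlt⟩ := hle
        have hge : ∀ z ∈ Z, g < fib z := by
          intro z hz
          rw [hZ, Finset.mem_filter] at hz hz0
          have := hconst z z0 hz.2.1 hz0.2.1 (hz.2.2.trans hz0.2.2.symm)
          change fib z = fib z0 at this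
          omega
        have e1 : ∑ y ∈ Z, max ((fib y : ℝ) - g) 0 = ∑ y ∈ Z, (fib y : ℝ) - Z.card * g := by
          rw [Finset.sum_congr rfl (g := fun y => (fib y : ℝ) - g), Finset.sum_sub_distrib]
          · simp
          · intro z hz
            refine max_eq_left ?_
            have : (g : ℝ) < fib z := by exact_mod_cast hge z hz
            linarith
        have e2 : ∑ y ∈ Z, fib y ≤ H + bd c := by
          refine le_trans ?_ (hT c)
          have : ∑ y ∈ Z, fib y = (Finset.univ.filter fun x => F x ∈ Z).card := by
            rw [Finset.card_eq_sum_card_fiberwise (f := F) (t := Z) (by intro x hx; simpa using hx)]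
            refine Finset.sum_congr rfl fun z hz => ?_
            simp only [hfib, Finset.filter_filter]
            refine congrArg Finset.card ?_; ext x
            simp only [Finset.mem_filter, Finset.mem_univ, true_and]
            constructor
            · rintro rfl; exact ⟨hz, rfl⟩
            · exact fun h => h.2
          rw [this]
          refine Finset.card_le_card fun x hx => ?_
          simp only [hZ, Finset.mem_filter, Finset.mem_univ, true_and] at hx ⊢
          exact hx.2
        rw [e1]
        have e3 : (∑ y ∈ Z, (fib y : ℝ)) ≤ H + bd c := by exact_mod_cast e2
        have e4 : (N : ℝ) * g ≤ Z.card * g := by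
          have : (N : ℝ) ≤ Z.card := by exact_mod_cast hN c
          exact mul_le_mul_of_nonneg_right this (Nat.cast_nonneg _)
        linarith
    have e5 : ∑ y with y ∉ Sc, max ((fib y : ℝ) - g) 0 =
        ∑ c, ∑ y ∈ (Finset.univ.filter fun z => z ∉ Sc ∧ τ z = c), max ((fib y : ℝ) - g) 0 := by
      rw [← Finset.sum_fiberwise (Finset.univ.filter fun y => y ∉ Sc) τ]
      refine Finset.sum_congr rfl fun c _ => ?_
      rw [Finset.filter_filter]
    rw [e5]
    refine (Finset.sum_le_sum fun c _ => key c).trans ?_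
    rw [Finset.sum_add_distrib, hbsum]
    simp

open Classical in
lemma equi_of_l1 {A Y : Type} [Fintype A] [Fintype Y] (F : A → Y) (g : ℕ) (hg : 0 < g) (hY : 0 < Fintype.card Y)
    (hA : Fintype.card A = g * Fintype.card Y) (ε : ℝ) (hε : 0 < ε)
    (h : ∑ y, |((Finset.univ.filter fun x => F x = y).card : ℝ) - g| < ε ^ 2 * g * Fintype.card Y) :
    IsEquidistributed F ε := by
  have hg' : (0 : ℝ) < g := by exact_mod_cast hg
  have hY' : (0 : ℝ) < Fintype.card Y := by exact_mod_cast hY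
  have hAY : (Nat.card A : ℝ) / Nat.card Y = g := by
    rw [Nat.card_eq_fintype_card, Nat.card_eq_fintype_card, hA]; push_cast; field_simp
  refine ⟨{y | |((Finset.univ.filter fun x => F x = y).card : ℝ) - g| < ε * g}, ?_, ?_⟩
  · rw [Nat.card_eq_fintype_card, Nat.card_eq_fintype_card]
    set G := Finset.univ.filter fun y => |((Finset.univ.filter fun x => F x = y).card : ℝ) - g| < ε * g with hG
    have e0 : Fintype.card {y | |((Finset.univ.filter fun x => F x = y).card : ℝ) - g| < ε * g} = G.card := by
      rw [hG, ← Fintype.card_subtype]; rfl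
    rw [e0]
    have e1 : (Gᶜ.card : ℝ) * (ε * g) ≤ ∑ y, |((Finset.univ.filter fun x => F x = y).card : ℝ) - g| := by
      rw [← nsmul_eq_mul]
      refine le_trans (Finset.card_nsmul_le_sum Gᶜ _ _ ?_) (Finset.sum_le_univ_sum_of_nonneg fun y => abs_nonneg _)
      intro y hy
      simpa [hG] using hy
    have e2 : (Gᶜ.card : ℝ) * (ε * g) < (ε * Fintype.card Y) * (ε * g) := by
      refine e1.trans_lt (h.trans_eq ?_); ring
    have e3 := lt_of_mul_lt_mul_right e2 (by positivity)
    have e4 : (Gᶜ.card : ℝ) = Fintype.card Y - G.card := by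
      rw [Finset.card_compl, Nat.cast_sub (Finset.card_le_univ _)]
    rw [e4] at e3
    linarith
  · intro y hy
    rw [mul_div_assoc, hAY, Nat.card_eq_fintype_card, Fintype.card_subtype]
    exact hy

end P5a

section P5b
set_option maxSynthPendingDepth 8
set_option linter.unusedSimpArgs false

lemma conj_exists {K : Type} [Field K] (z : SL2 K) (hz : ¬ (z.1 0 1 = 0 ∧ z.1 1 0 = 0 ∧ z.1 0 0 = z.1 1 1)) :
    ∃ P : Matrix (Fin 2) (Fin 2) K, IsUnit P.det ∧ P * z.1 = !![0, 1; -1, trace z.1] * P := by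
  obtain ⟨a, b, c, d, h, hx⟩ := sl2_eq z
  rw [hx] at hz ⊢
  simp at hz
  by_cases hb : b = 0
  · by_cases hc : c = 0
    · refine ⟨!![1, 1; a, d], ?_, ?_⟩
      · rw [isUnit_iff_ne_zero, Matrix.det_fin_two]
        simpa [sub_eq_zero, eq_comm] using hz hb hc
      · subst hb hc
        rw [Matrix.trace_fin_two]
        ext i j; fin_cases i <;> fin_cases j <;> simp [Matrix.mul_apply, Fin.sum_univ_two] <;>
          linear_combination (-h)
    · refine ⟨!![0, 1; c, d], ?_, ?_⟩
      · rw [isUnit_iff_ne_zero, Matrix.det_fin_two]; simpa using hc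
      · rw [Matrix.trace_fin_two]
        ext i j; fin_cases i <;> fin_cases j <;> simp [Matrix.mul_apply, Fin.sum_univ_two] <;>
          first | ring1 | linear_combination (-h)
  · refine ⟨!![1, 0; a, b], ?_, ?_⟩
    · rw [isUnit_iff_ne_zero, Matrix.det_fin_two]; simpa using hb
    · rw [Matrix.trace_fin_two]
      ext i j; fin_cases i <;> fin_cases j <;> simp [Matrix.mul_apply, Fin.sum_univ_two] <;>
        first | ring1 | linear_combination (-h)

/-- conjugation by an invertible matrix -/
def conjHom {K : Type} [Field K] (A B : Matrix (Fin 2) (Fin 2) K) (h1 : A * B = 1) (h2 : B * A = 1) :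
    SL2 K →* SL2 K where
  toFun x := ⟨A * x.1 * B, by
    rw [Matrix.det_mul, Matrix.det_mul, x.2, mul_one, ← Matrix.det_mul, h1, Matrix.det_one]⟩
  map_one' := by apply Subtype.ext; simp [h1]
  map_mul' x y := by
    apply Subtype.ext
    change A * (x.1 * y.1) * B = (A * x.1 * B) * (A * y.1 * B)
    calc A * (x.1 * y.1) * B = A * x.1 * 1 * y.1 * B := by simp [Matrix.mul_assoc]
      _ = _ := by rw [← h2]; simp [Matrix.mul_assoc]

lemma conjHom_inj {K : Type} [Field K] (A B : Matrix (Fin 2) (Fin 2) K) (h1 : A * B = 1) (h2 : B * A = 1) :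
    Function.Injective (conjHom A B h1 h2) := by
  intro x y h
  have h' : A * x.1 * B = A * y.1 * B := congrArg Subtype.val h
  apply Subtype.ext
  have e : ∀ m : Matrix (Fin 2) (Fin 2) K, B * (A * m * B) * A = m := by
    intro m
    calc B * (A * m * B) * A = (B * A) * m * (B * A) := by simp [Matrix.mul_assoc]
      _ = m := by rw [h2]; simp
  rw [← e x.1, h', e]

lemma conj_exists2 {K : Type} [Field K] (z z' : SL2 K)
    (hz : ¬ (z.1 0 1 = 0 ∧ z.1 1 0 = 0 ∧ z.1 0 0 = z.1 1 1))
    (hz' : ¬ (z'.1 0 1 = 0 ∧ z'.1 1 0 = 0 ∧ z'.1 0 0 = z'.1 1 1)) (h : trace z.1 = trace z'.1) :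
    ∃ φ : SL2 K →* SL2 K, Function.Injective φ ∧ φ z = z' := by
  obtain ⟨P, hP, e⟩ := conj_exists z hz
  obtain ⟨Q, hQ, e'⟩ := conj_exists z' hz'
  have P1 := Matrix.mul_nonsing_inv P hP
  have P2 := Matrix.nonsing_inv_mul P hP
  have Q1 := Matrix.mul_nonsing_inv Q hQ
  have Q2 := Matrix.nonsing_inv_mul Q hQ
  refine ⟨conjHom (Q⁻¹ * P) (P⁻¹ * Q) ?_ ?_, conjHom_inj _ _ _ _, ?_⟩
  · rw [Matrix.mul_assoc, ← Matrix.mul_assoc P, P1, Matrix.one_mul, Q2]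
  · rw [Matrix.mul_assoc, ← Matrix.mul_assoc Q, Q1, Matrix.one_mul, P2]
  · apply Subtype.ext
    change Q⁻¹ * P * z.1 * (P⁻¹ * Q) = z'.1
    rw [Matrix.mul_assoc Q⁻¹, e, h, ← Matrix.mul_assoc, Matrix.mul_assoc Q⁻¹, Matrix.mul_assoc _ P,
      P1, Matrix.mul_one, Matrix.mul_assoc, ← e', ← Matrix.mul_assoc, Q2, Matrix.one_mul]

open Classical in
lemma fiber_const {K : Type} [Field K] [Fintype (SL2 K)] (w : FreeGroup (Fin 2)) (z z' : SL2 K)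
    (hz : ¬ (z.1 0 1 = 0 ∧ z.1 1 0 = 0 ∧ z.1 0 0 = z.1 1 1))
    (hz' : ¬ (z'.1 0 1 = 0 ∧ z'.1 1 0 = 0 ∧ z'.1 0 0 = z'.1 1 1)) (h : trace z.1 = trace z'.1) :
    (Finset.univ.filter fun x => wordMap w K x = z).card = (Finset.univ.filter fun x => wordMap w K x = z').card := by
  have key : ∀ z z' : SL2 K, ¬ (z.1 0 1 = 0 ∧ z.1 1 0 = 0 ∧ z.1 0 0 = z.1 1 1) →
      ¬ (z'.1 0 1 = 0 ∧ z'.1 1 0 = 0 ∧ z'.1 0 0 = z'.1 1 1) → trace z.1 = trace z'.1 →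
      (Finset.univ.filter fun x => wordMap w K x = z).card ≤ (Finset.univ.filter fun x => wordMap w K x = z').card := by
    intro z z' hz hz' h
    obtain ⟨φ, hφ, e⟩ := conj_exists2 z z' hz hz' h
    refine Finset.card_le_card_of_injOn (Prod.map φ φ) ?_ (hφ.prodMap hφ).injOn
    intro x hx
    simp only [Finset.coe_filter, Finset.mem_univ, true_and, Set.mem_ofPred_eq] at hx ⊢
    rw [← e, ← hx]
    simp only [wordMap, Prod.map]
    rw [wordEval_hom]
  exact le_antisymm (key z z' hz hz' h) (key z' z hz' hz h.symm)

/-- the conic -/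
lemma conic_degenerate {K : Type} [Field K] (a b c d t u m g δ : K) (hc : c ≠ 0) (h : a * d - b * c = 1)
    (hP : -c * δ ^ 2 + (d - a) * g * δ + b * g ^ 2 + c * t * δ + (a * t - u) * g - c = 0)
    (hq : -c * m ^ 2 + (d - a) * m + b = 0)
    (hB : ((d - a) * δ + 2 * b * g + (a * t - u)) + m * (-2 * c * δ + (d - a) * g + c * t) = 0) :
    (a + d) ^ 2 + t ^ 2 + u ^ 2 - (a + d) * t * u - 4 = 0 := by
  have hb : b = c * m ^ 2 - (d - a) * m := by linear_combination hq
  subst hb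
  have hu : u = (d - c * m) * (δ - m * g) + (a + c * m) * (t - (δ - m * g)) := by linear_combination -hB
  have he : (δ - m * g) * (t - (δ - m * g)) = 1 := by
    apply mul_left_cancel₀ hc
    subst hu
    linear_combination hP
  have hh : (a + c * m) * (d - c * m) = 1 := by linear_combination h
  subst hu
  set e := δ - m * g
  set h1 := a + c * m with hh1
  set h2 := d - c * m with hh2
  have hs : a + d = h1 + h2 := by rw [hh1, hh2]; ring
  rw [hs]
  linear_combination (2 - (e ^ 2 + (t - e) ^ 2)) * hh + (2 - (h1 ^ 2 + h2 ^ 2)) * he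

open Classical in
lemma conic_card1 {K : Type} [Field K] [Fintype K] (a b c d t u : K) (hc : c ≠ 0) :
    (Finset.univ.filter fun x : K × K => -c * x.2 ^ 2 + (d - a) * x.1 * x.2 + b * x.1 ^ 2 + c * t * x.2 + (a * t - u) * x.1 - c = 0).card
      ≤ 2 * Fintype.card K := by
  rw [← Finset.card_univ (α := K)]
  refine Finset.card_le_mul_card_image_of_maps_to (f := Prod.fst) (by simp) 2 fun g _ => ?_
  set P : K[X] := C (-c) * X ^ 2 + C ((d - a) * g + c * t) * X + C (b * g ^ 2 + (a * t - u) * g - c) with hP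
  have hd : P.natDegree = 2 := natDegree_quadratic (neg_ne_zero.2 hc)
  have hP0 : P ≠ 0 := by intro h; rw [h] at hd; simp at hd
  refine le_trans ?_ ((Multiset.toFinset_card_le _).trans (hd ▸ P.card_roots'))
  refine Finset.card_le_card_of_injOn Prod.snd ?_ ?_
  · rintro ⟨x, y⟩ hx
    simp only [Finset.coe_filter, Finset.mem_filter, Finset.mem_univ, true_and, Set.mem_ofPred_eq] at hx
    obtain ⟨h1, rfl⟩ := hx
    simp only [Finset.mem_coe, Multiset.mem_toFinset]
    rw [mem_roots hP0, IsRoot.def, hP]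
    simp only [eval_add, eval_mul, eval_C, eval_pow, eval_X]
    linear_combination h1
  · rintro ⟨x, y⟩ hx ⟨x', y'⟩ hx' he
    simp only [Finset.coe_filter, Finset.mem_filter, Finset.mem_univ, true_and, Set.mem_ofPred_eq] at hx hx'
    rw [Prod.mk.injEq]
    exact ⟨hx.2.trans hx'.2.symm, he⟩

open Classical in
lemma conic_card2 {K : Type} [Field K] [Fintype K] (a b c d t u : K) (hc : c ≠ 0) (h : a * d - b * c = 1)
    (hE : (a + d) ^ 2 + t ^ 2 + u ^ 2 - (a + d) * t * u - 4 ≠ 0) :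
    (Finset.univ.filter fun x : K × K => -c * x.2 ^ 2 + (d - a) * x.1 * x.2 + b * x.1 ^ 2 + c * t * x.2 + (a * t - u) * x.1 - c = 0).card
      ≤ Fintype.card K + 2 := by
  set S := Finset.univ.filter fun x : K × K => -c * x.2 ^ 2 + (d - a) * x.1 * x.2 + b * x.1 ^ 2 + c * t * x.2 + (a * t - u) * x.1 - c = 0 with hS
  rcases S.eq_empty_or_nonempty with h0 | ⟨⟨g, δ⟩, h0⟩
  · simp [h0]
  have hP := h0
  simp only [hS, Finset.mem_filter, Finset.mem_univ, true_and] at hP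
  rw [← Finset.card_erase_add_one h0]
  have : (S.erase (g, δ)).card ≤ (Finset.univ : Finset (Option K)).card := by
    refine Finset.card_le_card_of_injOn (fun x => if x.1 = g then none else some ((x.2 - δ) / (x.1 - g))) (by simp) ?_
    rintro ⟨x, y⟩ hx ⟨x', y'⟩ hx' he
    simp only [hS, Finset.coe_erase, Finset.coe_filter, Finset.mem_univ, true_and, Set.mem_sdiff, Set.mem_ofPred_eq,
      Set.mem_singleton_iff, Prod.mk.injEq] at hx hx' he ⊢
    obtain ⟨h1, h2⟩ := hx
    obtain ⟨h1', h2'⟩ := hx'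
    by_cases hxg : x = g
    · by_cases hxg' : x' = g
      · subst hxg hxg'
        refine ⟨rfl, ?_⟩
        have n1 : y - δ ≠ 0 := sub_ne_zero.2 fun h => h2 ⟨rfl, h⟩
        have n2 : y' - δ ≠ 0 := sub_ne_zero.2 fun h => h2' ⟨rfl, h⟩
        have e1 : -c * (y + δ) + ((d - a) * x' + c * t) = 0 := by
          apply mul_left_cancel₀ n1; linear_combination h1 - hP
        have e2 : -c * (y' + δ) + ((d - a) * x' + c * t) = 0 := by
          apply mul_left_cancel₀ n2; linear_combination h1' - hP
        apply mul_left_cancel₀ hc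
        linear_combination e2 - e1
      · simp [hxg, hxg'] at he
    · by_cases hxg' : x' = g
      · simp [hxg, hxg'] at he
      · simp only [hxg, hxg', if_false, Option.some.injEq] at he
        have n1 : x - g ≠ 0 := sub_ne_zero.2 hxg
        have n2 : x' - g ≠ 0 := sub_ne_zero.2 hxg'
        set m := (x - g)⁻¹ * (y - δ) with hm
        have hy : y = δ + m * (x - g) := by rw [hm]; field_simp; ring
        have hy' : y' = δ + m * (x' - g) := by
          have : m = (y' - δ) / (x' - g) := by rw [← he, hm]; ring
          rw [this]; field_simp; ring
        have e1 : (-c * m ^ 2 + (d - a) * m + b) * (x - g) +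
            (((d - a) * δ + 2 * b * g + (a * t - u)) + m * (-2 * c * δ + (d - a) * g + c * t)) = 0 := by
          apply mul_left_cancel₀ n1
          rw [hy] at h1
          linear_combination h1 - hP
        have e2 : (-c * m ^ 2 + (d - a) * m + b) * (x' - g) +
            (((d - a) * δ + 2 * b * g + (a * t - u)) + m * (-2 * c * δ + (d - a) * g + c * t)) = 0 := by
          apply mul_left_cancel₀ n2
          rw [hy'] at h1'
          linear_combination h1' - hP
        have e3 : (-c * m ^ 2 + (d - a) * m + b) ≠ 0 := by
          intro hq
          refine hE (conic_degenerate a b c d t u m g δ hc h hP hq ?_)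
          rw [hq] at e1
          linear_combination e1
        have : x = x' := by
          apply mul_left_cancel₀ e3
          linear_combination e1 - e2
        exact ⟨this, by rw [hy, hy', this]⟩
  rw [Finset.card_univ, Fintype.card_option] at this
  omega

open Classical in
lemma y_card {K : Type} [Field K] [Fintype K] [Fintype (SL2 K)] (x : SL2 K) (hx : x.1 1 0 ≠ 0) (t u : K) :
    (Finset.univ.filter fun y : SL2 K => trace y.1 = t ∧ trace (x.1 * y.1) = u).card ≤ 2 * Fintype.card K ∧
    ((trace x.1) ^ 2 + t ^ 2 + u ^ 2 - (trace x.1) * t * u - 4 ≠ 0 →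
      (Finset.univ.filter fun y : SL2 K => trace y.1 = t ∧ trace (x.1 * y.1) = u).card ≤ Fintype.card K + 2) := by
  obtain ⟨a, b, c, d, h, hx'⟩ := sl2_eq x
  rw [hx'] at hx ⊢
  have hc : c ≠ 0 := by simpa using hx
  have key : (Finset.univ.filter fun y : SL2 K => trace y.1 = t ∧ trace (!![a, b; c, d] * y.1) = u).card ≤
      (Finset.univ.filter fun x : K × K => -c * x.2 ^ 2 + (d - a) * x.1 * x.2 + b * x.1 ^ 2 + c * t * x.2 + (a * t - u) * x.1 - c = 0).card := by
    refine Finset.card_le_card_of_injOn (fun y => (y.1 1 0, y.1 1 1)) ?_ ?_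
    · intro y hy
      obtain ⟨α, β, γ, δ, h2, hy'⟩ := sl2_eq y
      simp only [Finset.coe_filter, Finset.mem_univ, true_and, Set.mem_ofPred_eq] at hy ⊢
      rw [hy'] at hy ⊢
      simp [Matrix.trace_fin_two] at hy ⊢
      obtain ⟨rfl, rfl⟩ := hy
      linear_combination c * h2
    · intro y hy z hz he
      obtain ⟨α, β, γ, δ, h2, hy'⟩ := sl2_eq y
      obtain ⟨α', β', γ', δ', h2', hz'⟩ := sl2_eq z
      simp only [Finset.coe_filter, Finset.mem_univ, true_and, Set.mem_ofPred_eq] at hy hz he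
      apply Subtype.ext
      rw [hy'] at hy he ⊢
      rw [hz'] at hz he ⊢
      simp [Matrix.trace_fin_two] at hy hz he
      obtain ⟨rfl, rfl⟩ := he
      have e1 : α = α' := by linear_combination hy.1 - hz.1
      subst e1
      have e2 : β = β' := by apply mul_left_cancel₀ hc; linear_combination hy.2 - hz.2
      subst e2
      rfl
  refine ⟨key.trans (conic_card1 a b c d t u hc), fun hE => key.trans (conic_card2 a b c d t u hc h ?_)⟩
  simpa [Matrix.trace_fin_two] using hE

end P5b

section P5c
set_option maxSynthPendingDepth 8
set_option linter.unusedSimpArgs false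

open Classical in
lemma card_c0 {K : Type} [Field K] [Fintype K] [Fintype (SL2 K)] :
    (Finset.univ.filter fun x : SL2 K => x.1 1 0 = 0).card ≤ Fintype.card K ^ 2 := by
  rw [sq, ← Fintype.card_prod, ← Finset.card_univ]
  refine Finset.card_le_card_of_injOn (fun y => (y.1 0 0, y.1 0 1)) (by simp) ?_
  intro y hy z hz he
  obtain ⟨α, β, γ, δ, h2, hy'⟩ := sl2_eq y
  obtain ⟨α', β', γ', δ', h2', hz'⟩ := sl2_eq z
  simp only [Finset.coe_filter, Finset.mem_univ, true_and, Set.mem_ofPred_eq] at hy hz he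
  apply Subtype.ext
  rw [hy'] at hy he ⊢
  rw [hz'] at hz he ⊢
  simp at hy hz he
  obtain ⟨rfl, rfl⟩ := he
  subst hy hz
  have e0 : α ≠ 0 := by rintro rfl; simp at h2
  have e1 : δ = δ' := by apply mul_left_cancel₀ e0; linear_combination h2 - h2'
  rw [e1]

open Classical in
lemma card_c1 {K : Type} [Field K] [Fintype K] [Fintype (SL2 K)] :
    (Finset.univ.filter fun x : SL2 K => x.1 1 0 ≠ 0).card ≤ Fintype.card K ^ 3 := by
  rw [show Fintype.card K ^ 3 = Fintype.card (K × K × K) by simp [Fintype.card_prod]; ring, ← Finset.card_univ]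
  refine Finset.card_le_card_of_injOn (fun y => (y.1 0 0, y.1 1 0, y.1 1 1)) (by simp) ?_
  intro y hy z hz he
  obtain ⟨α, β, γ, δ, h2, hy'⟩ := sl2_eq y
  obtain ⟨α', β', γ', δ', h2', hz'⟩ := sl2_eq z
  simp only [Finset.coe_filter, Finset.mem_univ, true_and, Set.mem_ofPred_eq] at hy hz he
  apply Subtype.ext
  rw [hy'] at hy he ⊢
  rw [hz'] at hz he ⊢
  simp at hy hz he
  obtain ⟨rfl, rfl, rfl⟩ := he
  have e1 : β = β' := by apply mul_left_cancel₀ hy; linear_combination h2' - h2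
  rw [e1]

open Classical in
lemma card_c1s {K : Type} [Field K] [Fintype K] [Fintype (SL2 K)] (s : K) :
    (Finset.univ.filter fun x : SL2 K => x.1 1 0 ≠ 0 ∧ trace x.1 = s).card ≤ Fintype.card K ^ 2 := by
  rw [sq, ← Fintype.card_prod, ← Finset.card_univ]
  refine Finset.card_le_card_of_injOn (fun y => (y.1 0 0, y.1 1 0)) (by simp) ?_
  intro y hy z hz he
  obtain ⟨α, β, γ, δ, h2, hy'⟩ := sl2_eq y
  obtain ⟨α', β', γ', δ', h2', hz'⟩ := sl2_eq z
  simp only [Finset.coe_filter, Finset.mem_univ, true_and, Set.mem_ofPred_eq] at hy hz he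
  apply Subtype.ext
  rw [hy'] at hy he ⊢
  rw [hz'] at hz he ⊢
  simp [Matrix.trace_fin_two] at hy hz he
  obtain ⟨rfl, rfl⟩ := he
  have e0 : δ = δ' := by linear_combination hy.2 - hz.2
  subst e0
  have e1 : β = β' := by apply mul_left_cancel₀ hy.1; linear_combination h2' - h2
  rw [e1]

open Classical in
lemma card_sl2_le {K : Type} [Field K] [Fintype K] [Fintype (SL2 K)] :
    Fintype.card (SL2 K) ≤ 2 * Fintype.card K ^ 3 := by
  have h := Finset.card_filter_add_card_filter_not (s := (Finset.univ : Finset (SL2 K))) (fun x => x.1 1 0 = 0)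
  rw [Finset.card_univ] at h
  have h1 := card_c0 (K := K)
  have h2 := card_c1 (K := K)
  have h3 : Fintype.card K ^ 2 ≤ Fintype.card K ^ 3 := Nat.pow_le_pow_right Fintype.card_pos (by norm_num)
  simp only [ne_eq] at h2
  omega

open Classical in
lemma card_tr_ge {K : Type} [Field K] [Fintype K] [Fintype (SL2 K)] (c : K) :
    Fintype.card K * (Fintype.card K - 1) ≤
    (Finset.univ.filter fun z : SL2 K => z ∉ (Finset.univ.filter fun z : SL2 K => z.1 0 1 = 0 ∧ z.1 1 0 = 0 ∧ z.1 0 0 = z.1 1 1)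
       ∧ trace z.1 = c).card := by
  rw [← Fintype.card_units, ← Fintype.card_prod, ← Finset.card_univ]
  refine Finset.card_le_card_of_injOn (fun x : K × Kˣ =>
    (⟨!![x.1, (x.1 * (c - x.1) - 1) * (x.2 : K)⁻¹; (x.2 : K), c - x.1], by
      rw [Matrix.det_fin_two]; simp⟩ : SL2 K)) ?_ ?_
  · intro x _
    refine Finset.mem_coe.2 (Finset.mem_filter.2 ⟨Finset.mem_univ _, fun h => ?_, ?_⟩)
    · have h1 : (x.2 : K) = 0 := (Finset.mem_filter.1 h).2.2.1
      exact x.2.ne_zero h1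
    · change trace !![x.1, (x.1 * (c - x.1) - 1) * (x.2 : K)⁻¹; (x.2 : K), c - x.1] = c
      simp [Matrix.trace_fin_two]
  · rintro ⟨x, y⟩ _ ⟨x', y'⟩ _ he
    have he' := congrArg Subtype.val he
    have h1 := congrFun (congrFun he' 0) 0
    have h2 := congrFun (congrFun he' 1) 0
    simp at h1 h2
    rw [h1, Units.ext h2]

open Classical in
lemma card_sc {K : Type} [Field K] [Fintype K] [Fintype (SL2 K)] :
    (Finset.univ.filter fun z : SL2 K => z.1 0 1 = 0 ∧ z.1 1 0 = 0 ∧ z.1 0 0 = z.1 1 1).card ≤ 2 := by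
  have : (Finset.univ.filter fun z : SL2 K => z.1 0 1 = 0 ∧ z.1 1 0 = 0 ∧ z.1 0 0 = z.1 1 1).card ≤
      ({1, -1} : Finset K).card := by
    refine Finset.card_le_card_of_injOn (fun y => y.1 0 0) ?_ ?_
    · intro y hy
      obtain ⟨α, β, γ, δ, h2, hy'⟩ := sl2_eq y
      simp only [Finset.coe_filter, Finset.mem_univ, true_and, Set.mem_ofPred_eq] at hy
      rw [hy'] at hy
      simp at hy
      obtain ⟨rfl, rfl, rfl⟩ := hy
      simp [hy']
      rw [← sq_eq_one_iff]; linear_combination h2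
    · intro y hy z hz he
      obtain ⟨α, β, γ, δ, h2, hy'⟩ := sl2_eq y
      obtain ⟨α', β', γ', δ', h2', hz'⟩ := sl2_eq z
      simp only [Finset.coe_filter, Finset.mem_univ, true_and, Set.mem_ofPred_eq] at hy hz he
      apply Subtype.ext
      rw [hy'] at hy he ⊢
      rw [hz'] at hz he ⊢
      simp at hy hz he
      obtain ⟨rfl, rfl, rfl⟩ := hy
      obtain ⟨rfl, rfl, rfl⟩ := hz
      rw [he]
  exact this.trans Finset.card_le_two

open Classical in
lemma card_sl2_ge {K : Type} [Field K] [Fintype K] [Fintype (SL2 K)] :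
    Fintype.card K * (Fintype.card K * (Fintype.card K - 1)) ≤ Fintype.card (SL2 K) := by
  rw [← Finset.card_univ (α := SL2 K), Finset.card_eq_sum_card_fiberwise (f := fun z : SL2 K => trace z.1)
    (t := (Finset.univ : Finset K)) (by simp)]
  rw [← Finset.card_univ (α := K), ← smul_eq_mul]
  refine Finset.card_nsmul_le_sum _ _ _ fun c _ => ?_
  refine (card_tr_ge c).trans (Finset.card_le_card fun z hz => ?_)
  simp only [Finset.mem_filter, Finset.mem_univ, true_and] at hz ⊢
  exact hz.2

open Classical in
lemma zero_step {A K T : Type} [CommRing A] [Field K] [Fintype K] [Fintype T] (ev : T → (A →+* K)) (G : A[X]) :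
    (Finset.univ.filter fun x : T × K => G.eval₂ (ev x.1) x.2 = 0).card ≤
      (Finset.univ.filter fun τ : T => ev τ G.leadingCoeff = 0).card * Fintype.card K + Fintype.card T * G.natDegree := by
  set Z := Finset.univ.filter fun τ : T => ev τ G.leadingCoeff = 0 with hZ
  have hsub : (Finset.univ.filter fun x : T × K => G.eval₂ (ev x.1) x.2 = 0) ⊆
      (Z ×ˢ Finset.univ) ∪ (Finset.univ.filter fun x : T × K => ev x.1 G.leadingCoeff ≠ 0 ∧ G.eval₂ (ev x.1) x.2 = 0) := by
    intro x hx
    simp only [hZ, Finset.mem_union, Finset.mem_product, Finset.mem_filter, Finset.mem_univ, true_and, and_true] at hx ⊢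
    tauto
  refine (Finset.card_le_card hsub).trans ((Finset.card_union_le _ _).trans (add_le_add ?_ ?_))
  · rw [Finset.card_product, Finset.card_univ]
  · rw [mul_comm, ← Finset.card_univ (α := T)]
    refine Finset.card_le_mul_card_image_of_maps_to (f := Prod.fst) (by simp) _ fun τ _ => ?_
    by_cases h0 : ev τ G.leadingCoeff = 0
    · rw [Finset.card_eq_zero.2]
      · exact Nat.zero_le _
      · ext ⟨x, y⟩
        simp only [Finset.mem_filter, Finset.mem_univ, true_and]
        constructor
        · rintro ⟨⟨h1, -⟩, rfl⟩; exact absurd h0 h1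
        · intro h; simp at h
    · have hP0 : G.map (ev τ) ≠ 0 := by
        intro h
        have := congrArg (fun P : K[X] => P.coeff G.natDegree) h
        simp only [coeff_map, coeff_zero] at this
        exact h0 this
      refine le_trans ?_ ((Multiset.toFinset_card_le _).trans ((card_roots' (G.map (ev τ))).trans natDegree_map_le))
      refine Finset.card_le_card_of_injOn Prod.snd ?_ ?_
      · rintro ⟨x, y⟩ hx
        simp only [Finset.coe_filter, Finset.mem_filter, Finset.mem_univ, true_and, Set.mem_ofPred_eq] at hx
        obtain ⟨h1, rfl⟩ := hx
        simp only [Finset.mem_coe, Multiset.mem_toFinset]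
        rw [mem_roots hP0, IsRoot.def, eval_map]
        exact h1.2
      · rintro ⟨x, y⟩ hx ⟨x', y'⟩ hx' he
        simp only [Finset.coe_filter, Finset.mem_filter, Finset.mem_univ, true_and, Set.mem_ofPred_eq] at hx hx'
        rw [Prod.mk.injEq]
        exact ⟨hx.2.trans hx'.2.symm, he⟩

open Classical in
lemma zero_count {p : ℕ} [Fact p.Prime] (Q : (ZMod p)[X][X][X]) (hQ : Q ≠ 0) (K : Type) [Field K] [Fintype K] [Algebra (ZMod p) K] :
    (Finset.univ.filter fun x : (K × K) × K => ev3 x.1.1 x.1.2 x.2 Q = 0).card ≤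
      (Q.natDegree + Q.leadingCoeff.natDegree + Q.leadingCoeff.leadingCoeff.natDegree) * Fintype.card K ^ 2 := by
  have h1 := zero_step (fun x : K × K => ev2 (p := p) x.1 x.2) Q
  have h2 := zero_step (fun x : K => eval₂RingHom (algebraMap (ZMod p) K) x) Q.leadingCoeff
  have h3 := zero_step (fun _ : Unit => algebraMap (ZMod p) K) Q.leadingCoeff.leadingCoeff
  have e1 : (Finset.univ.filter fun _ : Unit => algebraMap (ZMod p) K Q.leadingCoeff.leadingCoeff.leadingCoeff = 0).card = 0 := by
    rw [Finset.card_eq_zero, Finset.filter_eq_empty_iff]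
    intro x _ h
    have := (algebraMap (ZMod p) K).injective (h.trans (map_zero _).symm)
    simp at this; exact hQ this
  rw [e1] at h3
  have e2 : (Finset.univ.filter fun x : K => eval₂RingHom (algebraMap (ZMod p) K) x Q.leadingCoeff.leadingCoeff = 0).card =
      (Finset.univ.filter fun x : Unit × K => Q.leadingCoeff.leadingCoeff.eval₂ (algebraMap (ZMod p) K) x.2 = 0).card := by
    refine Finset.card_bij (fun x _ => ((), x)) ?_ ?_ ?_
    · intro x hx
      rw [Finset.mem_filter] at hx ⊢
      exact ⟨Finset.mem_univ _, hx.2⟩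
    · intro x _ y _ h; simpa using h
    · rintro ⟨_, x⟩ hx; exact ⟨x, by rw [Finset.mem_filter] at hx ⊢; exact ⟨Finset.mem_univ _, hx.2⟩, rfl⟩
  rw [← e2] at h3
  have h2' : (Finset.univ.filter fun x : K × K => ev2 (p := p) x.1 x.2 Q.leadingCoeff = 0).card ≤ _ := h2
  have h1' : (Finset.univ.filter fun x : (K × K) × K => ev3 x.1.1 x.1.2 x.2 Q = 0).card ≤ _ := h1
  simp only [Fintype.card_prod, Fintype.card_unit, zero_mul, zero_add, one_mul] at h1' h2' h3
  refine h1'.trans ?_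
  have := Nat.mul_le_mul_right (Fintype.card K) (h2'.trans (Nat.add_le_add_right (Nat.mul_le_mul_right (Fintype.card K) h3) _))
  refine (Nat.add_le_add_right this _).trans (le_of_eq ?_)
  ring

end P5c

section P5d
set_option maxSynthPendingDepth 8
set_option linter.unusedSimpArgs false

lemma exists_bad {p : ℕ} [Fact p.Prime] (f : (ZMod p)[X][X][X]) (hf : 1 ≤ f.natDegree) (D : (ZMod p)[X][X]) (hD : D ≠ 0) :
    ∃ Q : (ZMod p)[X][X][X], Q ≠ 0 ∧ ∀ (K : Type) [Field K] [Algebra (ZMod p) K] (s t u : K), ev3 s t u Q ≠ 0 →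
      s ^ 2 + t ^ 2 + u ^ 2 - s * t * u - 4 ≠ 0 ∧ ev2 s t f.leadingCoeff ≠ 0 ∧ ev2 s (ev3 s t u f) D ≠ 0 := by
  set E : (ZMod p)[X][X][X] := C (1 : (ZMod p)[X][X]) * X ^ 2 + C (-(C X * X) : (ZMod p)[X][X]) * X + C (C X ^ 2 + X ^ 2 - 4 : (ZMod p)[X][X]) with hE
  have hE0 : E ≠ 0 := by
    intro h
    have h2 : E.natDegree = 2 := natDegree_quadratic one_ne_zero
    rw [h] at h2; simp at h2
  refine ⟨E * C f.leadingCoeff * (D.map C).comp f, ?_, ?_⟩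
  · refine mul_ne_zero (mul_ne_zero hE0 ?_) ?_
    · rw [Ne, C_eq_zero, leadingCoeff_eq_zero]
      rintro rfl; simp at hf
    · intro h
      rw [comp_eq_zero_iff] at h
      rcases h with h | h
      · exact hD ((Polynomial.map_eq_zero_iff C_injective).1 h)
      · rw [h.2] at hf; simp at hf
  · intro K _ _ s t u h
    rw [_root_.map_mul, _root_.map_mul] at h
    refine ⟨?_, ?_, ?_⟩
    · intro h0; apply h
      have : ev3 s t u E = s ^ 2 + t ^ 2 + u ^ 2 - s * t * u - 4 := by
        rw [hE]
        simp only [map_add, _root_.map_mul, map_neg, _root_.map_sub, map_pow, ev3_X, ev3_CX, ev3_CCX, map_one, map_ofNat]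
        ring
      rw [this, h0]; simp
    · intro h0; apply h
      rw [ev3_eq s t u (C f.leadingCoeff), eval₂_C, h0]; simp
    · intro h0; apply h
      have : ev3 s t u ((D.map C).comp f) = ev2 s (ev3 s t u f) D := by
        rw [ev3_eq, ev3_eq, eval₂_comp, eval₂_map]
        simp only [ev2, coe_eval₂RingHom]
        congr 1
        ext x <;> simp
      rw [this, h0]; simp

open Classical in
lemma count_bad {p : ℕ} [Fact p.Prime] (Q : (ZMod p)[X][X][X]) (K : Type) [Field K] [Fintype K] [Algebra (ZMod p) K]
    [Fintype (SL2 K)] (C0 : ℕ)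
    (hC : (Finset.univ.filter fun x : (K × K) × K => ev3 x.1.1 x.1.2 x.2 Q = 0).card ≤ C0 * Fintype.card K ^ 2) :
    (Finset.univ.filter fun x : SL2 K × SL2 K => x.1.1 1 0 = 0 ∨
      ev3 (trace x.1.1) (trace x.2.1) (trace (x.1.1 * x.2.1)) Q = 0).card ≤ (2 + 2 * C0) * Fintype.card K ^ 5 := by
  set q := Fintype.card K with hq
  have hsub : (Finset.univ.filter fun x : SL2 K × SL2 K => x.1.1 1 0 = 0 ∨
      ev3 (trace x.1.1) (trace x.2.1) (trace (x.1.1 * x.2.1)) Q = 0) ⊆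
      ((Finset.univ.filter fun x : SL2 K => x.1 1 0 = 0) ×ˢ Finset.univ) ∪
      (Finset.univ.filter fun x : SL2 K × SL2 K => x.1.1 1 0 ≠ 0 ∧
        ev3 (trace x.1.1) (trace x.2.1) (trace (x.1.1 * x.2.1)) Q = 0) := by
    intro x hx
    simp only [Finset.mem_union, Finset.mem_product, Finset.mem_filter, Finset.mem_univ, true_and, and_true] at hx ⊢
    tauto
  have h1 : ((Finset.univ.filter fun x : SL2 K => x.1 1 0 = 0) ×ˢ (Finset.univ : Finset (SL2 K))).card ≤ q ^ 2 * (2 * q ^ 3) := by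
    rw [Finset.card_product, Finset.card_univ]
    exact Nat.mul_le_mul card_c0 card_sl2_le
  have h2 : (Finset.univ.filter fun x : SL2 K × SL2 K => x.1.1 1 0 ≠ 0 ∧
        ev3 (trace x.1.1) (trace x.2.1) (trace (x.1.1 * x.2.1)) Q = 0).card ≤ (2 * q * q ^ 2) * (C0 * q ^ 2) := by
    refine le_trans ?_ (Nat.mul_le_mul_left _ hC)
    refine Finset.card_le_mul_card_image_of_maps_to
      (f := fun x : SL2 K × SL2 K => (((trace x.1.1, trace x.2.1), trace (x.1.1 * x.2.1)) : (K × K) × K)) ?_ _ ?_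
    · intro x hx
      rw [Finset.mem_filter] at hx ⊢
      exact ⟨Finset.mem_univ _, hx.2.2⟩
    · rintro ⟨⟨s, t⟩, u⟩ -
      refine le_trans ?_ (Nat.mul_le_mul_left _ (card_c1s s))
      refine Finset.card_le_mul_card_image_of_maps_to (f := Prod.fst) ?_ _ ?_
      · intro x hx
        rw [Finset.mem_filter, Finset.mem_filter, Prod.mk.injEq, Prod.mk.injEq] at hx
        rw [Finset.mem_filter]
        exact ⟨Finset.mem_univ _, hx.1.2.1, hx.2.1.1⟩
      · intro x hx
        rw [Finset.mem_filter] at hx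
        refine le_trans ?_ (y_card x hx.2.1 t u).1
        refine Finset.card_le_card_of_injOn Prod.snd ?_ ?_
        · rintro ⟨x', y⟩ hy
          rw [Finset.mem_coe, Finset.mem_filter, Finset.mem_filter, Finset.mem_filter, Prod.mk.injEq, Prod.mk.injEq] at hy
          obtain ⟨⟨_, h⟩, rfl⟩ := hy
          exact Finset.mem_coe.2 (Finset.mem_filter.2 ⟨Finset.mem_univ _, h.1.2, h.2⟩)
        · rintro ⟨x', y⟩ hy ⟨x'', y'⟩ hy' he
          rw [Finset.mem_coe, Finset.mem_filter] at hy hy'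
          rw [Prod.mk.injEq]
          exact ⟨hy.2.trans hy'.2.symm, he⟩
  refine (Finset.card_le_card hsub).trans ((Finset.card_union_le _ _).trans ((add_le_add h1 h2).trans (le_of_eq ?_)))
  ring

open Classical in
lemma count_good {p : ℕ} [Fact p.Prime] (f Q : (ZMod p)[X][X][X]) (D : (ZMod p)[X][X]) (K : Type) [Field K] [Fintype K] [Algebra (ZMod p) K]
    [Fintype (SL2 K)] (w : FreeGroup (Fin 2))
    (hw : ∀ x y : SL2 K, trace (wordEval w x y).1 = ev3 (trace x.1) (trace y.1) (trace (x.1 * y.1)) f)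
    (hQ : ∀ (s t u : K), ev3 s t u Q ≠ 0 →
      s ^ 2 + t ^ 2 + u ^ 2 - s * t * u - 4 ≠ 0 ∧ ev2 s t f.leadingCoeff ≠ 0 ∧ ev2 s (ev3 s t u f) D ≠ 0) (R : ℕ)
    (hR : ∀ s c : K, ev2 s c D ≠ 0 →
      ∀ S : Finset (K × K), (∀ x ∈ S, ev2 s x.1 f.leadingCoeff ≠ 0 ∧ ev3 s x.1 x.2 f = c) → S.card ≤ R) (c : K) :
    (Finset.univ.filter fun x : SL2 K × SL2 K => x ∉ (Finset.univ.filter fun x : SL2 K × SL2 K => x.1.1 1 0 = 0 ∨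
      ev3 (trace x.1.1) (trace x.2.1) (trace (x.1.1 * x.2.1)) Q = 0) ∧ trace (wordMap w K x).1 = c).card ≤
      ((Fintype.card K + 2) * R) * Fintype.card K ^ 3 := by
  refine le_trans ?_ (Nat.mul_le_mul_left _ card_c1)
  refine Finset.card_le_mul_card_image_of_maps_to (f := Prod.fst) ?_ _ ?_
  · intro x hx
    rw [Finset.mem_filter, Finset.mem_filter] at hx
    rw [Finset.mem_filter]
    exact ⟨Finset.mem_univ _, fun h => hx.2.1 ⟨Finset.mem_univ _, Or.inl h⟩⟩
  · intro x hx
    rw [Finset.mem_filter] at hx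
    set U : Finset (SL2 K × SL2 K) := Finset.filter (fun a => a.1 = x) (Finset.univ.filter fun x : SL2 K × SL2 K => x ∉ (Finset.univ.filter fun x : SL2 K × SL2 K => x.1.1 1 0 = 0 ∨
      ev3 (trace x.1.1) (trace x.2.1) (trace (x.1.1 * x.2.1)) Q = 0) ∧ trace (wordMap w K x).1 = c) with hU
    have hmem : ∀ z ∈ U, z.1 = x ∧ ev3 (trace x.1) (trace z.2.1) (trace (x.1 * z.2.1)) Q ≠ 0 ∧
        ev3 (trace x.1) (trace z.2.1) (trace (x.1 * z.2.1)) f = c := by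
      rintro ⟨x', y⟩ hz
      rw [hU, Finset.mem_filter, Finset.mem_filter, Finset.mem_filter] at hz
      obtain ⟨⟨_, h1, h2⟩, h3⟩ := hz
      change x' = x at h3
      subst h3
      exact ⟨rfl, fun h => h1 ⟨Finset.mem_univ _, Or.inr h⟩, (hw x' y).symm.trans h2⟩
    rcases U.eq_empty_or_nonempty with h0 | ⟨z0, h0⟩
    · rw [h0]; simp
    have hD : ev2 (trace x.1) c D ≠ 0 := by
      obtain ⟨_, h1, h2⟩ := hmem z0 h0
      rw [← h2]; exact (hQ _ _ _ h1).2.2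
    have hS := hR (trace x.1) c hD (U.image fun z => (trace z.2.1, trace (x.1 * z.2.1))) (by
      intro y hy
      rw [Finset.mem_image] at hy
      obtain ⟨z, hz, rfl⟩ := hy
      obtain ⟨_, h1, h2⟩ := hmem z hz
      exact ⟨(hQ _ _ _ h1).2.1, h2⟩)
    refine le_trans ?_ (Nat.mul_le_mul_left _ hS)
    refine Finset.card_le_mul_card_image U _ ?_
    intro v hv
    rw [Finset.mem_image] at hv
    obtain ⟨z, hz, rfl⟩ := hv
    obtain ⟨_, h1, h2⟩ := hmem z hz
    refine le_trans ?_ ((y_card x hx.2 (trace z.2.1) (trace (x.1 * z.2.1))).2 (hQ _ _ _ h1).1)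
    refine Finset.card_le_card_of_injOn Prod.snd ?_ ?_
    · intro y hy
      rw [Finset.mem_coe, Finset.mem_filter, Prod.mk.injEq] at hy
      exact Finset.mem_coe.2 (Finset.mem_filter.2 ⟨Finset.mem_univ _, hy.2⟩)
    · rintro ⟨x', y⟩ hy ⟨x'', y'⟩ hy' he
      rw [Finset.mem_coe, Finset.mem_filter] at hy hy'
      rw [Prod.mk.injEq]
      exact ⟨(hmem _ hy.1).1.trans (hmem _ hy'.1).1.symm, he⟩

end P5d

section P7
set_option maxSynthPendingDepth 8
set_option linter.unusedSimpArgs false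

lemma num1 (q Pb M g : ℝ) (hq : 2 ≤ q) (hPb : 1 ≤ Pb) (hM : 0 ≤ M) (hg : q * (q * (q - 1)) ≤ g) :
    (q + 2) * (q + M * Pb) * q ^ 3 ≤ q * (q - 1) * g + (4 + 3 * M) * Pb * q ^ 4 := by
  have h1 : q * (q - 1) * (q * (q * (q - 1))) ≤ q * (q - 1) * g :=
    mul_le_mul_of_nonneg_left hg (by nlinarith)
  have h3 : (q + 2) * (q + M * Pb) ≤ (q - 1) ^ 2 + (4 + 3 * M) * Pb * q := by
    have h4 : q ≤ Pb * q := le_mul_of_one_le_left (by linarith) hPb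
    have h5 : M * Pb ≤ M * Pb * q := le_mul_of_one_le_right (by positivity) (by linarith)
    linarith [(by ring : (q + 2) * (q + M * Pb) = q ^ 2 + 2 * q + M * Pb * q + 2 * (M * Pb)),
      (by ring : (q - 1) ^ 2 + (4 + 3 * M) * Pb * q = q ^ 2 - 2 * q + 1 + 4 * (Pb * q) + 3 * (M * Pb * q))]
  have := mul_le_mul_of_nonneg_right h3 (by positivity : 0 ≤ q ^ 3)
  linarith [(by ring : ((q - 1) ^ 2 + (4 + 3 * M) * Pb * q) * q ^ 3 =
    q * (q - 1) * (q * (q * (q - 1))) + (4 + 3 * M) * Pb * q ^ 4)]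

lemma num2 (q Pa Pb M C0 g H Bd Sc ε : ℝ) (hq2R : 2 ≤ q) (hPb1 : 1 ≤ Pb) (hPbq : Pb ≤ q) (hqR : q = Pa * Pb)
    (hM0 : 0 ≤ M) (hC00 : 0 ≤ C0) (hH0 : 0 ≤ H)
    (hggeR : q * (q * (q - 1)) ≤ g) (hHR : H = ((q + 2) * (q + M * Pb)) * q ^ 3) (hscR : Sc ≤ 2) (hBd0 : 0 ≤ Bd)
    (hBdR : Bd ≤ (2 + 2 * C0) * q ^ 5) (hε2 : 8 * (16 + 9 * M + 6 * C0) < ε ^ 2 * Pa) :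
    2 * (Sc * (H + Bd) + q * ((4 + 3 * M) * Pb * q ^ 4) + Bd) < ε ^ 2 * g * g := by
  have hq5 : (0 : ℝ) < q ^ 5 := by positivity
  have hHq : H ≤ 3 * (1 + M) * q ^ 5 := by
    rw [hHR]
    have h3 : (q + 2) * (q + M * Pb) ≤ (3 * q) * ((1 + M) * q) := by
      apply mul_le_mul
      · linarith
      · nlinarith
      · positivity
      · positivity
    have := mul_le_mul_of_nonneg_right h3 (by positivity : (0 : ℝ) ≤ q ^ 3)
    nlinarith
  have hPq : q ^ 5 ≤ Pb * q ^ 5 := le_mul_of_one_le_left hq5.le hPb1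
  have t1 : Sc * (H + Bd) ≤ 2 * (H + Bd) := mul_le_mul_of_nonneg_right hscR (by positivity)
  have t2 : 2 * (Sc * (H + Bd) + q * ((4 + 3 * M) * Pb * q ^ 4) + Bd) ≤
      2 * ((6 * (1 + M) + 3 * (2 + 2 * C0)) * q ^ 5 + (4 + 3 * M) * (Pb * q ^ 5)) := by
    linarith
  have t3 : 2 * ((6 * (1 + M) + 3 * (2 + 2 * C0)) * q ^ 5 + (4 + 3 * M) * (Pb * q ^ 5)) ≤
      2 * (16 + 9 * M + 6 * C0) * (Pb * q ^ 5) := by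
    have := mul_le_mul_of_nonneg_left hPq (by positivity : (0 : ℝ) ≤ 6 * (1 + M) + 3 * (2 + 2 * C0))
    linarith
  refine (t2.trans t3).trans_lt ?_
  have g1 : q ^ 3 / 2 ≤ g := by
    refine le_trans ?_ hggeR
    nlinarith [sq_nonneg q, mul_nonneg (sq_nonneg q) (sub_nonneg.2 hq2R)]
  have g2 : q ^ 6 / 4 ≤ g * g := by
    have := mul_self_le_mul_self (by positivity) g1
    linarith [this, (by ring : q ^ 3 / 2 * (q ^ 3 / 2) = q ^ 6 / 4)]
  calc 2 * (16 + 9 * M + 6 * C0) * (Pb * q ^ 5) = (8 * (16 + 9 * M + 6 * C0)) * (Pb * q ^ 5 / 4) := by ring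
    _ < (ε ^ 2 * Pa) * (Pb * q ^ 5 / 4) := mul_lt_mul_of_pos_right hε2 (by positivity)
    _ = ε ^ 2 * (q ^ 6 / 4) := by rw [show q ^ 6 = q * q ^ 5 by ring]; nth_rw 2 [hqR]; ring
    _ ≤ ε ^ 2 * (g * g) := mul_le_mul_of_nonneg_left g2 (by positivity)
    _ = _ := by ring

lemma equi_K {p : ℕ} [Fact p.Prime] (f Q : (ZMod p)[X][X][X]) (D : (ZMod p)[X][X]) (K : Type) [Field K] [Fintype K] [Algebra (ZMod p) K]
    (w : FreeGroup (Fin 2))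
    (hw : ∀ x y : SL2 K, trace (wordEval w x y).1 = ev3 (trace x.1) (trace y.1) (trace (x.1 * y.1)) f)
    (hQ0 : Q ≠ 0)
    (hQ : ∀ (s t u : K), ev3 s t u Q ≠ 0 →
      s ^ 2 + t ^ 2 + u ^ 2 - s * t * u - 4 ≠ 0 ∧ ev2 s t f.leadingCoeff ≠ 0 ∧ ev2 s (ev3 s t u f) D ≠ 0) (M a b : ℕ)
    (hcard : Fintype.card K = p ^ (a + b))
    (hR : ∀ s c : K, ev2 s c D ≠ 0 →
      ∀ S : Finset (K × K), (∀ x ∈ S, ev2 s x.1 f.leadingCoeff ≠ 0 ∧ ev3 s x.1 x.2 f = c) → S.card ≤ p ^ (a + b) + M * p ^ b)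
    (C0 : ℕ) (hC0 : C0 = Q.natDegree + Q.leadingCoeff.natDegree + Q.leadingCoeff.leadingCoeff.natDegree)
    (ε : ℝ) (hε : 0 < ε) (hε2 : 8 * (16 + 9 * M + 6 * C0) < ε ^ 2 * p ^ a) :
    IsEquidistributed (wordMap w K) ε := by
  classical
  have : Fintype (SL2 K) := Fintype.ofFinite _
  set q := Fintype.card K with hq
  set g := Fintype.card (SL2 K) with hg
  have hA : Fintype.card (SL2 K × SL2 K) = g * Fintype.card (SL2 K) := Fintype.card_prod _ _
  have hq2 : 2 ≤ q := Fintype.one_lt_card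
  have hgle : g ≤ 2 * q ^ 3 := card_sl2_le
  have hgge : q * (q * (q - 1)) ≤ g := card_sl2_ge
  have hg0 : 0 < g := Fintype.card_pos
  have hZ := zero_count Q hQ0 K
  rw [← hC0] at hZ
  have hBd := count_bad Q K C0 hZ
  set Bd := (Finset.univ.filter fun x : SL2 K × SL2 K => x.1.1 1 0 = 0 ∨
      ev3 (trace x.1.1) (trace x.2.1) (trace (x.1.1 * x.2.1)) Q = 0) with hBdd
  have hH := count_good f Q D K w hw hQ (p ^ (a + b) + M * p ^ b) hR
  rw [← hBdd] at hH
  rw [← hcard] at hH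
  have hsc := card_sc (K := K)
  set Sc := (Finset.univ.filter fun z : SL2 K => z.1 0 1 = 0 ∧ z.1 1 0 = 0 ∧ z.1 0 0 = z.1 1 1) with hSc
  have hPb1 : (1 : ℝ) ≤ (p : ℝ) ^ b := one_le_pow₀ (by exact_mod_cast (Fact.out : p.Prime).one_lt.le)
  have hPa1 : (1 : ℝ) ≤ (p : ℝ) ^ a := one_le_pow₀ (by exact_mod_cast (Fact.out : p.Prime).one_lt.le)
  have hqR : (q : ℝ) = (p : ℝ) ^ a * (p : ℝ) ^ b := by rw [hcard, pow_add]; push_cast; ring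
  have hq2R : (2 : ℝ) ≤ q := by exact_mod_cast hq2
  have hggeR : (q : ℝ) * (q * (q - 1)) ≤ g := by
    have : ((q * (q * (q - 1)) : ℕ) : ℝ) ≤ g := by exact_mod_cast hgge
    rwa [Nat.cast_mul, Nat.cast_mul, Nat.cast_sub (by omega), Nat.cast_one] at this
  have hM0 : (0 : ℝ) ≤ M := Nat.cast_nonneg _
  have hC00 : (0 : ℝ) ≤ C0 := Nat.cast_nonneg _
  set Pb : ℝ := (p : ℝ) ^ b with hPb
  set Pa : ℝ := (p : ℝ) ^ a with hPa
  set H : ℕ := ((q + 2) * (q + M * p ^ b)) * q ^ 3 with hHd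
  have hHR : (H : ℝ) = ((q + 2) * (q + M * Pb)) * q ^ 3 := by rw [hHd]; push_cast; rfl
  have hPbq : Pb ≤ q := by rw [hqR]; nlinarith
  have hPb0 : 0 ≤ Pb := by linarith
  have hbound := l1_bound (wordMap w K) (fun z => trace z.1) Sc g H (q * (q - 1)) (by
      intro z z' hz hz' h
      convert fiber_const w z z' ?_ ?_ h
      · intro h; exact hz (Finset.mem_filter.2 ⟨Finset.mem_univ _, h⟩)
      · intro h; exact hz' (Finset.mem_filter.2 ⟨Finset.mem_univ _, h⟩)) Bd hA
      (by intro c; convert hH c) (by intro c; convert card_tr_ge c)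
      ((4 + 3 * M) * Pb * q ^ 4) (by positivity) (by
        rw [hHR, Nat.cast_mul, Nat.cast_sub (by omega), Nat.cast_one]
        exact num1 q Pb M g hq2R hPb1 hM0 hggeR)
  refine equi_of_l1 (wordMap w K) g hg0 Fintype.card_pos hA ε hε (hbound.trans_lt ?_)
  rw [← hq, ← hg]
  have hscR : (Sc.card : ℝ) ≤ 2 := by exact_mod_cast hsc
  have hBdR : (Bd.card : ℝ) ≤ (2 + 2 * C0) * q ^ 5 := by exact_mod_cast hBd
  exact num2 q Pa Pb M C0 g H Bd.card Sc.card ε hq2R hPb1 hPbq hqR hM0 hC00 (Nat.cast_nonneg _) hggeR hHR hscR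
    (Nat.cast_nonneg _) hBdR hε2

lemma equi_list (p : ℕ) (hp : p.Prime) (l : List (ℤ × ℤ)) (hl : ∀ c ∈ l, c.1 ≠ 0 ∧ c.2 ≠ 0) (hl0 : l.length.Prime)
    (hB : (l.map Prod.snd).sum = 0 ∨ l.length = p) : IsPEquidistributed (lword l) p hp := by
  have : Fact p.Prime := ⟨hp⟩
  obtain ⟨f, hf⟩ := exists_tracePoly p l
  have hdeg := tracePoly_natDegree hf hl hl0.one_lt.le
  obtain ⟨D, hD, M, hM⟩ : ∃ D : (ZMod p)[X][X], D ≠ 0 ∧ ∃ M : ℕ, ∀ a b : ℕ, M ≤ p ^ a → M * p ^ a ≤ p ^ b →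
      ∀ (K : Type) [Field K] [Fintype K] [Algebra (ZMod p) K], Fintype.card K = p ^ (a + b) → ∀ s c : K, ev2 s c D ≠ 0 →
      ∀ S : Finset (K × K), (∀ x ∈ S, ev2 s x.1 f.leadingCoeff ≠ 0 ∧ ev3 s x.1 x.2 f = c) → S.card ≤ p ^ (a + b) + M * p ^ b := by
    by_cases hder : derivative (integralNormalization f) = 0
    · refine ⟨1, one_ne_zero, 0, ?_⟩
      intro a b _ _ K _ _ _ hK s c _ S hS
      have := star2 (hdeg ▸ hl0) hder K s c S hS
      omega
    · exact star1 hf hl hl0 hB hder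
  obtain ⟨Q, hQ0, hQ⟩ := exists_bad f (hdeg ▸ hl0.one_lt.le) D hD
  set C0 := Q.natDegree + Q.leadingCoeff.natDegree + Q.leadingCoeff.leadingCoeff.natDegree with hC0
  set C1 : ℝ := 8 * (16 + 9 * M + 6 * C0) + 1 with hC1
  have hC1p : 0 < C1 := by positivity
  have hp1 : (1 : ℝ) < p := by exact_mod_cast hp.one_lt
  have hdiv : Filter.Tendsto (fun n : ℕ => n / 3) Filter.atTop Filter.atTop :=
    Nat.tendsto_div_const_atTop (by norm_num)
  refine ⟨fun m => Real.sqrt (C1 / (p : ℝ) ^ (Nat.log p m / 3)), ?_, ?_⟩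
  · have h1 : Filter.Tendsto (fun n : ℕ => C1 / (p : ℝ) ^ (n / 3)) Filter.atTop (nhds 0) :=
      Filter.Tendsto.const_div_atTop ((tendsto_pow_atTop_atTop_of_one_lt hp1).comp hdiv) C1
    have h2 := (Real.continuous_sqrt.tendsto 0).comp h1
    rw [Real.sqrt_zero] at h2
    refine h2.congr fun n => ?_
    simp [Nat.log_pow hp.one_lt]
  · have hev : ∀ᶠ n : ℕ in Filter.atTop, M ≤ p ^ (n / 3) :=
      ((tendsto_pow_atTop_atTop_of_one_lt hp.one_lt).comp hdiv).eventually_ge_atTop M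
    filter_upwards [hev, Filter.eventually_ge_atTop 1] with n hn hn1
    rw [Nat.log_pow hp.one_lt]
    have : Fintype (GaloisField p n) := Fintype.ofFinite _
    have hcard : Fintype.card (GaloisField p n) = p ^ (n / 3 + (n - n / 3)) := by
      rw [← Nat.card_eq_fintype_card, GaloisField.card p n (by omega)]
      congr 1; omega
    have hb : M * p ^ (n / 3) ≤ p ^ (n - n / 3) := by
      refine (Nat.mul_le_mul_right _ hn).trans ?_
      rw [← pow_add]
      exact Nat.pow_le_pow_right hp.pos (by omega)
    have hpa : (0 : ℝ) < (p : ℝ) ^ (n / 3) := by positivity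
    refine equi_K f Q D (GaloisField p n) (lword l) (fun x y => hf _ x y) hQ0 (hQ _) M (n / 3) (n - n / 3) hcard
      (hM _ _ hn hb (GaloisField p n) hcard) C0 hC0 _ (Real.sqrt_pos.2 (by positivity)) ?_
    rw [Real.sq_sqrt (by positivity), div_mul_cancel₀ _ hpa.ne', hC1]
    linarith

end P7

theorem not_p_equidistributed_prime_complexity {r : ℕ} (hr : r.Prime)
    (a b : Fin r → ℤ) (hab : ∀ i, a i ≠ 0 ∧ b i ≠ 0)
    (p : ℕ) (hp : p.Prime)
    (hne : ¬ IsPEquidistributed (wordOf a b) p hp) :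
    r ≠ p ∧ ((∑ i, a i) ≠ 0 ∨ (∑ i, b i) ≠ 0) := by
  by_contra hcon
  apply hne
  rw [wordOf_eq]
  refine equi_list p hp _ ?_ ?_ ?_
  · intro c hc
    rw [List.mem_ofFn] at hc
    obtain ⟨i, rfl⟩ := hc
    exact hab i
  · simpa using hr
  · rw [List.length_ofFn, List.map_ofFn, List.sum_ofFn]
    by_cases h : r = p
    · exact Or.inr h
    · left
      by_contra h2
      exact hcon ⟨h, Or.inr h2⟩
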